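/- arXiv:2201.02717 — 2 statements merged into one kernel-verified Lean document; each statement's English description precedes it below -/
import Mathlib

section
/- Let 0 → M' → M → M'' → 0 be a short exact sequence of finitely generated ℤ-graded R-modules with degree-preserving maps, and let d be the Krull dimension of M. Then for every complex number y the limits defining F(M',R,I,d)(y), F(M,R,I,d)(y) and F(M'',R,I,d)(y) exist and F(M,R,I,d)(y) = F(M',R,I,d)(y) + F(M'',R,I,d)(y). -/
open Filter Complex

noncomputable section

/-- The Frobenius bracket power `I^{[q]}` of an ideal. -/
def bracketPow {R : Type*} [CommSemiring R] (I : Ideal R) (q : ℕ) : Ideal R :=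
  Ideal.span ((fun x : R => x ^ q) '' (I : Set R))

/-- `λ_k((M/N)_j)`. -/
def quotPieceDim (k : Type*) {R M : Type*} [Field k] [CommRing R] [Algebra k R]
    [AddCommGroup M] [Module R M] [Module k M] [IsScalarTower k R M]
    (ℳ : ℤ → Submodule k M) (N : Submodule R M) (j : ℤ) : ℕ :=
  Module.finrank k ((ℳ j).map (N.mkQ.restrictScalars k))

/-- `F_n(M,R,I,d)(y)`. -/
def FnGen (k : Type*) {R M : Type*} [Field k] [CommRing R] [Algebra k R]
    [AddCommGroup M] [Module R M] [Module k M] [IsScalarTower k R M]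
    (ℳ : ℤ → Submodule k M) (I : Ideal R) (p d n : ℕ) (y : ℂ) : ℂ :=
  (1 / (p : ℂ) ^ n) ^ d *
    ∑' j : ℤ, (quotPieceDim k (R := R) ℳ (bracketPow I (p ^ n) • ⊤) j : ℂ) *
      Complex.exp (-Complex.I * y * (j : ℂ) / (p : ℂ) ^ n)

section
theorem fp_krull_le_integral (A B : Type*) [CommRing A] [CommRing B] [Algebra A B]
    [Algebra.IsIntegral A B] : ringKrullDim B ≤ ringKrullDim A := by
  refine Order.krullDim_le_of_strictMono (PrimeSpectrum.comap (algebraMap A B)) ?_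
  intro P Q h
  have h' : P.asIdeal < Q.asIdeal := h
  exact Ideal.IsIntegral.comap_lt_comap h'

theorem fp_krull_ge_integral (A B : Type*) [CommRing A] [CommRing B] [Algebra A B]
    [Algebra.IsIntegral A B] (hinj : Function.Injective (algebraMap A B)) :
    ringKrullDim A ≤ ringKrullDim B := by
  have key : ∀ l : LTSeries (PrimeSpectrum A), ∃ L : LTSeries (PrimeSpectrum B),
      L.length = l.length ∧ PrimeSpectrum.comap (algebraMap A B) L.last = l.last := by
    intro l
    induction l using RelSeries.inductionOn' with
    | singleton P =>
      obtain ⟨Q, -, hQ, hQP⟩ := Ideal.exists_ideal_over_prime_of_isIntegral P.asIdeal (⊥ : Ideal B)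
        (by
          intro x hx
          have : algebraMap A B x = 0 := by simpa using hx
          rw [(injective_iff_map_eq_zero _).1 hinj x this]; exact zero_mem _)
      refine ⟨RelSeries.singleton _ ⟨Q, hQ⟩, rfl, ?_⟩
      ext1
      simpa using hQP
    | snoc l P hP ih =>
      obtain ⟨L, hL, hL'⟩ := ih
      have hlt : l.last < P := hP
      obtain ⟨Q, hQ1, hQ, hQP⟩ := Ideal.exists_ideal_over_prime_of_isIntegral_of_isPrime
        P.asIdeal L.last.asIdeal (by
          have : (PrimeSpectrum.comap (algebraMap A B) L.last).asIdeal ≤ P.asIdeal := by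
            rw [hL']; exact hlt.le
          exact this)
      have hlt2 : L.last < ⟨Q, hQ⟩ := by
        refine lt_of_le_of_ne hQ1 ?_
        intro h
        have h2 : PrimeSpectrum.comap (algebraMap A B) L.last = P := by
          rw [h]; ext1; simpa using hQP
        rw [hL'] at h2
        exact hlt.ne h2
      refine ⟨L.snoc ⟨Q, hQ⟩ hlt2, by simp [hL], ?_⟩
      rw [RelSeries.last_snoc, RelSeries.last_snoc]
      ext1
      simpa using hQP
  refine iSup_le fun l => ?_
  obtain ⟨L, hL, -⟩ := key l
  rw [← hL]
  exact le_iSup (fun l : LTSeries (PrimeSpectrum B) => ((l.length : ℕ∞) : WithBot ℕ∞)) L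

end

section
set_option linter.style.haveILetI false

/-- Core counting lemma for modules finite over a polynomial ring. -/
theorem fp_bound_core {K R N : Type*} [Field K] [CommRing R] [Algebra K R] [AddCommGroup N]
    [Module R N] [Module K N] [IsScalarTower K R N] [Module.Finite R N] (s : ℕ)
    [Module (MvPolynomial (Fin s) K) N] [IsScalarTower K (MvPolynomial (Fin s) K) N]
    [Module.Finite (MvPolynomial (Fin s) K) N]
    [SMulCommClass R (MvPolynomial (Fin s) K) N]
    {r : ℕ} (x : Fin r → R) (hx : Algebra.adjoin K (Set.range x) = ⊤) :
    ∃ C : ℕ, ∀ q : ℕ, 1 ≤ q → ∀ Q : Submodule R N, (∀ i, ∀ m : N, x i ^ q • m ∈ Q) →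
      Module.Finite K (N ⧸ Q) ∧ Module.finrank K (N ⧸ Q) ≤ C * q ^ s := by
  classical
  obtain ⟨t, g, hg⟩ := Module.Finite.exists_fin (R := MvPolynomial (Fin s) K) (M := N)
  obtain ⟨t', g', hg'⟩ := Module.Finite.exists_fin (R := R) (M := N)
  let W : ℕ → Submodule K N := fun δ => Submodule.span K
    (Set.range fun aj : (Fin s → Fin (δ + 1)) × Fin t =>
      (MvPolynomial.monomial (Finsupp.equivFunOnFinite.symm fun i => (aj.1 i : ℕ)) (1 : K)) • g aj.2)
  have hWmem : ∀ δ (a : Fin s →₀ ℕ) (j : Fin t), (∀ i, a i ≤ δ) →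
      (MvPolynomial.monomial a (1 : K)) • g j ∈ W δ := by
    intro δ a j ha
    refine Submodule.subset_span ⟨(fun i => ⟨a i, Nat.lt_succ_of_le (ha i)⟩, j), ?_⟩
    simp only
    congr 2
    congr 1
    ext i; simp
  have hWmono : ∀ δ δ', δ ≤ δ' → W δ ≤ W δ' := by
    intro δ δ' h
    refine Submodule.span_le.2 ?_
    rintro _ ⟨⟨a, j⟩, rfl⟩
    refine hWmem _ _ _ fun i => ?_
    simp
    have := (a i).2
    omega
  have hmonW : ∀ δ δ' (a : Fin s →₀ ℕ), (∀ i, a i ≤ δ) → ∀ m ∈ W δ',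
      (MvPolynomial.monomial a (1 : K)) • m ∈ W (δ + δ') := by
    intro δ δ' a ha m hm
    induction hm using Submodule.span_induction with
    | mem m hm =>
      obtain ⟨⟨a', j⟩, rfl⟩ := hm
      simp only
      rw [smul_smul, MvPolynomial.monomial_mul, one_mul]
      refine hWmem _ _ _ fun i => ?_
      have := (a' i).2
      have := ha i
      simp
      omega
    | zero => simp
    | add u v _ _ hu hv => rw [smul_add]; exact add_mem hu hv
    | smul c u _ hu => rw [smul_comm]; exact Submodule.smul_mem _ _ hu
  have hall : ∀ m : N, ∃ δ, m ∈ W δ := by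
    intro m
    have hm : m ∈ Submodule.span (MvPolynomial (Fin s) K) (Set.range g) := by rw [hg]; trivial
    induction hm using Submodule.span_induction with
    | mem m hm =>
      obtain ⟨j, rfl⟩ := hm
      refine ⟨0, ?_⟩
      have := hWmem 0 0 j (by simp)
      simpa using this
    | zero => exact ⟨0, zero_mem _⟩
    | add a b _ _ ha hb =>
      obtain ⟨δ, hδ⟩ := ha
      obtain ⟨δ', hδ'⟩ := hb
      exact ⟨max δ δ', add_mem (hWmono _ _ (le_max_left _ _) hδ) (hWmono _ _ (le_max_right _ _) hδ')⟩
    | smul b m _ hm =>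
      obtain ⟨δ, hδ⟩ := hm
      induction b using MvPolynomial.induction_on' with
      | monomial a c =>
        refine ⟨δ + ∑ i, a i, ?_⟩
        have h1 : (MvPolynomial.monomial a c) • m = c • ((MvPolynomial.monomial a (1 : K)) • m) := by
          rw [← smul_assoc, MvPolynomial.smul_monomial, smul_eq_mul, mul_one]
        rw [h1]
        refine Submodule.smul_mem _ _ ?_
        rw [add_comm]
        exact hmonW _ _ _ (fun i => Finset.single_le_sum (f := fun i => a i)
          (fun _ _ => Nat.zero_le _) (Finset.mem_univ i)) _ hδ
      | add b c hb hc =>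
        obtain ⟨δ, hδ⟩ := hb
        obtain ⟨δ', hδ'⟩ := hc
        refine ⟨max δ δ', ?_⟩
        rw [add_smul]
        exact add_mem (hWmono _ _ (le_max_left _ _) hδ) (hWmono _ _ (le_max_right _ _) hδ')
  choose δf hδf using hall
  let D : ℕ := ∑ i, ∑ j, δf (x i • g j)
  let D0 : ℕ := ∑ j, δf (g' j)
  have hg'W : ∀ j, g' j ∈ W D0 := fun j =>
    hWmono _ _ (Finset.single_le_sum (f := fun j => δf (g' j)) (fun _ _ => Nat.zero_le _) (Finset.mem_univ j)) (hδf _)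
  have hxg : ∀ i j, x i • g j ∈ W D := by
    intro i j
    refine hWmono _ _ ?_ (hδf _)
    refine le_trans (Finset.single_le_sum (f := fun j => δf (x i • g j)) (fun _ _ => Nat.zero_le _) (Finset.mem_univ j)) ?_
    exact Finset.single_le_sum (f := fun i => ∑ j, δf (x i • g j)) (fun _ _ => Nat.zero_le _) (Finset.mem_univ i)
  have hxW : ∀ i δ, ∀ m ∈ W δ, x i • m ∈ W (δ + D) := by
    intro i δ m hm
    induction hm using Submodule.span_induction with
    | mem m hm =>
      obtain ⟨⟨a', j⟩, rfl⟩ := hm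
      simp only
      rw [smul_comm]
      refine hmonW _ _ _ (fun i => ?_) _ (hxg i j)
      have := (a' i).2
      simp
      omega
    | zero => simp
    | add u v _ _ hu hv => rw [smul_add]; exact add_mem hu hv
    | smul c u _ hu => rw [smul_algebra_smul_comm]; exact Submodule.smul_mem _ _ hu
  have hxpow : ∀ i n δ, ∀ m ∈ W δ, x i ^ n • m ∈ W (δ + D * n) := by
    intro i n
    induction n with
    | zero => intro δ m hm; simpa using hm
    | succ n ih =>
      intro δ m hm
      rw [pow_succ', mul_smul, Nat.mul_succ, ← add_assoc]
      exact hxW _ _ _ (ih _ _ hm)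
  have hxprod : ∀ (S : Finset (Fin r)) (a : Fin r → ℕ) δ, ∀ m ∈ W δ,
      (∏ i ∈ S, x i ^ a i) • m ∈ W (δ + D * ∑ i ∈ S, a i) := by
    intro S a
    induction S using Finset.induction_on with
    | empty => intro δ m hm; simpa using hm
    | insert i S hi ih =>
      intro δ m hm
      rw [Finset.prod_insert hi, Finset.sum_insert hi, mul_smul]
      have := hxpow i (a i) _ _ (ih _ _ hm)
      convert this using 2
      ring
  refine ⟨(D0 + D * r + 1) ^ s * t, fun q hq Q hQ => ?_⟩
  have htop : W (D0 + D * (r * q)) ⊔ Q.restrictScalars K = ⊤ := by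
    rw [eq_top_iff]
    intro m _
    have hm : m ∈ Submodule.span R (Set.range g') := by rw [hg']; trivial
    have hmon : ∀ (b : MvPolynomial (Fin r) K) j, MvPolynomial.aeval x b • g' j ∈
        W (D0 + D * (r * q)) ⊔ Q.restrictScalars K := by
      intro b j
      induction b using MvPolynomial.induction_on' with
      | monomial a c =>
        rw [MvPolynomial.aeval_monomial, mul_smul, algebraMap_smul]
        refine Submodule.smul_mem _ _ ?_
        rw [Finsupp.prod_fintype _ _ (by simp)]
        by_cases h : ∀ i, a i ≤ q
        · refine Submodule.mem_sup_left ?_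
          refine hWmono _ _ ?_ (hxprod Finset.univ a D0 _ (hg'W j))
          gcongr
          calc ∑ i, a i ≤ ∑ i : Fin r, q := Finset.sum_le_sum fun i _ => h i
            _ = r * q := by simp
        · push Not at h
          obtain ⟨i, hi⟩ := h
          refine Submodule.mem_sup_right ?_
          rw [← Finset.mul_prod_erase _ _ (Finset.mem_univ i)]
          have : a i = q + (a i - q) := by omega
          rw [this, pow_add, mul_assoc, mul_smul]
          exact hQ _ _
      | add b c hb hc => rw [map_add, add_smul]; exact add_mem hb hc
    have hsurj : ∀ y : R, ∃ b, MvPolynomial.aeval (R := K) x b = y := by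
      intro y
      have : y ∈ Algebra.adjoin K (Set.range x) := by rw [hx]; trivial
      rw [Algebra.adjoin_range_eq_range_aeval] at this
      exact this
    rw [Submodule.mem_span_range_iff_exists_fun] at hm
    obtain ⟨c, rfl⟩ := hm
    refine sum_mem fun j _ => ?_
    obtain ⟨b, hb⟩ := hsurj (c j)
    rw [← hb]
    exact hmon b j
  have hsurj : Function.Surjective ((Q.mkQ.restrictScalars K) ∘ₗ (W (D0 + D * (r * q))).subtype) := by
    intro z
    obtain ⟨m, rfl⟩ := Q.mkQ_surjective z
    have : m ∈ W (D0 + D * (r * q)) ⊔ Q.restrictScalars K := by rw [htop]; trivial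
    obtain ⟨w, hw, u, hu, rfl⟩ := Submodule.mem_sup.1 this
    refine ⟨⟨w, hw⟩, ?_⟩
    simp only [LinearMap.comp_apply, LinearMap.restrictScalars_apply, Submodule.subtype_apply, map_add]
    rw [(Submodule.Quotient.mk_eq_zero Q (x := u)).2 hu |> (fun h => show Q.mkQ u = 0 from h)]
    simp
  have : Module.Finite K (W (D0 + D * (r * q))) := FiniteDimensional.span_of_finite K (Set.finite_range _)
  refine ⟨Module.Finite.of_surjective _ hsurj, ?_⟩
  refine (LinearMap.finrank_le_finrank_of_surjective hsurj).trans ?_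
  refine (finrank_range_le_card _).trans ?_
  simp only [Fintype.card_prod, Fintype.card_fun, Fintype.card_fin]
  calc (D0 + D * (r * q) + 1) ^ s * t ≤ ((D0 + D * r + 1) * q) ^ s * t := by
        gcongr
        nlinarith
    _ = _ := by rw [mul_pow]; ring

/-- Lemma 1: growth bound. -/
theorem fp_bound {K R N : Type*} [Field K] [CommRing R] [Algebra K R] [AddCommGroup N]
    [Module R N] [Module K N] [IsScalarTower K R N] [Module.Finite R N]
    {r : ℕ} (x : Fin r → R) (hx : Algebra.adjoin K (Set.range x) = ⊤) (d : ℕ)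
    (hd : ringKrullDim (R ⧸ Module.annihilator R N) ≤ d) :
    ∃ C : ℕ, ∀ q : ℕ, 1 ≤ q → ∀ Q : Submodule R N, (∀ i, ∀ m : N, x i ^ q • m ∈ Q) →
      Module.Finite K (N ⧸ Q) ∧ Module.finrank K (N ⧸ Q) ≤ C * q ^ d := by
  have hft : Algebra.FiniteType K R := ⟨by
    rw [← hx]
    exact ⟨(Set.finite_range x).toFinset, by simp⟩⟩
  by_cases htriv : Subsingleton (R ⧸ Module.annihilator R N)
  · have hN : Subsingleton N := by
      rw [Ideal.Quotient.subsingleton_iff] at htriv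
      exact Module.annihilator_eq_top_iff.1 htriv
    refine ⟨0, fun q hq Q hQ => ?_⟩
    have : Subsingleton (N ⧸ Q) := Q.mkQ_surjective.subsingleton
    refine ⟨inferInstance, ?_⟩
    rw [Module.finrank_zero_of_subsingleton]
    simp
  have hnt : Nontrivial (R ⧸ Module.annihilator R N) := not_subsingleton_iff_nontrivial.1 htriv
  obtain ⟨s, g, hinj, hfin⟩ := exists_finite_inj_algHom_of_fg K (R ⧸ Module.annihilator R N)
  have hs : s ≤ d := by
    letI := g.toRingHom.toAlgebra
    have : Module.Finite (MvPolynomial (Fin s) K) (R ⧸ Module.annihilator R N) := hfin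
    have h1 := fp_krull_ge_integral (MvPolynomial (Fin s) K) (R ⧸ Module.annihilator R N) hinj
    rw [MvPolynomial.ringKrullDim_of_isNoetherianRing, ringKrullDim_eq_zero_of_field] at h1
    have h2 := h1.trans hd
    simp at h2
    exact_mod_cast h2
  letI : Module (R ⧸ Module.annihilator R N) N := Module.quotientAnnihilator
  have hsm : ∀ (a : R) (m : N), (Ideal.Quotient.mk (Module.annihilator R N) a) • m = a • m := fun _ _ => rfl
  letI : Module (MvPolynomial (Fin s) K) N := Module.compHom N g.toRingHom
  have hsm2 : ∀ (b : MvPolynomial (Fin s) K) (m : N), b • m = g b • m := fun _ _ => rfl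
  have : IsScalarTower K (MvPolynomial (Fin s) K) N := ⟨by
    intro c b m
    rw [hsm2, hsm2, map_smul]
    obtain ⟨a, ha⟩ := Ideal.Quotient.mk_surjective (g b)
    rw [← ha, hsm]
    rw [show c • (Ideal.Quotient.mk (Module.annihilator R N) a) =
      Ideal.Quotient.mk (Module.annihilator R N) (c • a) from rfl, hsm, smul_assoc]⟩
  have : SMulCommClass R (MvPolynomial (Fin s) K) N := ⟨by
    intro c b m
    rw [hsm2, hsm2]
    obtain ⟨a, ha⟩ := Ideal.Quotient.mk_surjective (g b)
    rw [← ha, hsm, hsm, smul_comm]⟩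
  have : Module.Finite (MvPolynomial (Fin s) K) N := by
    letI := g.toRingHom.toAlgebra
    have : Module.Finite (MvPolynomial (Fin s) K) (R ⧸ Module.annihilator R N) := hfin
    have : IsScalarTower (MvPolynomial (Fin s) K) (R ⧸ Module.annihilator R N) N := ⟨by
      intro b a m
      rw [hsm2, smul_smul]; rfl⟩
    have : IsScalarTower R (R ⧸ Module.annihilator R N) N := ⟨by
      intro b a m
      obtain ⟨a, rfl⟩ := Ideal.Quotient.mk_surjective a
      rw [show b • (Ideal.Quotient.mk (Module.annihilator R N) a) =
      Ideal.Quotient.mk (Module.annihilator R N) (b • a) from rfl, hsm, hsm, smul_assoc]⟩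
    have : Module.Finite (R ⧸ Module.annihilator R N) N := Module.Finite.of_restrictScalars_finite R _ _
    exact Module.Finite.trans (R ⧸ Module.annihilator R N) N
  obtain ⟨C, hC⟩ := fp_bound_core (K := K) (N := N) s x hx
  refine ⟨C, fun q hq Q hQ => ⟨(hC q hq Q hQ).1, (hC q hq Q hQ).2.trans ?_⟩⟩
  gcongr

end

section
set_option linter.style.haveILetI false

theorem fp_fraction_semisimple (S : Type*) [CommRing S] [IsNoetherianRing S] [IsReduced S] :
    IsSemisimpleRing (FractionRing S) := by
  have hred : IsReduced (FractionRing S) := isReduced_localizationPreserves (nonZeroDivisors S) (FractionRing S) ‹_›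
  have hN : IsNoetherianRing (FractionRing S) := IsLocalization.isNoetherianRing (nonZeroDivisors S) _ ‹_›
  have hmax : ∀ m : Ideal (FractionRing S), m.IsMaximal → m ∈ minimalPrimes (FractionRing S) := by
    intro m hm
    have hfin : (minimalPrimes (FractionRing S)).Finite := minimalPrimes.finite_of_isNoetherianRing _
    have hsub : (m : Set (FractionRing S)) ⊆ ⋃ q ∈ hfin.toFinset, ((id q : Ideal (FractionRing S)) : Set (FractionRing S)) := by
      intro a ha
      have hnu : ¬ IsUnit a := fun h => hm.ne_top (Ideal.eq_top_of_isUnit_mem _ ha h)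
      have hnz : a ∉ nonZeroDivisors (FractionRing S) := by
        rw [IsFractionRing.nonZeroDivisors_eq_isUnit S (FractionRing S)]
        exact hnu
      rw [mem_nonZeroDivisors_iff_right] at hnz
      push Not at hnz
      obtain ⟨b, hb, hb0⟩ := hnz
      have h := Ideal.iUnion_minimalPrimes (I := (⊥ : Ideal (FractionRing S)))
      have : a ∈ ⋃ q ∈ (⊥ : Ideal (FractionRing S)).minimalPrimes, (q : Set (FractionRing S)) := by
        rw [h]
        have hr : (⊥ : Ideal (FractionRing S)).radical = ⊥ := by
          exact nilradical_eq_zero (FractionRing S)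
        rw [hr]
        exact ⟨b, by simpa using hb0, by simpa [mul_comm] using hb⟩
      simpa [minimalPrimes] using this
    obtain ⟨q, hq, hmq⟩ := (Ideal.subset_union_prime (s := hfin.toFinset) (f := id) ⊥ ⊥ (by
      intro q hq _ _
      exact ((hfin.mem_toFinset).1 hq).1.1)).1 (by simpa using hsub)
    have hq' := (hfin.mem_toFinset).1 hq
    have : m = q := hm.eq_of_le hq'.1.1.ne_top hmq
    rw [this]; exact hq'
  have hdim : Ring.KrullDimLE 0 (FractionRing S) := by
    rw [Ring.krullDimLE_zero_iff]
    intro P hP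
    obtain ⟨m, hm, hPm⟩ := Ideal.exists_le_maximal P hP.ne_top
    have := (hmax m hm).2 ⟨hP, bot_le⟩ hPm
    rwa [le_antisymm hPm this]
  have hA : IsArtinianRing (FractionRing S) :=
    isArtinianRing_iff_isNoetherianRing_krullDimLE_zero.2 ⟨hN, hdim⟩
  exact IsArtinianRing.isSemisimpleRing_of_isReduced _

theorem fp_split {S M' M : Type*} [CommRing S] [IsNoetherianRing S] [IsReduced S]
    [AddCommGroup M'] [Module S M'] [AddCommGroup M] [Module S M] [Module.Finite S M]
    [Module.Finite S M'] (f : M' →ₗ[S] M) (hf : Function.Injective f) :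
    ∃ s ∈ nonZeroDivisors S, ∃ π : M →ₗ[S] M', ∀ x, π (f x) = s • x := by
  have := fp_fraction_semisimple S
  have : Module.FinitePresentation S M := Module.finitePresentation_of_finite S M
  let W := nonZeroDivisors S
  let F := (IsLocalizedModule.map W (LocalizedModule.mkLinearMap W M')
    (LocalizedModule.mkLinearMap W M) f).extendScalarsOfIsLocalization W (FractionRing S)
  have hF : Function.Injective F := IsLocalizedModule.map_injective W _ _ f hf
  obtain ⟨h, hh⟩ := IsSemisimpleModule.extension_property F hF LinearMap.id
  obtain ⟨π, s, hπ⟩ := Module.FinitePresentation.exists_lift_of_isLocalizedModule W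
    (LocalizedModule.mkLinearMap W M') ((h.restrictScalars S) ∘ₗ (LocalizedModule.mkLinearMap W M))
  obtain ⟨t, ht⟩ := Module.Finite.exists_smul_of_comp_eq_of_isLocalizedModule W
    (LocalizedModule.mkLinearMap W M') (π ∘ₗ f) (s • LinearMap.id) (by
      ext x
      have h1 := LinearMap.congr_fun hπ (f x)
      have h2 := LinearMap.congr_fun hh (LocalizedModule.mkLinearMap W M' x)
      have h3 : F (LocalizedModule.mkLinearMap W M' x) = LocalizedModule.mkLinearMap W M (f x) :=
        IsLocalizedModule.map_apply W _ _ f x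
      simp only [LinearMap.comp_apply, LinearMap.id_apply] at h1 h2
      rw [h3] at h2
      simp only [LinearMap.comp_apply]
      rw [h1]
      simp only [LinearMap.smul_apply, LinearMap.comp_apply, LinearMap.restrictScalars_apply, h2,
        LinearMap.id_apply]
      rw [Submonoid.smul_def, Submonoid.smul_def, map_smul])
  refine ⟨t * s, mul_mem t.2 s.2, (t : S) • π, fun x => ?_⟩
  have := LinearMap.congr_fun ht x
  simpa [Submonoid.smul_def, mul_smul] using this

end

section
set_option linter.style.haveILetI false

/-- Standing hypotheses on the graded ring. -/
structure FPH (K : Type) {R : Type} [Field K] [CommRing R] [Algebra K R] (p : ℕ)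
    (𝒜 : ℤ → Submodule K R) (I : Ideal R) : Prop where
  prime : p.Prime
  charR : CharP R p
  charK : CharP K p
  hom : ∃ S : Set R, I = Ideal.span S ∧ ∀ a ∈ S, ∃ j, a ∈ 𝒜 j
  gen : ∃ (r : ℕ) (x : Fin r → R) (w : Fin r → ℤ) (c : ℕ), 1 ≤ c ∧
    Algebra.adjoin K (Set.range x) = ⊤ ∧ (∀ i, x i ∈ 𝒜 (w i)) ∧ ∀ i, x i ^ c ∈ I

/-- The submodule `I^{[p^n]} M`. -/
abbrev fpQ {R : Type} [CommRing R] (I : Ideal R) (p n : ℕ) (M : Type) [AddCommGroup M]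
    [Module R M] : Submodule R M := bracketPow I (p ^ n) • ⊤

theorem fp_pow_mem_bracket {R : Type} [CommRing R] {I : Ideal R} {x : R} {c : ℕ} (h : x ^ c ∈ I)
    (q : ℕ) : x ^ (c * q) ∈ bracketPow I q := by
  rw [pow_mul]; exact Ideal.subset_span ⟨_, h, rfl⟩

section
variable {K R : Type} [Field K] [CommRing R] [Algebra K R] {p : ℕ}
    {𝒜 : ℤ → Submodule K R} {I : Ideal R}

theorem FPH.noeth (H : FPH K p 𝒜 I) : IsNoetherianRing R := by
  obtain ⟨r, x, w, c, hc, hx, -⟩ := H.gen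
  have : Algebra.FiniteType K R := by
    refine ⟨⟨(Set.finite_range x).toFinset, ?_⟩⟩
    simpa using hx
  exact Algebra.FiniteType.isNoetherianRing K R

theorem FPH.bound (H : FPH K p 𝒜 I) (N : Type) [AddCommGroup N] [Module R N] [Module K N]
    [IsScalarTower K R N] [Module.Finite R N] (d : ℕ)
    (hd : ringKrullDim (R ⧸ Module.annihilator R N) ≤ d) :
    ∃ C : ℕ, ∀ n : ℕ, ∀ Q : Submodule R N, fpQ I p n N ≤ Q →
      Module.Finite K (N ⧸ Q) ∧ Module.finrank K (N ⧸ Q) ≤ C * (p ^ n) ^ d := by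
  obtain ⟨r, x, w, c, hc, hx, -, hxc⟩ := H.gen
  obtain ⟨C, hC⟩ := fp_bound x hx d hd (N := N)
  refine ⟨C * c ^ d, fun n Q hQ => ?_⟩
  have hp : 1 ≤ p ^ n := Nat.pow_pos H.prime.pos
  obtain ⟨h1, h2⟩ := hC (c * p ^ n) (Nat.mul_pos hc hp) Q (fun i m => hQ
    (Submodule.smul_mem_smul (fp_pow_mem_bracket (hxc i) _) trivial))
  refine ⟨h1, h2.trans (le_of_eq ?_)⟩
  rw [mul_pow, mul_assoc]

/-- The error scale. -/
def fpE (p d n : ℕ) : ℝ := ((p : ℝ) ^ n) ^ d / (p : ℝ) ^ n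

theorem FPH.bound_small (H : FPH K p 𝒜 I) (N : Type) [AddCommGroup N] [Module R N] [Module K N]
    [IsScalarTower K R N] [Module.Finite R N] (d : ℕ)
    (hd : ringKrullDim (R ⧸ Module.annihilator R N) + 1 ≤ d) :
    ∃ C : ℝ, 0 ≤ C ∧ ∀ n : ℕ, ∀ Q : Submodule R N, fpQ I p n N ≤ Q →
      (Module.finrank K (N ⧸ Q) : ℝ) ≤ C * fpE p d n := by
  rcases d with _ | d
  · refine ⟨0, le_rfl, fun n Q hQ => ?_⟩
    have h : ringKrullDim (R ⧸ Module.annihilator R N) = ⊥ := by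
      cases h : ringKrullDim (R ⧸ Module.annihilator R N) with
      | bot => rfl
      | coe a =>
        rw [h] at hd
        exfalso
        have : ((a + 1 : ℕ∞) : WithBot ℕ∞) ≤ ((0 : ℕ∞) : WithBot ℕ∞) := by exact_mod_cast hd
        rw [WithBot.coe_le_coe] at this
        simp at this
    have h : Subsingleton (R ⧸ Module.annihilator R N) := by
      by_contra hn
      rw [not_subsingleton_iff_nontrivial] at hn
      have := ringKrullDim_nonneg_of_nontrivial (R := R ⧸ Module.annihilator R N)
      rw [h] at this
      simp at this
    rw [Ideal.Quotient.subsingleton_iff] at h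
    have hs : Subsingleton N := by
      rw [Module.annihilator_eq_top_iff] at h
      exact h
    have : Subsingleton (N ⧸ Q) := (Submodule.mkQ_surjective Q).subsingleton
    rw [Module.finrank_zero_of_subsingleton]
    simp
  · have hd' : ringKrullDim (R ⧸ Module.annihilator R N) ≤ d := by
      push_cast at hd
      cases h : ringKrullDim (R ⧸ Module.annihilator R N) with
      | bot => exact bot_le
      | coe a =>
        rw [h] at hd
        have : ((a + 1 : ℕ∞) : WithBot ℕ∞) ≤ (((d : ℕ∞) + 1 : ℕ∞) : WithBot ℕ∞) := by
          exact_mod_cast hd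
        rw [WithBot.coe_le_coe] at this
        have h3 : a ≤ (d : ℕ∞) := (ENat.add_le_add_iff_right (by simp)).1 this
        exact_mod_cast (WithBot.coe_le_coe.2 h3)
    obtain ⟨C, hC⟩ := H.bound N d hd'
    refine ⟨C, Nat.cast_nonneg _, fun n Q hQ => ?_⟩
    have := (hC n Q hQ).2
    have hp : (0 : ℝ) < (p : ℝ) ^ n := by have := H.prime.pos; positivity
    have e : fpE p (d + 1) n = ((p : ℝ) ^ n) ^ d := by
      unfold fpE; field_simp; ring
    rw [e]; exact_mod_cast this

end

end

section
set_option linter.style.haveILetI false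

section
variable {K R : Type} [Field K] [CommRing R] [Algebra K R] {p : ℕ}
    {𝒜 : ℤ → Submodule K R} {I : Ideal R}

theorem fpQ_map_le {R : Type} [CommRing R] (I : Ideal R) (p n : ℕ) {M N : Type} [AddCommGroup M]
    [Module R M] [AddCommGroup N] [Module R N] (f : M →ₗ[R] N) :
    fpQ I p n M ≤ (fpQ I p n N).comap f := by
  rw [← Submodule.map_le_iff_le_comap, Submodule.map_smul'']
  exact Submodule.smul_mono le_rfl le_top

/-- Abstract dimension count. -/
theorem fp_count {V' V V'' : Type} [AddCommGroup V'] [AddCommGroup V] [AddCommGroup V'']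
    [Module K V'] [Module K V] [Module K V''] [Module.Finite K V'] [Module.Finite K V]
    [Module.Finite K V''] (a : V' →ₗ[K] V) (b : V →ₗ[K] V'') (hb : Function.Surjective b)
    (hab : ∀ v, b (a v) = 0) (s : V' →ₗ[K] V') (hs : ∀ v, a v = 0 → s v = 0) :
    Module.finrank K V' + Module.finrank K V'' ≤
      Module.finrank K V + Module.finrank K (V' ⧸ LinearMap.range s) := by
  have h1 := LinearMap.finrank_range_add_finrank_ker a
  have h2 := LinearMap.finrank_range_add_finrank_ker b
  have h3 := LinearMap.finrank_range_add_finrank_ker s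
  have h4 := Submodule.finrank_quotient_add_finrank (LinearMap.range s)
  have h5 : LinearMap.range b = ⊤ := LinearMap.range_eq_top.2 hb
  rw [h5, finrank_top] at h2
  have h6 : Module.finrank K (LinearMap.range a) ≤ Module.finrank K (LinearMap.ker b) :=
    Submodule.finrank_mono (by rintro _ ⟨v, rfl⟩; exact hab v)
  have h7 : Module.finrank K (LinearMap.ker a) ≤ Module.finrank K (LinearMap.ker s) :=
    Submodule.finrank_mono (fun v hv => hs v hv)
  omega

theorem FPH.lemma2a (H : FPH K p 𝒜 I) (M' M M'' : Type)
    [AddCommGroup M'] [Module R M'] [Module K M'] [IsScalarTower K R M'] [Module.Finite R M']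
    [AddCommGroup M] [Module R M] [Module K M] [IsScalarTower K R M] [Module.Finite R M]
    [AddCommGroup M''] [Module R M''] [Module K M''] [IsScalarTower K R M''] [Module.Finite R M'']
    (f : M' →ₗ[R] M) (g : M →ₗ[R] M'')
    (hf : Function.Injective f) (hg : Function.Surjective g) (hfg : ∀ x, g (f x) = 0)
    (d : ℕ) (hd : ringKrullDim (R ⧸ Module.annihilator R M) ≤ d)
    (hrad : (Module.annihilator R M).IsRadical) :
    ∃ C : ℝ, 0 ≤ C ∧ ∀ n : ℕ, (Module.finrank K (M' ⧸ fpQ I p n M') : ℝ) +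
      Module.finrank K (M'' ⧸ fpQ I p n M'') ≤
      Module.finrank K (M ⧸ fpQ I p n M) + C * fpE p d n := by
  have := H.noeth
  set A := Module.annihilator R M with hA
  have tM : Module.IsTorsionBySet R M A := by
    rw [Module.isTorsionBySet_iff_subset_annihilator]
  have hannM' : A ≤ Module.annihilator R M' := f.annihilator_le_of_injective hf
  have hannM'' : A ≤ Module.annihilator R M'' := g.annihilator_le_of_surjective hg
  have tM' : Module.IsTorsionBySet R M' A := by
    rw [Module.isTorsionBySet_iff_subset_annihilator]; exact hannM'
  letI := tM.module
  letI := tM'.module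
  have : IsScalarTower R (R ⧸ A) M := tM.isScalarTower
  have : IsScalarTower R (R ⧸ A) M' := tM'.isScalarTower
  have : IsReduced (R ⧸ A) := (Ideal.isRadical_iff_quotient_reduced A).1 hrad
  have : Module.Finite (R ⧸ A) M := Module.Finite.of_restrictScalars_finite R _ _
  have : Module.Finite (R ⧸ A) M' := Module.Finite.of_restrictScalars_finite R _ _
  let fS : M' →ₗ[R ⧸ A] M := f.extendScalarsOfSurjective Ideal.Quotient.mk_surjective
  obtain ⟨s0, hs0, π0, hπ0⟩ := fp_split fS hf
  obtain ⟨s, rfl⟩ := Ideal.Quotient.mk_surjective s0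
  let π : M →ₗ[R] M' := π0.restrictScalars R
  have hπ : ∀ x, π (f x) = s • x := by
    intro x
    have := hπ0 x
    rw [show (Ideal.Quotient.mk A s) • x = s • x from rfl] at this
    exact this
  -- the cokernel of s
  let sM : M' →ₗ[R] M' := LinearMap.lsmul R M' s
  let N := M' ⧸ LinearMap.range sM
  have hsN : s ∈ Module.annihilator R N := by
    rw [Module.mem_annihilator]
    intro m
    obtain ⟨m, rfl⟩ := Submodule.mkQ_surjective _ m
    rw [← map_smul]
    simp only [Submodule.mkQ_apply]
    rw [Submodule.Quotient.mk_eq_zero]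
    exact ⟨m, rfl⟩
  have hAN : A ≤ Module.annihilator R N :=
    hannM'.trans ((LinearMap.range sM).mkQ.annihilator_le_of_surjective (Submodule.mkQ_surjective _))
  have hdim : ringKrullDim (R ⧸ Module.annihilator R N) + 1 ≤ d := by
    refine le_trans ?_ hd
    refine ringKrullDim_succ_le_of_surjective (Ideal.Quotient.factor hAN)
      (Ideal.Quotient.factor_surjective hAN) hs0 ?_
    rw [Ideal.Quotient.factor_mk, Ideal.Quotient.eq_zero_iff_mem]
    exact hsN
  obtain ⟨C, hC0, hC⟩ := H.bound_small N d hdim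
  refine ⟨C, hC0, fun n => ?_⟩
  have hd' : ringKrullDim (R ⧸ Module.annihilator R M') ≤ d :=
    (ringKrullDim_le_of_surjective _ (Ideal.Quotient.factor_surjective hannM')).trans hd
  have hd'' : ringKrullDim (R ⧸ Module.annihilator R M'') ≤ d :=
    (ringKrullDim_le_of_surjective _ (Ideal.Quotient.factor_surjective hannM'')).trans hd
  obtain ⟨_, h1⟩ := H.bound M d hd
  obtain ⟨_, h1'⟩ := H.bound M' d hd'
  obtain ⟨_, h1''⟩ := H.bound M'' d hd''
  have := (h1 n _ le_rfl).1
  have := (h1' n _ le_rfl).1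
  have := (h1'' n _ le_rfl).1
  let a := Submodule.mapQ (fpQ I p n M') (fpQ I p n M) f (fpQ_map_le I p n f)
  let b := Submodule.mapQ (fpQ I p n M) (fpQ I p n M'') g (fpQ_map_le I p n g)
  let c := Submodule.mapQ (fpQ I p n M') (fpQ I p n M') sM (fpQ_map_le I p n sM)
  have key := fp_count (K := K) (a.restrictScalars K) (b.restrictScalars K) (by
      intro y
      obtain ⟨y, rfl⟩ := Submodule.mkQ_surjective _ y
      obtain ⟨x, rfl⟩ := hg y
      exact ⟨Submodule.mkQ _ x, rfl⟩) (by
      intro v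
      obtain ⟨v, rfl⟩ := Submodule.mkQ_surjective _ v
      simp [a, b, hfg]) (c.restrictScalars K) (by
      intro v
      obtain ⟨v, rfl⟩ := Submodule.mkQ_surjective _ v
      intro h
      simp only [a, LinearMap.restrictScalars_apply, Submodule.mkQ_apply, Submodule.mapQ_apply,
        Submodule.Quotient.mk_eq_zero] at h
      simp only [c, LinearMap.restrictScalars_apply, Submodule.mkQ_apply, Submodule.mapQ_apply,
        Submodule.Quotient.mk_eq_zero]
      have := fpQ_map_le I p n π h
      rw [Submodule.mem_comap, hπ] at this
      exact this)
  have hle := hC n ((fpQ I p n M').map (LinearMap.range sM).mkQ) (by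
    have : fpQ I p n N = (fpQ I p n M').map (LinearMap.range sM).mkQ := by
      rw [Submodule.map_smul'', Submodule.map_top, Submodule.range_mkQ]
    rw [this])
  have hr : LinearMap.range c = (LinearMap.range sM).map (fpQ I p n M').mkQ :=
    Submodule.range_mapQ _ _ _ _
  have heq : Module.finrank K ((M' ⧸ fpQ I p n M') ⧸ LinearMap.range (c.restrictScalars K)) =
      Module.finrank K (N ⧸ (fpQ I p n M').map (LinearMap.range sM).mkQ) := by
    have e1 : ((M' ⧸ fpQ I p n M') ⧸ LinearMap.range c) ≃ₗ[R]
      (N ⧸ (fpQ I p n M').map (LinearMap.range sM).mkQ) :=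
      (Submodule.quotEquivOfEq _ _ hr).trans
        ((Submodule.quotientQuotientEquivQuotientSup _ _).trans
        ((Submodule.quotEquivOfEq _ _ (sup_comm _ _)).trans
          (Submodule.quotientQuotientEquivQuotientSup _ _).symm))
    have e2 : ((M' ⧸ fpQ I p n M') ⧸ LinearMap.range (c.restrictScalars K)) ≃ₗ[K]
      ((M' ⧸ fpQ I p n M') ⧸ LinearMap.range c) :=
      Submodule.Quotient.restrictScalarsEquiv K (LinearMap.range c)
    exact (e2.trans (e1.restrictScalars K)).finrank_eq
  rw [heq] at key
  have : (Module.finrank K (M' ⧸ fpQ I p n M') : ℝ) + Module.finrank K (M'' ⧸ fpQ I p n M'') ≤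
    Module.finrank K (M ⧸ fpQ I p n M) + Module.finrank K (N ⧸ (fpQ I p n M').map (LinearMap.range sM).mkQ) := by
    exact_mod_cast key
  linarith

end

end

section
set_option linter.style.haveILetI false
set_option linter.unusedSectionVars false

/-- `M` with scalars acting through the `e`-th iterate of Frobenius. -/
def Frb (_p _e : ℕ) (M : Type) : Type := M

instance Frb.acg (p e : ℕ) (M : Type) [AddCommGroup M] : AddCommGroup (Frb p e M) :=
  inferInstanceAs (AddCommGroup M)

instance Frb.mod (p e : ℕ) (R M : Type) [CommRing R] [ExpChar R p] [AddCommGroup M] [Module R M] :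
    Module R (Frb p e M) := Module.compHom M (iterateFrobenius R p e)

/-- The identity map. -/
def Frb.of (p e : ℕ) (M : Type) [AddCommGroup M] : M ≃+ Frb p e M := AddEquiv.refl M

theorem Frb.smul_of (p e : ℕ) {R M : Type} [CommRing R] [ExpChar R p] [AddCommGroup M] [Module R M]
    (r : R) (m : M) : r • Frb.of p e M m = Frb.of p e M (r ^ p ^ e • m) := by
  rfl

instance Frb.tower (p e : ℕ) (K R M : Type) [CommRing R] [ExpChar R p] [AddCommGroup M] [Module R M]
    [Field K] [ExpChar K p] [Algebra K R] [Module K M] [IsScalarTower K R M] :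
    IsScalarTower K R (Frb p e M) := by
  constructor
  intro a r m
  obtain ⟨m, rfl⟩ := (Frb.of p e M).surjective m
  simp only [Frb.smul_of]
  rw [Algebra.smul_def, mul_pow, mul_smul, ← map_pow, algebraMap_smul]

theorem fp_finite_compHom {A B M : Type} [CommRing A] [CommRing B] [AddCommGroup M] [Module B M]
    [Module.Finite B M] (φ : A →+* B) (hφ : φ.Finite) :
    @Module.Finite A M _ _ (Module.compHom M φ) := by
  letI := φ.toAlgebra
  letI := Module.compHom M φ
  have : IsScalarTower A B M := ⟨fun a b m => by
    rw [Algebra.smul_def, mul_smul]; rfl⟩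
  have : Module.Finite A B := hφ
  exact Module.Finite.trans B M

theorem fp_frob_finite (K R : Type) (p e : ℕ) [Field K] [CommRing R] [Algebra K R] [ExpChar K p]
    [ExpChar R p] [PerfectRing K p] [Algebra.FiniteType K R] : (iterateFrobenius R p e).Finite := by
  apply RingHom.IsIntegral.to_finite
  · have key : ∀ (A : Type) [CommRing A] (φ : A →+* R) (q : ℕ), 0 < q → (∀ x : R, ∃ y, φ y = x ^ q) →
        φ.IsIntegral := by
      intro A _ φ q hq h x
      letI := φ.toAlgebra
      obtain ⟨y, hy⟩ := h x
      have : IsIntegral A (x ^ q) := by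
        rw [← hy]; exact isIntegral_algebraMap (R := A) (A := R)
      exact IsIntegral.of_pow hq this
    exact key R _ (p ^ e) (Nat.pow_pos (expChar_pos R p)) (fun x => ⟨x, rfl⟩)
  · have h : ((iterateFrobenius R p e).comp (algebraMap K R)).FiniteType := by
      have : (iterateFrobenius R p e).comp (algebraMap K R) =
          (algebraMap K R).comp (iterateFrobenius K p e) := by
        ext a; simp [iterateFrobenius_def]
      rw [this]
      refine RingHom.FiniteType.comp ((RingHom.finiteType_algebraMap).2 ‹_›) ?_
      exact RingHom.FiniteType.of_surjective _ (bijective_iterateFrobenius K p e).2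
    exact RingHom.FiniteType.of_comp_finiteType h

theorem Frb.finite (K : Type) {R M : Type} (p e : ℕ) [Field K] [CommRing R] [Algebra K R]
    [ExpChar K p] [ExpChar R p] [PerfectRing K p] [Algebra.FiniteType K R] [AddCommGroup M]
    [Module R M] [Module.Finite R M] : Module.Finite R (Frb p e M) :=
  fp_finite_compHom (M := M) _ (fp_frob_finite K R p e)

theorem Frb.mem_fpQ {R M : Type} (p e n : ℕ) [CommRing R] [ExpChar R p] [AddCommGroup M]
    [Module R M] (I : Ideal R) (m : M) :
    Frb.of p e M m ∈ fpQ I p n (Frb p e M) ↔ m ∈ fpQ I p (n + e) M := by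
  constructor
  · have : ∀ z ∈ fpQ I p n (Frb p e M), (Frb.of p e M).symm z ∈ fpQ I p (n + e) M := by
      intro z hz
      refine Submodule.smul_induction_on hz ?_ ?_
      · intro r hr m _
        obtain ⟨m, rfl⟩ := (Frb.of p e M).surjective m
        rw [Frb.smul_of, AddEquiv.symm_apply_apply]
        refine Submodule.smul_mem_smul ?_ trivial
        have h2 : bracketPow I (p ^ n) ≤ (bracketPow I (p ^ (n + e))).comap (iterateFrobenius R p e) := by
          unfold bracketPow
          rw [Ideal.span_le]
          rintro _ ⟨a, ha, rfl⟩
          simp only [Ideal.coe_comap, Set.mem_preimage, iterateFrobenius_def]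
          rw [← pow_mul, ← pow_add]
          exact Ideal.subset_span ⟨a, ha, rfl⟩
        exact h2 hr
      · intro x y hx hy
        rw [map_add]; exact add_mem hx hy
    intro h
    simpa using this _ h
  · intro h
    refine Submodule.smul_induction_on h ?_ ?_
    · intro r hr m _
      clear h
      induction hr using Submodule.span_induction generalizing m with
      | mem r hr =>
        obtain ⟨a, ha, rfl⟩ := hr
        have : Frb.of p e M (a ^ p ^ (n + e) • m) = (a ^ p ^ n) • Frb.of p e M m := by
          rw [Frb.smul_of, ← pow_mul, ← pow_add]
        rw [show (fun x : R => x ^ p ^ (n + e)) a = a ^ p ^ (n + e) from rfl, this]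
        exact Submodule.smul_mem_smul (Ideal.subset_span ⟨a, ha, rfl⟩) trivial
      | zero => simp
      | add x y _ _ hx hy =>
        rw [add_smul, map_add]; exact add_mem (hx m trivial) (hy m trivial)
      | smul b x _ hx =>
        rw [smul_eq_mul, mul_comm, mul_smul]; exact hx _ trivial
    · intro x y hx hy
      rw [map_add]; exact add_mem hx hy

theorem fp_semi_finrank {K V V' : Type} [Field K] [AddCommGroup V] [AddCommGroup V'] [Module K V]
    [Module K V'] (σ : K → K) (hσ0 : σ 0 = 0) (hσ : Function.Bijective σ) (φ : V ≃+ V')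
    (hφ : ∀ a v, φ (a • v) = σ a • φ v) (U : Submodule K V) (U' : Submodule K V')
    (hU : ∀ v, v ∈ U ↔ φ v ∈ U') : Module.finrank K U = Module.finrank K U' := by
  let ψ : U ≃+ U' :=
    { toFun := fun u => ⟨φ u, (hU _).1 u.2⟩
      invFun := fun u => ⟨φ.symm u, (hU _).2 (by simp)⟩
      left_inv := fun u => by simp
      right_inv := fun u => by simp
      map_add' := fun a b => by ext; simp }
  have := rank_eq_of_equiv_equiv (⟨σ, hσ0⟩ : ZeroHom K K) ψ hσ (fun r m => by ext; exact hφ r m)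
  simp only [Module.finrank, this]

/-- The identification of quotients. -/
def Frb.quot {R M : Type} (p e n : ℕ) [CommRing R] [ExpChar R p] [AddCommGroup M]
    [Module R M] (I : Ideal R) :
    (M ⧸ fpQ I p (n + e) M) ≃+ (Frb p e M ⧸ fpQ I p n (Frb p e M)) :=
  QuotientAddGroup.congr _ _ (Frb.of p e M) (by
    ext z
    obtain ⟨z, rfl⟩ := (Frb.of p e M).surjective z
    simp only [Submodule.mem_toAddSubgroup, Frb.mem_fpQ]
    constructor
    · rintro ⟨y, hy, h⟩
      have : y = z := (Frb.of p e M).injective h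
      rw [← this]; exact hy
    · intro h
      exact ⟨z, h, rfl⟩)

theorem Frb.quot_mk {R M : Type} (p e n : ℕ) [CommRing R] [ExpChar R p] [AddCommGroup M]
    [Module R M] (I : Ideal R) (m : M) :
    Frb.quot (R := R) p e n I (Submodule.mkQ _ m) = Submodule.mkQ _ (Frb.of p e M m) := rfl

/-- Graded pieces of the Frobenius pushforward. -/
def Frb.piece {K M : Type} (p e : ℕ) [Field K] [ExpChar K p] [AddCommGroup M] [Module K M]
    (U : Submodule K M) : Submodule K (Frb p e M) where
  carrier := (Frb.of p e M).symm ⁻¹' U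
  add_mem' := fun {a b} ha hb => by
    simp only [Set.mem_preimage, map_add] at *; exact add_mem ha hb
  zero_mem' := by simp
  smul_mem' := fun a x hx => by
    obtain ⟨x, rfl⟩ := (Frb.of p e M).surjective x
    rw [Frb.smul_of]
    simp only [Set.mem_preimage, AddEquiv.symm_apply_apply] at *
    exact U.smul_mem _ hx

theorem Frb.mem_piece {K M : Type} (p e : ℕ) [Field K] [ExpChar K p] [AddCommGroup M] [Module K M]
    (U : Submodule K M) (m : M) : Frb.of p e M m ∈ Frb.piece p e U ↔ m ∈ U := Iff.rfl

section
variable {K R M : Type} (p e n : ℕ) [Field K] [CommRing R] [Algebra K R]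
    [ExpChar K p] [ExpChar R p] [PerfectRing K p] [AddCommGroup M]
    [Module R M] [Module K M] [IsScalarTower K R M] (I : Ideal R)

theorem Frb.quot_smul (a : K) (v : M ⧸ fpQ I p (n + e) M) :
    Frb.quot (R := R) p e n I ((a ^ p ^ e) • v) = a • Frb.quot (R := R) p e n I v := by
  obtain ⟨v, rfl⟩ := Submodule.mkQ_surjective _ v
  rw [Frb.quot_mk]
  have h1 : a ^ p ^ e • (fpQ I p (n + e) M).mkQ v = (fpQ I p (n + e) M).mkQ (a ^ p ^ e • v) := rfl
  have h2 : a • (fpQ I p n (Frb p e M)).mkQ (Frb.of p e M v) =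
    (fpQ I p n (Frb p e M)).mkQ (a • Frb.of p e M v) := rfl
  rw [h1, h2, Frb.quot_mk, Frb.smul_of]

theorem Frb.finrank_sub (U : Submodule K (M ⧸ fpQ I p (n + e) M))
    (U' : Submodule K (Frb p e M ⧸ fpQ I p n (Frb p e M)))
    (hU : ∀ v, v ∈ U ↔ Frb.quot (R := R) p e n I v ∈ U') :
    Module.finrank K U' = Module.finrank K U := by
  refine fp_semi_finrank (iterateFrobenius K p e) (map_zero _)
    (bijective_iterateFrobenius K p e) (Frb.quot (R := R) p e n I).symm ?_ U' U ?_
  · intro a v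
    obtain ⟨v, rfl⟩ := (Frb.quot (R := R) p e n I).surjective v
    rw [← Frb.quot_smul, AddEquiv.symm_apply_apply, AddEquiv.symm_apply_apply]
    rfl
  · intro v
    rw [hU]; simp

theorem Frb.finrank_quot : Module.finrank K (Frb p e M ⧸ fpQ I p n (Frb p e M)) =
    Module.finrank K (M ⧸ fpQ I p (n + e) M) := by
  rw [← finrank_top K (M ⧸ _), ← finrank_top]
  exact Frb.finrank_sub p e n I _ _ (by simp)

theorem Frb.quotPieceDim (ℳ : ℤ → Submodule K M) (j : ℤ) :
    quotPieceDim K (fun j => Frb.piece p e (ℳ j)) (fpQ I p n (Frb p e M)) j =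
      quotPieceDim K ℳ (fpQ I p (n + e) M) j := by
  unfold _root_.quotPieceDim
  refine Frb.finrank_sub p e n I _ _ ?_
  intro v
  simp only [Submodule.mem_map]
  constructor
  · rintro ⟨m, hm, rfl⟩
    exact ⟨Frb.of p e M m, hm, rfl⟩
  · rintro ⟨m, hm, h⟩
    obtain ⟨m, rfl⟩ := (Frb.of p e M).surjective m
    exact ⟨m, hm, (Frb.quot (R := R) p e n I).injective (by rw [← h]; rfl)⟩

end

end

section
set_option linter.style.haveILetI false
set_option linter.unusedSectionVars false

section
variable {K R : Type} [Field K] [CommRing R] [Algebra K R] {p : ℕ}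
    {𝒜 : ℤ → Submodule K R} {I : Ideal R}

theorem FPH.fintype (H : FPH K p 𝒜 I) : Algebra.FiniteType K R := by
  obtain ⟨r, x, w, c, hc, hx, -⟩ := H.gen
  refine ⟨⟨(Set.finite_range x).toFinset, ?_⟩⟩
  simpa using hx

theorem Frb.mem_ann {R M : Type} (p e : ℕ) [CommRing R] [ExpChar R p] [AddCommGroup M]
    [Module R M] (r : R) :
    r ∈ Module.annihilator R (Frb p e M) ↔ r ^ p ^ e ∈ Module.annihilator R M := by
  rw [Module.mem_annihilator, Module.mem_annihilator]
  constructor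
  · intro h m
    have := h (Frb.of p e M m)
    rw [Frb.smul_of] at this
    simpa using this
  · intro h m
    obtain ⟨m, rfl⟩ := (Frb.of p e M).surjective m
    rw [Frb.smul_of, h, map_zero]

theorem Frb.ann_le {R M : Type} (p e : ℕ) [CommRing R] [ExpChar R p] [AddCommGroup M]
    [Module R M] : Module.annihilator R M ≤ Module.annihilator R (Frb p e M) := by
  intro r hr
  rw [Frb.mem_ann]
  exact Ideal.pow_mem_of_mem _ hr _ (Nat.pow_pos (expChar_pos R p))

theorem Frb.exists_radical {R M : Type} (p : ℕ) (hp : p.Prime) [CommRing R] [IsNoetherianRing R]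
    [ExpChar R p]
    [AddCommGroup M] [Module R M] : ∃ e, (Module.annihilator R (Frb p e M)).IsRadical := by
  obtain ⟨N, hN⟩ := Ideal.exists_radical_pow_le_of_fg (Module.annihilator R M)
    (IsNoetherian.noetherian _)
  refine ⟨N, ?_⟩
  have : Module.annihilator R (Frb p N M) = (Module.annihilator R M).radical := by
    ext r
    rw [Frb.mem_ann]
    constructor
    · intro h; exact ⟨_, h⟩
    · intro h
      have h1 : r ^ N ∈ Module.annihilator R M := hN (Ideal.pow_mem_pow h N)
      exact Ideal.mem_of_dvd _ (pow_dvd_pow r (Nat.lt_pow_self hp.one_lt).le) h1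
  rw [this]
  exact Ideal.radical_isRadical _

/-- functoriality -/
def Frb.map {R M N : Type} (p e : ℕ) [CommRing R] [ExpChar R p] [AddCommGroup M]
    [Module R M] [AddCommGroup N] [Module R N] (f : M →ₗ[R] N) : Frb p e M →ₗ[R] Frb p e N where
  toFun := fun m => Frb.of p e N (f ((Frb.of p e M).symm m))
  map_add' := by simp
  map_smul' := fun r m => by
    obtain ⟨m, rfl⟩ := (Frb.of p e M).surjective m
    rw [Frb.smul_of]; simp [Frb.smul_of]

theorem fpE_pos {p : ℕ} (hp : p.Prime) (d n : ℕ) : 0 < fpE p d n := by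
  have : (0 : ℝ) < p := by exact_mod_cast hp.pos
  unfold fpE; positivity

theorem fpE_shift {p : ℕ} (hp : p.Prime) (d n e : ℕ) : fpE p d n ≤ (p : ℝ) ^ e * fpE p d (n + e) := by
  have h1 : (1 : ℝ) ≤ p := by exact_mod_cast hp.one_le
  have h0 : (0 : ℝ) < p := by linarith
  have : (p : ℝ) ^ e * fpE p d (n + e) = fpE p d n * ((p : ℝ) ^ e) ^ d := by
    unfold fpE
    rw [pow_add, mul_pow]
    field_simp
  rw [this]
  exact le_mul_of_one_le_right (fpE_pos hp d n).le (one_le_pow₀ (one_le_pow₀ h1))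

theorem FPH.lemma2b (H : FPH K p 𝒜 I) [ExpChar K p] [ExpChar R p] [PerfectRing K p] (M' M M'' : Type)
    [AddCommGroup M'] [Module R M'] [Module K M'] [IsScalarTower K R M'] [Module.Finite R M']
    [AddCommGroup M] [Module R M] [Module K M] [IsScalarTower K R M] [Module.Finite R M]
    [AddCommGroup M''] [Module R M''] [Module K M''] [IsScalarTower K R M''] [Module.Finite R M'']
    (f : M' →ₗ[R] M) (g : M →ₗ[R] M'')
    (hf : Function.Injective f) (hg : Function.Surjective g) (hfg : ∀ x, g (f x) = 0)
    (d : ℕ) (hd : ringKrullDim (R ⧸ Module.annihilator R M) ≤ d) :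
    ∃ C : ℝ, 0 ≤ C ∧ ∀ n : ℕ, (Module.finrank K (M' ⧸ fpQ I p n M') : ℝ) +
      Module.finrank K (M'' ⧸ fpQ I p n M'') ≤
      Module.finrank K (M ⧸ fpQ I p n M) + C * fpE p d n := by
  have := H.noeth
  have := H.fintype
  have hp := H.prime
  obtain ⟨e, he⟩ := Frb.exists_radical (R := R) (M := M) p hp
  have := Frb.finite K (R := R) (M := M) p e
  have := Frb.finite K (R := R) (M := M') p e
  have := Frb.finite K (R := R) (M := M'') p e
  obtain ⟨C, hC0, hC⟩ := H.lemma2a (Frb p e M') (Frb p e M) (Frb p e M'')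
    (Frb.map p e f) (Frb.map p e g) hf hg hfg d
    ((ringKrullDim_le_of_surjective _ (Ideal.Quotient.factor_surjective (Frb.ann_le p e))).trans hd) he
  let D : ℕ → ℝ := fun m => ((Module.finrank K (M' ⧸ fpQ I p m M') : ℝ) +
      Module.finrank K (M'' ⧸ fpQ I p m M'')) / fpE p d m
  have hD : ∀ m, 0 ≤ D m := fun m => div_nonneg (by positivity) (fpE_pos hp d m).le
  have hS : 0 ≤ ∑ m ∈ Finset.range e, D m := Finset.sum_nonneg (fun m _ => hD m)
  have hpe : (0 : ℝ) ≤ C * (p : ℝ) ^ e := by positivity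
  refine ⟨C * (p : ℝ) ^ e + ∑ m ∈ Finset.range e, D m, by positivity, fun n => ?_⟩
  have hE := fpE_pos hp d n
  by_cases hn : n < e
  · have h1 : D n ≤ ∑ m ∈ Finset.range e, D m :=
      Finset.single_le_sum (f := D) (fun m _ => hD m) (Finset.mem_range.2 hn)
    have h2 : (Module.finrank K (M' ⧸ fpQ I p n M') : ℝ) +
      Module.finrank K (M'' ⧸ fpQ I p n M'') = D n * fpE p d n := by
      simp only [D]; field_simp
    rw [h2]
    have h3 : (0 : ℝ) ≤ Module.finrank K (M ⧸ fpQ I p n M) := by positivity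
    nlinarith
  · obtain ⟨m, rfl⟩ := Nat.exists_eq_add_of_le' (not_lt.1 hn)
    have h1 := hC m
    rw [Frb.finrank_quot, Frb.finrank_quot, Frb.finrank_quot] at h1
    have h2 := fpE_shift hp d m e
    have h3 : C * fpE p d m ≤ C * (p : ℝ) ^ e * fpE p d (m + e) := by
      rw [mul_assoc]; exact mul_le_mul_of_nonneg_left h2 hC0
    have h4 := mul_nonneg hS hE.le
    nlinarith
end

end

section
set_option linter.style.haveILetI false
set_option linter.unusedSectionVars false

/-- A grading given by projections. -/
structure Gr {K M : Type} [Field K] [AddCommGroup M] [Module K M] (ℳ : ℤ → Submodule K M) where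
  proj : ℤ → M →ₗ[K] M
  mem : ∀ j x, proj j x ∈ ℳ j
  same : ∀ j x, x ∈ ℳ j → proj j x = x
  ne : ∀ i j x, i ≠ j → x ∈ ℳ i → proj j x = 0
  fin : ∀ x, ∃ s : Finset ℤ, ∑ j ∈ s, proj j x = x

namespace Gr
variable {K M : Type} [Field K] [AddCommGroup M] [Module K M] {ℳ : ℤ → Submodule K M}

/-- from a decomposition -/
def ofDecomposition (ℳ : ℤ → Submodule K M) [DirectSum.Decomposition ℳ] : Gr ℳ where
  proj := fun j => (ℳ j).subtype ∘ₗ DirectSum.component K ℤ (fun i => ℳ i) j ∘ₗ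
    (DirectSum.decomposeLinearEquiv ℳ).toLinearMap
  mem := fun j x => by simp
  same := fun j x hx => by
    simp only [LinearMap.comp_apply, Submodule.subtype_apply]
    exact DirectSum.decompose_of_mem_same ℳ hx
  ne := fun i j x hij hx => by
    simp only [LinearMap.comp_apply, Submodule.subtype_apply]
    exact DirectSum.decompose_of_mem_ne ℳ hx hij
  fin := fun x => by
    classical
    exact ⟨_, DirectSum.sum_support_decompose ℳ x⟩

theorem induct (G : Gr ℳ) {P : M → Prop} (x : M) (h0 : P 0) (hadd : ∀ a b, P a → P b → P (a + b))
    (hm : ∀ j, ∀ y ∈ ℳ j, P y) : P x := by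
  obtain ⟨s, hs⟩ := G.fin x
  rw [← hs]
  exact Finset.sum_induction _ P hadd h0 (fun j _ => hm j _ (G.mem j x))

theorem mem_iff (G : Gr ℳ) (j : ℤ) (x : M) : x ∈ ℳ j ↔ G.proj j x = x :=
  ⟨G.same j x, fun h => h ▸ G.mem j x⟩

theorem eq_zero (G : Gr ℳ) (x : M) (h : ∀ j, G.proj j x = 0) : x = 0 := by
  obtain ⟨s, hs⟩ := G.fin x
  rw [← hs]
  exact Finset.sum_eq_zero (fun j _ => h j)

theorem commutes (G : Gr ℳ) {M' : Type} [AddCommGroup M'] [Module K M'] {ℳ' : ℤ → Submodule K M'}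
    (G' : Gr ℳ') (f : M →+ M') (σ : ℤ → ℤ) (hσ : Function.Injective σ)
    (hf : ∀ j, ∀ x ∈ ℳ j, f x ∈ ℳ' (σ j)) (j : ℤ) (x : M) :
    G'.proj (σ j) (f x) = f (G.proj j x) := by
  refine G.induct (P := fun x => G'.proj (σ j) (f x) = f (G.proj j x)) x (by simp) ?_ ?_
  · intro a b ha hb
    simp only [map_add] at *
    rw [ha, hb]
  · intro i y hy
    by_cases hij : i = j
    · subst hij
      rw [G.same i y hy, G'.same _ _ (hf _ _ hy)]
    · rw [G.ne i j y hij hy, G'.ne (σ i) (σ j) _ (fun h => hij (hσ h)) (hf _ _ hy), map_zero]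

/-- induced projections on a surjective image -/
def surjProj (G : Gr ℳ) {M' : Type} [AddCommGroup M'] [Module K M'] (π : M →ₗ[K] M')
    (hπ : Function.Surjective π) (hN : ∀ j x, π x = 0 → π (G.proj j x) = 0) (j : ℤ) : M' →ₗ[K] M' :=
  (LinearMap.ker π).liftQ (π ∘ₗ G.proj j) (fun x hx => hN j x hx) ∘ₗ
    (π.quotKerEquivOfSurjective hπ).symm.toLinearMap

theorem surjProj_apply (G : Gr ℳ) {M' : Type} [AddCommGroup M'] [Module K M'] (π : M →ₗ[K] M')
    (hπ : Function.Surjective π) (hN : ∀ j x, π x = 0 → π (G.proj j x) = 0) (j : ℤ) (x : M) :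
    G.surjProj π hπ hN j (π x) = π (G.proj j x) := by
  have : (π.quotKerEquivOfSurjective hπ).symm (π x) = Submodule.mkQ _ x := by
    rw [LinearEquiv.symm_apply_eq]; rfl
  simp only [surjProj, LinearMap.comp_apply, LinearEquiv.coe_coe, this]
  rfl

/-- grading on a surjective image -/
def surj (G : Gr ℳ) {M' : Type} [AddCommGroup M'] [Module K M'] (π : M →ₗ[K] M')
    (hπ : Function.Surjective π) (hN : ∀ j x, π x = 0 → π (G.proj j x) = 0) :
    Gr (fun j => (ℳ j).map π) where
  proj := G.surjProj π hπ hN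
  mem := fun j x => by
    obtain ⟨x, rfl⟩ := hπ x
    rw [surjProj_apply]
    exact ⟨_, G.mem j x, rfl⟩
  same := fun j x hx => by
    obtain ⟨x, hx, rfl⟩ := hx
    rw [surjProj_apply, G.same j x hx]
  ne := fun i j x hij hx => by
    obtain ⟨x, hx, rfl⟩ := hx
    rw [surjProj_apply, G.ne i j x hij hx, map_zero]
  fin := fun x => by
    obtain ⟨x, rfl⟩ := hπ x
    obtain ⟨s, hs⟩ := G.fin x
    refine ⟨s, ?_⟩
    conv_rhs => rw [← hs]
    simp [surjProj_apply]

theorem finrank_sum (G : Gr ℳ) [Module.Finite K M] (s : Finset ℤ) (hs : ∀ j, j ∉ s → ℳ j = ⊥) :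
    ∑ j ∈ s, Module.finrank K (ℳ j) = Module.finrank K M := by
  have e : M ≃ₗ[K] ((j : s) → ℳ j) := LinearEquiv.ofBijective
    (LinearMap.pi (fun j : s => (G.proj j).codRestrict (ℳ j) (G.mem j))) (by
    constructor
    · rw [injective_iff_map_eq_zero]
      intro x hx
      refine G.eq_zero x (fun j => ?_)
      by_cases hj : j ∈ s
      · have := congrFun hx ⟨j, hj⟩
        simpa using congrArg Subtype.val this
      · have := G.mem j x
        rw [hs j hj] at this
        simpa using this
    · intro v
      refine ⟨∑ j : s, (v j : M), ?_⟩
      ext i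
      simp only [LinearMap.pi_apply, map_sum]
      rw [Finset.sum_eq_single i]
      · exact G.same _ _ (v i).2
      · intro b _ hb
        exact Subtype.ext (G.ne _ _ _ (fun h => hb (Subtype.ext h)) (v b).2)
      · simp)
  rw [e.finrank_eq, Module.finrank_pi_fintype, Finset.sum_coe_sort s (fun j => Module.finrank K (ℳ j))]

end Gr

end

section
set_option linter.style.haveILetI false
set_option linter.unusedSectionVars false

/-- Bundled finitely generated graded modules, with degrees of scalars scaled by `c`. -/
structure GM (K R : Type) [Field K] [CommRing R] [Algebra K R] (𝒜 : ℤ → Submodule K R) (c : ℤ) where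
  V : Type
  [acg : AddCommGroup V]
  [modR : Module R V]
  [modK : Module K V]
  [tower : IsScalarTower K R V]
  [finite : Module.Finite R V]
  gr : ℤ → Submodule K V
  G : Gr gr
  smul_mem : ∀ a b, ∀ r ∈ 𝒜 a, ∀ x ∈ gr b, r • x ∈ gr (c * a + b)

attribute [instance] GM.acg GM.modR GM.modK GM.tower GM.finite

namespace GM
variable {K R : Type} [Field K] [CommRing R] [Algebra K R] {𝒜 : ℤ → Submodule K R} {c : ℤ}

theorem proj_smul (V : GM K R 𝒜 c) {a : ℤ} {r : R} (hr : r ∈ 𝒜 a) (j : ℤ) (v : V.V) :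
    V.G.proj (c * a + j) (r • v) = r • V.G.proj j v :=
  V.G.commutes V.G (DistribSMul.toAddMonoidHom V.V r) (fun j => c * a + j)
    (add_right_injective _) (fun j x hx => V.smul_mem a j r hr x hx) j v

theorem proj_smul' (V : GM K R 𝒜 c) {a : ℤ} {r : R} (hr : r ∈ 𝒜 a) (j : ℤ) (v : V.V) :
    V.G.proj j (r • v) = r • V.G.proj (j - c * a) v := by
  have := V.proj_smul hr (j - c * a) v
  rwa [add_sub_cancel] at this

/-- homogeneous submodules -/
def Hom (V : GM K R 𝒜 c) (N : Submodule R V.V) : Prop := ∀ j, ∀ x ∈ N, V.G.proj j x ∈ N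

/-- quotient -/
def quot (V : GM K R 𝒜 c) (N : Submodule R V.V) (hN : V.Hom N) : GM K R 𝒜 c where
  V := V.V ⧸ N
  gr := fun j => (V.gr j).map (N.mkQ.restrictScalars K)
  G := V.G.surj (N.mkQ.restrictScalars K) N.mkQ_surjective (fun j x hx => by
    simp only [LinearMap.restrictScalars_apply, Submodule.mkQ_apply,
      Submodule.Quotient.mk_eq_zero] at *
    exact hN j x hx)
  smul_mem := fun a b r hr x hx => by
    obtain ⟨x, hx, rfl⟩ := hx
    exact ⟨r • x, V.smul_mem a b r hr x hx, rfl⟩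

/-- the ring modulo an ideal -/
def ringQuot (𝒜 : ℤ → Submodule K R) [GradedAlgebra 𝒜] (P : Ideal R) (hP : P.IsHomogeneous 𝒜) :
    GM K R 𝒜 1 where
  V := R ⧸ P
  gr := fun j => (𝒜 j).map (P.mkQ.restrictScalars K)
  G := (Gr.ofDecomposition 𝒜).surj (P.mkQ.restrictScalars K) P.mkQ_surjective (fun j x hx => by
    simp only [LinearMap.restrictScalars_apply, Submodule.mkQ_apply,
      Submodule.Quotient.mk_eq_zero] at *
    exact hP j hx)
  smul_mem := fun a b r hr x hx => by
    obtain ⟨x, hx, rfl⟩ := hx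
    refine ⟨r * x, ?_, rfl⟩
    rw [one_mul]
    exact SetLike.mul_mem_graded hr hx

/-- rescale degrees -/
def rescale (V : GM K R 𝒜 1) (c : ℤ) (hc : c ≠ 0) (b : ℤ) : GM K R 𝒜 c where
  V := V.V
  gr := fun j => if c ∣ j - b then V.gr ((j - b) / c) else ⊥
  G :=
    { proj := fun j => if c ∣ j - b then V.G.proj ((j - b) / c) else 0
      mem := fun j x => by
        split_ifs
        · exact V.G.mem _ _
        · simp
      same := fun j x hx => by
        split_ifs at hx ⊢
        · exact V.G.same _ _ hx
        · simpa using hx.symm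
      ne := fun i j x hij hx => by
        split_ifs at hx ⊢ with h1 h2
        · refine V.G.ne _ _ _ ?_ hx
          intro h
          apply hij
          have h3 := Int.ediv_mul_cancel h1
          have h4 := Int.ediv_mul_cancel h2
          rw [← h] at h3
          linarith
        · have : x = 0 := by simpa using hx
          simp [this]
        · simp
        · simp
      fin := fun x => by
        obtain ⟨s, hs⟩ := V.G.fin x
        refine ⟨s.image (fun a => c * a + b), ?_⟩
        rw [Finset.sum_image]
        · simp only [add_sub_cancel_right, dvd_mul_right, if_true]
          simp only [Int.mul_ediv_cancel_left _ hc]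
          exact hs
        · intro a _ a' _ h
          simp only [add_left_inj] at h
          exact mul_left_cancel₀ hc h }
  smul_mem := fun a j r hr x hx => by
    split_ifs at hx with h1
    · have h2 : c ∣ c * a + j - b := by
        rw [add_sub_assoc]; exact dvd_add (dvd_mul_right _ _) h1
      rw [if_pos h2]
      have h3 : (c * a + j - b) / c = 1 * a + (j - b) / c := by
        rw [add_sub_assoc, Int.add_ediv_of_dvd_left (dvd_mul_right _ _),
          Int.mul_ediv_cancel_left _ hc, one_mul]
      rw [h3]
      exact V.smul_mem _ _ r hr x hx
    · have : x = 0 := by simpa using hx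
      simp [this]

/-- Frobenius pushforward -/
def frb (V : GM K R 𝒜 1) [GradedAlgebra 𝒜] (p e : ℕ) [ExpChar K p] [ExpChar R p] [PerfectRing K p]
    [Algebra.FiniteType K R] : GM K R 𝒜 ((p : ℤ) ^ e) where
  V := Frb p e V.V
  finite := Frb.finite K p e
  gr := fun j => Frb.piece p e (V.gr j)
  G :=
    { proj := fun j =>
        { toFun := fun x => Frb.of p e V.V (V.G.proj j ((Frb.of p e V.V).symm x))
          map_add' := by simp
          map_smul' := fun a m => by
            obtain ⟨m, rfl⟩ := (Frb.of p e V.V).surjective m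
            rw [Frb.smul_of]; simp [Frb.smul_of] }
      mem := fun j x => V.G.mem j _
      same := fun j x hx => V.G.same j x hx
      ne := fun i j x hij hx => V.G.ne i j x hij hx
      fin := fun x => V.G.fin x }
  smul_mem := fun a b r hr x hx => by
    obtain ⟨x, rfl⟩ := (Frb.of p e V.V).surjective x
    rw [Frb.smul_of, Frb.mem_piece] at *
    have h : r ^ p ^ e ∈ 𝒜 ((p ^ e : ℕ) • a) := SetLike.pow_mem_graded _ hr
    have := V.smul_mem _ _ _ h x hx
    simpa using this

end GM

end

section
set_option linter.style.haveILetI false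
set_option linter.unusedSectionVars false

namespace GM
variable {K R : Type} [Field K] [CommRing R] [Algebra K R] {𝒜 : ℤ → Submodule K R} [GradedAlgebra 𝒜]
  {c : ℤ} {I : Ideal R} {p : ℕ}

theorem bracket_span (H : FPH K p 𝒜 I) [ExpChar R p] (n : ℕ) : ∃ S : Set R,
    bracketPow I (p ^ n) = Ideal.span S ∧ ∀ a ∈ S, ∃ j, a ∈ 𝒜 j := by
  obtain ⟨S, hS, hj⟩ := H.hom
  refine ⟨(fun x => x ^ p ^ n) '' S, ?_, ?_⟩
  · apply le_antisymm
    · unfold bracketPow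
      rw [Ideal.span_le]
      rintro _ ⟨a, ha, rfl⟩
      have : I ≤ (Ideal.span ((fun x => x ^ p ^ n) '' S)).comap (iterateFrobenius R p n) := by
        rw [hS, Ideal.span_le]
        intro s hs
        exact Ideal.subset_span ⟨s, hs, rfl⟩
      exact this ha
    · refine Ideal.span_mono (Set.image_mono ?_)
      rw [hS]; exact Ideal.subset_span
  · rintro _ ⟨a, ha, rfl⟩
    obtain ⟨j, hj⟩ := hj a ha
    exact ⟨_, SetLike.pow_mem_graded _ hj⟩

theorem fpQ_hom (V : GM K R 𝒜 c) (H : FPH K p 𝒜 I) [ExpChar R p] (n : ℕ) :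
    V.Hom (fpQ I p n V.V) := by
  obtain ⟨S, hS, hSj⟩ := bracket_span H n
  intro j x hx
  refine Submodule.smul_induction_on hx ?_ ?_
  · intro r hr v _
    have hr' := hr
    rw [hS] at hr'
    clear hr hx
    induction hr' using Submodule.span_induction generalizing v with
    | mem r hr =>
      obtain ⟨a, ha⟩ := hSj r hr
      rw [V.proj_smul' ha]
      exact Submodule.smul_mem_smul (hS ▸ Ideal.subset_span hr) trivial
    | zero => simp
    | add x y _ _ hx hy => rw [add_smul, map_add]; exact add_mem (hx v trivial) (hy v trivial)
    | smul b x _ hx => rw [smul_eq_mul, mul_comm, mul_smul]; exact hx _ trivial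
  · intro x y hx hy
    rw [map_add]; exact add_mem hx hy

/-- graded dimension of `V / I^{[p^n]} V` -/
def h (V : GM K R 𝒜 c) (I : Ideal R) (p n : ℕ) (j : ℤ) : ℕ := quotPieceDim K V.gr (fpQ I p n V.V) j

/-- total dimension -/
def lam (V : GM K R 𝒜 c) (I : Ideal R) (p n : ℕ) : ℕ := Module.finrank K (V.V ⧸ fpQ I p n V.V)

/-- exponential sum -/
def HH (V : GM K R 𝒜 c) (I : Ideal R) (p n : ℕ) (w : ℂ) : ℂ :=
  ∑' j : ℤ, (V.h I p n j : ℂ) * Complex.exp (-Complex.I * w * j)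

theorem exists_hom_gens (V : GM K R 𝒜 c) : ∃ (m : ℕ) (v : Fin m → V.V) (b : Fin m → ℤ),
    (∀ i, v i ∈ V.gr (b i)) ∧ Submodule.span R (Set.range v) = ⊤ := by
  classical
  obtain ⟨S, hS⟩ := Module.Finite.fg_top (R := R) (M := V.V)
  choose s hs using V.G.fin
  let T : Finset (V.V × ℤ) := S.biUnion (fun x => (s x).image (fun j => (x, j)))
  let e := T.equivFin
  refine ⟨T.card, fun i => V.G.proj (e.symm i).1.2 (e.symm i).1.1, fun i => (e.symm i).1.2,
    fun i => V.G.mem _ _, ?_⟩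
  rw [eq_top_iff, ← hS, Submodule.span_le]
  intro x hx
  rw [← hs x]
  refine sum_mem (fun j hj => Submodule.subset_span ?_)
  have hT : (x, j) ∈ T := by
    simp only [T, Finset.mem_biUnion, Finset.mem_image]
    exact ⟨x, hx, j, hj, rfl⟩
  exact ⟨e ⟨_, hT⟩, by simp⟩

theorem support (V : GM K R 𝒜 c) (H : FPH K p 𝒜 I) [ExpChar R p] :
    ∃ L : ℕ, ∀ n : ℕ, ∀ j : ℤ, (L * p ^ n : ℤ) < |j| → V.h I p n j = 0 := by
  obtain ⟨m, v, b, hv, hspan⟩ := V.exists_hom_gens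
  obtain ⟨r, x, w, C, hC, hx, hxw, hxC⟩ := H.gen
  let L : ℤ := |c| * ∑ l, |w l| * C + ∑ i, |b i|
  have hL0 : 0 ≤ L := by positivity
  refine ⟨L.toNat, fun n j hj => ?_⟩
  rw [Int.toNat_of_nonneg hL0] at hj
  have hp1 : (1 : ℤ) ≤ (p : ℤ) ^ n := by
    exact_mod_cast Nat.pow_pos H.prime.pos
  have key : ∀ u : V.V, V.G.proj j u ∈ fpQ I p n V.V := by
    -- monomials
    have mono : ∀ (i : Fin m) (d : Fin r → ℕ), V.G.proj j ((∏ l, x l ^ d l) • v i) ∈ fpQ I p n V.V := by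
      intro i d
      by_cases hd : ∃ l, C * p ^ n ≤ d l
      · obtain ⟨l, hl⟩ := hd
        refine V.fpQ_hom H n j _ (Submodule.smul_mem_smul ?_ trivial)
        refine Ideal.mem_of_dvd _ ?_ (fp_pow_mem_bracket (hxC l) (p ^ n))
        exact (pow_dvd_pow _ hl).trans (Finset.dvd_prod_of_mem (fun l => x l ^ d l) (Finset.mem_univ l))
      · push Not at hd
        have hdeg : (∏ l, x l ^ d l) ∈ 𝒜 (∑ l, d l • w l) :=
          SetLike.prod_mem_graded _ _ _ (fun l _ => SetLike.pow_mem_graded _ (hxw l))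
        have h1 := V.smul_mem _ _ _ hdeg _ (hv i)
        rw [V.G.ne _ j _ ?_ h1]
        · simp
        · intro he
          have h2 : |∑ l, d l • w l| ≤ ∑ l, |w l| * C * p ^ n := by
            refine (Finset.abs_sum_le_sum_abs _ _).trans (Finset.sum_le_sum fun l _ => ?_)
            rw [nsmul_eq_mul, abs_mul, Nat.abs_cast]
            have : (d l : ℤ) ≤ C * p ^ n := by exact_mod_cast (hd l).le
            nlinarith [abs_nonneg (w l)]
          have h3 : |b i| ≤ ∑ i, |b i| :=
            Finset.single_le_sum (f := fun i => |b i|) (fun _ _ => abs_nonneg _) (Finset.mem_univ i)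
          have h4 : |j| ≤ |c| * |∑ l, d l • w l| + |b i| := by
            rw [← he, ← abs_mul]; exact abs_add_le _ _
          have h5 : ∑ l, |w l| * C * (p : ℤ) ^ n = (∑ l, |w l| * C) * p ^ n := by
            rw [Finset.sum_mul]
          rw [h5] at h2
          have h6 : |c| * |∑ l, d l • w l| ≤ |c| * ((∑ l, |w l| * C) * p ^ n) :=
            mul_le_mul_of_nonneg_left h2 (abs_nonneg _)
          have h7 : (0 : ℤ) ≤ ∑ i, |b i| := by positivity
          have h8 : L * (p : ℤ) ^ n = |c| * ((∑ l, |w l| * C) * p ^ n) + (∑ i, |b i|) * p ^ n := by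
            simp only [L]; ring
          nlinarith
    have all : ∀ (i : Fin m) (a : R), V.G.proj j (a • v i) ∈ fpQ I p n V.V := by
      intro i a
      have ha : a ∈ Algebra.adjoin K (Set.range x) := hx ▸ trivial
      rw [Algebra.adjoin_range_eq_range_aeval] at ha
      obtain ⟨f, rfl⟩ := ha
      have : (MvPolynomial.aeval x) f = ∑ d ∈ f.support, f.coeff d • ∏ l, x l ^ d l := by
        rw [MvPolynomial.aeval_def, MvPolynomial.eval₂_eq']
        simp [Algebra.smul_def]
      have h2 : (MvPolynomial.aeval x).toRingHom f = (MvPolynomial.aeval x) f := rfl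
      rw [h2, this, Finset.sum_smul, map_sum]
      refine sum_mem (fun d _ => ?_)
      rw [smul_assoc, map_smul]
      have h3 := mono i d
      rw [← algebraMap_smul R]
      exact Submodule.smul_mem _ _ h3
    intro u
    have hu : u ∈ Submodule.span R (Set.range v) := hspan ▸ trivial
    rw [Submodule.mem_span_range_iff_exists_fun] at hu
    obtain ⟨a, rfl⟩ := hu
    rw [map_sum]
    exact sum_mem (fun i _ => all i (a i))
  unfold h quotPieceDim
  have : (V.gr j).map ((fpQ I p n V.V).mkQ.restrictScalars K) = ⊥ := by
    rw [eq_bot_iff]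
    rintro _ ⟨u, hu, rfl⟩
    have := key u
    rw [V.G.same j u hu] at this
    simpa using this
  rw [this, finrank_bot]

end GM

end

section
set_option linter.style.haveILetI false
set_option linter.unusedSectionVars false

namespace GM
variable {K R : Type} [Field K] [CommRing R] [Algebra K R] {𝒜 : ℤ → Submodule K R} [GradedAlgebra 𝒜]
  {c : ℤ} {I : Ideal R} {p : ℕ}

/-- Krull dimension at most `d` -/
def DimLE (V : GM K R 𝒜 c) (d : ℕ) : Prop := ringKrullDim (R ⧸ Module.annihilator R V.V) ≤ d

theorem finite_quot (V : GM K R 𝒜 c) (H : FPH K p 𝒜 I) {d : ℕ} (hd : V.DimLE d) (n : ℕ) :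
    Module.Finite K (V.V ⧸ fpQ I p n V.V) := by
  obtain ⟨C, hC⟩ := H.bound V.V d hd
  exact (hC n _ le_rfl).1

theorem sum_h (V : GM K R 𝒜 c) (H : FPH K p 𝒜 I) [ExpChar R p] {d : ℕ} (hd : V.DimLE d) (n : ℕ)
    (s : Finset ℤ) (hs : ∀ j, j ∉ s → V.h I p n j = 0) :
    ∑ j ∈ s, V.h I p n j = V.lam I p n := by
  have hfin := V.finite_quot H hd n
  have G := (V.quot (fpQ I p n V.V) (V.fpQ_hom H n)).G
  have hfin' : Module.Finite K (V.quot (fpQ I p n V.V) (V.fpQ_hom H n)).V := hfin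
  exact G.finrank_sum s (fun j hj => Submodule.finrank_eq_zero.1 (hs j hj))

theorem h_subadd (V' V V'' : GM K R 𝒜 c) (H : FPH K p 𝒜 I) [ExpChar R p] {d : ℕ} (hd : V.DimLE d)
    (hd' : V'.DimLE d) (hd'' : V''.DimLE d)
    (f : V'.V →ₗ[R] V.V) (g : V.V →ₗ[R] V''.V) (hg : Function.Surjective g)
    (hfg : LinearMap.range f = LinearMap.ker g)
    (hfdeg : ∀ j, ∀ x ∈ V'.gr j, f x ∈ V.gr j) (hgdeg : ∀ j, ∀ x ∈ V.gr j, g x ∈ V''.gr j)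
    (n : ℕ) (j : ℤ) : V.h I p n j ≤ V'.h I p n j + V''.h I p n j := by
  have := V.finite_quot H hd n
  have := V'.finite_quot H hd' n
  have := V''.finite_quot H hd'' n
  let a := (Submodule.mapQ (fpQ I p n V'.V) (fpQ I p n V.V) f (fpQ_map_le I p n f)).restrictScalars K
  let b := (Submodule.mapQ (fpQ I p n V.V) (fpQ I p n V''.V) g (fpQ_map_le I p n g)).restrictScalars K
  let U := (V.gr j).map ((fpQ I p n V.V).mkQ.restrictScalars K)
  let U' := (V'.gr j).map ((fpQ I p n V'.V).mkQ.restrictScalars K)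
  let U'' := (V''.gr j).map ((fpQ I p n V''.V).mkQ.restrictScalars K)
  have h1 := LinearMap.finrank_range_add_finrank_ker (b.domRestrict U)
  have h2 : Module.finrank K (LinearMap.range (b.domRestrict U)) ≤ Module.finrank K U'' := by
    apply Submodule.finrank_mono
    rintro _ ⟨⟨_, x, hx, rfl⟩, rfl⟩
    exact ⟨g x, hgdeg j x hx, rfl⟩
  have h3 : Module.finrank K (LinearMap.ker (b.domRestrict U)) ≤ Module.finrank K U' := by
    have h4 : (LinearMap.ker (b.domRestrict U)).map U.subtype ≤ U'.map a := by
      rintro _ ⟨⟨_, x, hx, rfl⟩, hk, rfl⟩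
      have hk' : g x ∈ fpQ I p n V''.V := by
        have : b ((fpQ I p n V.V).mkQ x) = 0 := hk
        simpa [b] using this
      have hmap : fpQ I p n V''.V = (fpQ I p n V.V).map g := by
        rw [Submodule.map_smul'', Submodule.map_top, LinearMap.range_eq_top.2 hg]
      rw [hmap] at hk'
      obtain ⟨q, hq, hgq⟩ := hk'
      have : x - q ∈ LinearMap.range f := by
        rw [hfg, LinearMap.mem_ker, map_sub, hgq, sub_self]
      obtain ⟨m, hm⟩ := this
      have hc : V.G.proj j (f m) = f (V'.G.proj j m) :=
        V'.G.commutes V.G f.toAddMonoidHom id Function.injective_id hfdeg j m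
      rw [hm, map_sub, V.G.same j x hx] at hc
      refine ⟨(fpQ I p n V'.V).mkQ (V'.G.proj j m), ⟨_, V'.G.mem j m, rfl⟩, ?_⟩
      have hq' := V.fpQ_hom H n j q hq
      have e1 : a ((fpQ I p n V'.V).mkQ (V'.G.proj j m)) = (fpQ I p n V.V).mkQ (f (V'.G.proj j m)) := rfl
      rw [e1, ← hc, map_sub]
      have : (fpQ I p n V.V).mkQ (V.G.proj j q) = 0 := by simpa using hq'
      rw [this, sub_zero]; rfl
    calc _ = Module.finrank K ((LinearMap.ker (b.domRestrict U)).map U.subtype) :=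
          (Submodule.finrank_map_subtype_eq _ _).symm
      _ ≤ Module.finrank K (U'.map a) := Submodule.finrank_mono h4
      _ ≤ _ := Submodule.finrank_map_le _ _
  have e : V.h I p n j = Module.finrank K U := rfl
  have e' : V'.h I p n j = Module.finrank K U' := rfl
  have e'' : V''.h I p n j = Module.finrank K U'' := rfl
  omega

theorem exp_bound (p n : ℕ) (hp : p.Prime) (L : ℕ) (Y : ℝ) (w : ℂ) (hw : ‖w‖ ≤ Y / (p : ℝ) ^ n)
    (j : ℤ) (hj : |j| ≤ (L * p ^ n : ℤ)) :
    ‖Complex.exp (-Complex.I * w * j)‖ ≤ Real.exp (L * Y) := by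
  rw [Complex.norm_exp]
  apply Real.exp_le_exp.2
  refine (Complex.re_le_norm _).trans ?_
  rw [norm_mul, norm_mul, norm_neg, Complex.norm_I, one_mul]
  have hp0 : (0 : ℝ) < (p : ℝ) ^ n := by have := hp.pos; positivity
  have h1 : ‖(j : ℂ)‖ ≤ L * (p : ℝ) ^ n := by
    rw [Complex.norm_intCast]
    exact_mod_cast hj
  calc ‖w‖ * ‖(j : ℂ)‖ ≤ (Y / (p : ℝ) ^ n) * (L * (p : ℝ) ^ n) :=
        mul_le_mul hw h1 (norm_nonneg _) ((norm_nonneg _).trans hw)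
    _ = L * Y := by field_simp

theorem HH_eq_sum (V : GM K R 𝒜 c) (n : ℕ) (w : ℂ) (s : Finset ℤ)
    (hs : ∀ j, j ∉ s → V.h I p n j = 0) :
    V.HH I p n w = ∑ j ∈ s, (V.h I p n j : ℂ) * Complex.exp (-Complex.I * w * j) :=
  tsum_eq_sum (fun j hj => by simp [hs j hj])

theorem HH_le (V : GM K R 𝒜 c) (H : FPH K p 𝒜 I) [ExpChar R p] {d : ℕ} (hd : V.DimLE d) (Y : ℝ) :
    ∃ B : ℝ, 0 ≤ B ∧ ∀ n w, ‖w‖ ≤ Y / (p : ℝ) ^ n → ‖V.HH I p n w‖ ≤ B * V.lam I p n := by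
  obtain ⟨L, hL⟩ := V.support H
  refine ⟨Real.exp (L * Y), (Real.exp_pos _).le, fun n w hw => ?_⟩
  let s := Finset.Icc (-(L * p ^ n : ℤ)) (L * p ^ n)
  have hs : ∀ j, j ∉ s → V.h I p n j = 0 := fun j hj => hL n j (by
    by_contra hh
    exact hj (Finset.mem_Icc.2 (abs_le.1 (not_lt.1 hh))))
  rw [V.HH_eq_sum n w s hs, ← V.sum_h H hd n s hs]
  push_cast
  rw [Finset.mul_sum]
  refine (norm_sum_le _ _).trans (Finset.sum_le_sum fun j hj => ?_)
  rw [norm_mul, mul_comm]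
  have := exp_bound p n H.prime L Y w hw j (abs_le.2 (Finset.mem_Icc.1 hj))
  simp only [RCLike.norm_natCast]
  exact mul_le_mul_of_nonneg_right this (Nat.cast_nonneg _)

theorem HH_big (V : GM K R 𝒜 c) (H : FPH K p 𝒜 I) [ExpChar R p] {d : ℕ} (hd : V.DimLE d) (Y : ℝ) :
    ∃ B : ℝ, 0 ≤ B ∧ ∀ n w, ‖w‖ ≤ Y / (p : ℝ) ^ n → ‖V.HH I p n w‖ ≤ B * ((p : ℝ) ^ n) ^ d := by
  obtain ⟨B, hB, h1⟩ := V.HH_le H hd Y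
  obtain ⟨C, hC⟩ := H.bound V.V d hd
  refine ⟨B * C, by positivity, fun n w hw => (h1 n w hw).trans ?_⟩
  rw [mul_assoc]
  refine mul_le_mul_of_nonneg_left ?_ hB
  exact_mod_cast (hC n _ le_rfl).2

theorem HH_small (V : GM K R 𝒜 c) (H : FPH K p 𝒜 I) [ExpChar R p] {d : ℕ}
    (hd : ringKrullDim (R ⧸ Module.annihilator R V.V) + 1 ≤ d) (Y : ℝ) :
    ∃ B : ℝ, 0 ≤ B ∧ ∀ n w, ‖w‖ ≤ Y / (p : ℝ) ^ n → ‖V.HH I p n w‖ ≤ B * fpE p d n := by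
  have hd' : V.DimLE d := by
    refine le_trans ?_ hd
    cases h : ringKrullDim (R ⧸ Module.annihilator R V.V) with
    | bot => exact bot_le
    | coe a => exact_mod_cast (le_self_add : a ≤ a + 1)
  obtain ⟨B, hB, h1⟩ := V.HH_le H hd' Y
  obtain ⟨C, hC0, hC⟩ := H.bound_small V.V d hd
  refine ⟨B * C, by positivity, fun n w hw => (h1 n w hw).trans ?_⟩
  rw [mul_assoc]
  exact mul_le_mul_of_nonneg_left (hC n _ le_rfl) hB

theorem ses (V' V V'' : GM K R 𝒜 c) (H : FPH K p 𝒜 I) [ExpChar R p] [ExpChar K p] [PerfectRing K p]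
    {d : ℕ} (hd : V.DimLE d) (f : V'.V →ₗ[R] V.V) (g : V.V →ₗ[R] V''.V)
    (hf : Function.Injective f) (hg : Function.Surjective g)
    (hfg : LinearMap.range f = LinearMap.ker g)
    (hfdeg : ∀ j, ∀ x ∈ V'.gr j, f x ∈ V.gr j) (hgdeg : ∀ j, ∀ x ∈ V.gr j, g x ∈ V''.gr j) (Y : ℝ) :
    ∃ B : ℝ, 0 ≤ B ∧ ∀ n w, ‖w‖ ≤ Y / (p : ℝ) ^ n →
      ‖V.HH I p n w - V'.HH I p n w - V''.HH I p n w‖ ≤ B * fpE p d n := by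
  have hd' : V'.DimLE d := (ringKrullDim_le_of_surjective _
    (Ideal.Quotient.factor_surjective (f.annihilator_le_of_injective hf))).trans hd
  have hd'' : V''.DimLE d := (ringKrullDim_le_of_surjective _
    (Ideal.Quotient.factor_surjective (g.annihilator_le_of_surjective hg))).trans hd
  obtain ⟨C, hC0, hC⟩ := H.lemma2b V'.V V.V V''.V f g hf hg (fun x => by
    have : f x ∈ LinearMap.ker g := hfg ▸ ⟨x, rfl⟩
    exact this) d hd
  obtain ⟨L, hL⟩ := V.support H
  obtain ⟨L', hL'⟩ := V'.support H
  obtain ⟨L'', hL''⟩ := V''.support H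
  refine ⟨Real.exp ((L + L' + L'' : ℕ) * Y) * C, by positivity, fun n w hw => ?_⟩
  let N : ℕ := L + L' + L''
  let s := Finset.Icc (-(N * p ^ n : ℤ)) (N * p ^ n)
  have hs0 : ∀ j, j ∉ s → ((N * p ^ n : ℕ) : ℤ) < |j| := fun j hj => by
    by_contra hh
    refine hj (Finset.mem_Icc.2 (abs_le.1 ?_))
    exact_mod_cast not_lt.1 hh
  have hle : ∀ m : ℕ, m ≤ N → ∀ j, j ∉ s → (m * p ^ n : ℤ) < |j| := fun m hm j hj => by
    refine lt_of_le_of_lt ?_ (hs0 j hj)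
    exact_mod_cast Nat.mul_le_mul_right _ hm
  have hs : ∀ j, j ∉ s → V.h I p n j = 0 := fun j hj => hL n j (hle L (by omega) j hj)
  have hs' : ∀ j, j ∉ s → V'.h I p n j = 0 := fun j hj => hL' n j (hle L' (by omega) j hj)
  have hs'' : ∀ j, j ∉ s → V''.h I p n j = 0 := fun j hj => hL'' n j (hle L'' (by omega) j hj)
  rw [V.HH_eq_sum n w s hs, V'.HH_eq_sum n w s hs', V''.HH_eq_sum n w s hs'',
    ← Finset.sum_sub_distrib, ← Finset.sum_sub_distrib]
  have hsum : ∑ j ∈ s, ((V'.h I p n j : ℝ) + V''.h I p n j - V.h I p n j) ≤ C * fpE p d n := by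
    rw [Finset.sum_sub_distrib, Finset.sum_add_distrib]
    have h1 := V.sum_h H hd n s hs
    have h2 := V'.sum_h H hd' n s hs'
    have h3 := V''.sum_h H hd'' n s hs''
    have h4 := hC n
    rw [← Nat.cast_sum, ← Nat.cast_sum, ← Nat.cast_sum, h1, h2, h3]
    unfold lam
    linarith
  rw [mul_assoc]
  refine le_trans ?_ (mul_le_mul_of_nonneg_left hsum (Real.exp_pos _).le)
  rw [Finset.mul_sum]
  refine (norm_sum_le _ _).trans (Finset.sum_le_sum fun j hj => ?_)
  have hb := exp_bound p n H.prime N Y w hw j (abs_le.2 (Finset.mem_Icc.1 hj))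
  have hsub := h_subadd V' V V'' H hd hd' hd'' f g hg hfg hfdeg hgdeg n j
  have hsub' : (V.h I p n j : ℝ) ≤ V'.h I p n j + V''.h I p n j := by exact_mod_cast hsub
  have e : (V.h I p n j : ℂ) * Complex.exp (-Complex.I * w * j) -
      (V'.h I p n j : ℂ) * Complex.exp (-Complex.I * w * j) -
      (V''.h I p n j : ℂ) * Complex.exp (-Complex.I * w * j) =
      -((((V'.h I p n j : ℝ) + V''.h I p n j - V.h I p n j : ℝ) : ℂ) *
        Complex.exp (-Complex.I * w * j)) := by push_cast; ring
  rw [e, norm_neg, norm_mul, Complex.norm_real, Real.norm_of_nonneg (by linarith), mul_comm]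
  exact mul_le_mul_of_nonneg_right hb (by linarith)

end GM

end

section
set_option linter.style.haveILetI false
set_option linter.unusedSectionVars false

namespace GM
variable {K R : Type} [Field K] [CommRing R] [Algebra K R] {𝒜 : ℤ → Submodule K R} [GradedAlgebra 𝒜]
  {c : ℤ} {I : Ideal R} {p : ℕ}

theorem hom_span (V : GM K R 𝒜 c) {x : V.V} {b : ℤ} (hx : x ∈ V.gr b) :
    V.Hom (Submodule.span R {x}) := by
  intro j y hy
  obtain ⟨r, rfl⟩ := Submodule.mem_span_singleton.1 hy
  refine (Gr.ofDecomposition 𝒜).induct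
    (P := fun r => V.G.proj j (r • x) ∈ Submodule.span R {x}) r (by simp) ?_ ?_
  · intro r s hr hs
    simp only [add_smul, map_add]
    exact add_mem hr hs
  · intro a r hr
    rw [V.proj_smul' hr]
    apply Submodule.smul_mem
    by_cases h : b = j - c * a
    · rw [← h, V.G.same b x hx]; exact Submodule.mem_span_singleton_self x
    · rw [V.G.ne _ _ _ h hx]; exact zero_mem _

/-- annihilator of an element -/
def annx (V : GM K R 𝒜 c) (x : V.V) : Ideal R := LinearMap.ker (LinearMap.toSpanSingleton R V.V x)

theorem mem_annx (V : GM K R 𝒜 c) (x : V.V) (r : R) : r ∈ V.annx x ↔ r • x = 0 := Iff.rfl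

theorem ann_hom (hc : c ≠ 0) (V : GM K R 𝒜 c) {x : V.V} {b : ℤ} (hx : x ∈ V.gr b) :
    Ideal.IsHomogeneous 𝒜 (V.annx x) := by
  intro i r hr
  have hr' : r • x = 0 := hr
  have := (Gr.ofDecomposition 𝒜).commutes V.G (LinearMap.toSpanSingleton R V.V x).toAddMonoidHom
    (fun i => c * i + b) (fun i j h => by
      simp only [add_left_inj] at h; exact mul_left_cancel₀ hc h)
    (fun j s hs => V.smul_mem j b s hs x hx) i r
  have e : (LinearMap.toSpanSingleton R V.V x).toAddMonoidHom r = r • x := rfl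
  rw [e, hr', map_zero] at this
  exact this.symm

theorem exists_prime [IsNoetherianRing R] (hc : c ≠ 0) (V : GM K R 𝒜 c) (hV : ¬ Subsingleton V.V) :
    ∃ (x : V.V) (b : ℤ), x ∈ V.gr b ∧
      (V.annx x).IsPrime := by
  let S : Set (Ideal R) := {J | ∃ (x : V.V) (b : ℤ), x ≠ 0 ∧ x ∈ V.gr b ∧
    J = V.annx x}
  have hS : S.Nonempty := by
    rw [not_subsingleton_iff_nontrivial] at hV
    obtain ⟨y, hy⟩ := exists_ne (0 : V.V)
    have : ∃ j, V.G.proj j y ≠ 0 := by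
      by_contra! h
      exact hy (V.G.eq_zero y h)
    obtain ⟨j, hj⟩ := this
    exact ⟨_, _, j, hj, V.G.mem j y, rfl⟩
  obtain ⟨J, ⟨x, b, hx0, hx, rfl⟩, hmax⟩ := set_has_maximal_iff_noetherian.2
    (inferInstance : IsNoetherian R R) S hS
  refine ⟨x, b, hx, ?_⟩
  refine (V.ann_hom hc hx).isPrime_of_homogeneous_mem_or_mem ?_ ?_
  · intro h
    have : (1 : R) ∈ V.annx x := h ▸ trivial
    apply hx0
    simpa [mem_annx] using this
  · rintro a r ⟨i, ha⟩ ⟨j, hr⟩ har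
    by_cases hrx : r • x = 0
    · exact Or.inr hrx
    · left
      have hle : V.annx x ≤
          V.annx (r • x) := by
        intro s hs
        have hs' : s • x = 0 := hs
        change s • r • x = 0
        rw [smul_comm, hs', smul_zero]
      have hmem : a ∈ V.annx (r • x) := by
        change a • r • x = 0
        rw [← mul_smul]; exact har
      by_contra hna
      exact hmax _ ⟨r • x, _, hrx, V.smul_mem _ _ r hr x hx, rfl⟩
        (lt_of_le_of_ne hle (fun h => hna (h ▸ hmem)))

theorem devissage [IsNoetherianRing R] (hc : c ≠ 0) (Pr : GM K R 𝒜 c → Prop)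
    (h0 : ∀ V : GM K R 𝒜 c, Subsingleton V.V → Pr V)
    (hstep : ∀ (V : GM K R 𝒜 c) (x : V.V) (b : ℤ) (hx : x ∈ V.gr b),
      (V.annx x).IsPrime →
      Pr (V.quot _ (V.hom_span hx)) → Pr V) (V : GM K R 𝒜 c) : Pr V := by
  have : IsNoetherian R V.V := isNoetherian_of_isNoetherianRing_of_finite R V.V
  have key : ∀ N : Submodule R V.V, ∀ W : GM K R 𝒜 c, ∀ π : V.V →ₗ[R] W.V,
      Function.Surjective π → LinearMap.ker π = N → Pr W := by
    intro N
    induction N using WellFoundedGT.induction with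
    | ind N ih =>
      intro W π hπ hk
      by_cases hW : Subsingleton W.V
      · exact h0 W hW
      obtain ⟨x, b, hx, hP⟩ := W.exists_prime hc hW
      refine hstep W x b hx hP ?_
      refine ih (LinearMap.ker ((Submodule.mkQ (Submodule.span R {x})) ∘ₗ π)) ?_
        (W.quot _ (W.hom_span hx)) ((Submodule.mkQ (Submodule.span R {x})) ∘ₗ π)
        ((Submodule.mkQ_surjective _).comp hπ) rfl
      obtain ⟨y, rfl⟩ := hπ x
      refine lt_of_le_of_ne ?_ ?_
      · rw [← hk]; exact LinearMap.ker_le_ker_comp _ _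
      · intro h
        have hy : y ∈ N := by
          rw [h, LinearMap.mem_ker, LinearMap.comp_apply, Submodule.mkQ_apply,
            Submodule.Quotient.mk_eq_zero]
          exact Submodule.mem_span_singleton_self _
        rw [← hk] at hy
        apply hP.ne_top
        have hy' : π y = 0 := hy
        rw [hy', Ideal.eq_top_iff_one, mem_annx, smul_zero]
  exact key ⊥ V LinearMap.id Function.surjective_id (LinearMap.ker_id)

theorem h_rescale (V : GM K R 𝒜 1) (hc : c ≠ 0) (b : ℤ) (n : ℕ) (j : ℤ) :
    (V.rescale c hc b).h I p n j = if c ∣ j - b then V.h I p n ((j - b) / c) else 0 := by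
  split_ifs with hj
  · simp only [h, quotPieceDim]
    have : (V.rescale c hc b).gr j = V.gr ((j - b) / c) := if_pos hj
    rw [this]; rfl
  · simp only [h, quotPieceDim]
    have : (V.rescale c hc b).gr j = ⊥ := if_neg hj
    rw [this, Submodule.map_bot, finrank_bot]

theorem HH_rescale (V : GM K R 𝒜 1) (hc : c ≠ 0) (b : ℤ) (n : ℕ) (w : ℂ) :
    (V.rescale c hc b).HH I p n w = Complex.exp (-Complex.I * w * b) * V.HH I p n (c * w) := by
  unfold HH
  have hinj : Function.Injective (fun a : ℤ => c * a + b) := fun i j h => by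
      simp only [add_left_inj] at h; exact mul_left_cancel₀ hc h
  rw [← hinj.tsum_eq, ← tsum_mul_left]
  · congr 1
    ext a
    rw [h_rescale]
    simp only [add_sub_cancel_right, dvd_mul_right, if_true, Int.mul_ediv_cancel_left _ hc]
    have : Complex.exp (-Complex.I * w * ((c * a + b : ℤ) : ℂ)) =
      Complex.exp (-Complex.I * w * b) * Complex.exp (-Complex.I * (c * w) * a) := by
      rw [← Complex.exp_add]; congr 1; push_cast; ring
    rw [this]; ring
  · intro j hj
    rw [Function.mem_support, h_rescale] at hj
    by_cases hd : c ∣ j - b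
    · obtain ⟨a, ha⟩ := hd
      exact ⟨a, by simp only; linarith⟩
    · simp [hd] at hj

theorem cyc (hc : c ≠ 0) (V : GM K R 𝒜 c) (H : FPH K p 𝒜 I) [ExpChar R p] [ExpChar K p]
    [PerfectRing K p] {d : ℕ} (hd : V.DimLE d) (Y : ℝ) {x : V.V} {b : ℤ} (hx : x ∈ V.gr b) :
    ∃ B : ℝ, 0 ≤ B ∧ ∀ n w, ‖w‖ ≤ Y / (p : ℝ) ^ n →
      ‖V.HH I p n w - ((ringQuot 𝒜 _ (V.ann_hom hc hx)).rescale c hc b).HH I p n w -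
        (V.quot _ (V.hom_span hx)).HH I p n w‖ ≤ B * fpE p d n := by
  let P : Ideal R := V.annx x
  let f : (R ⧸ P) →ₗ[R] V.V := Submodule.liftQ P (LinearMap.toSpanSingleton R V.V x) le_rfl
  have hf1 : Function.Injective f := by
    rw [← LinearMap.ker_eq_bot]
    exact Submodule.ker_liftQ_eq_bot _ _ _ le_rfl
  have hf2 : LinearMap.range f = LinearMap.ker (Submodule.span R {x}).mkQ := by
    rw [Submodule.ker_mkQ]
    exact (Submodule.range_liftQ _ _ _).trans (LinearMap.range_toSpanSingleton x)
  have hz : ∀ z : R ⧸ P, z ∈ (⊥ : Submodule K (R ⧸ P)) → f z = 0 := fun z hz => by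
    rw [(Submodule.mem_bot K).1 hz, map_zero]
  refine ses ((ringQuot 𝒜 _ (V.ann_hom hc hx)).rescale c hc b) V (V.quot _ (V.hom_span hx)) H hd f
    (Submodule.mkQ _) hf1 (Submodule.mkQ_surjective _) hf2 ?_ ?_ Y
  · intro j y hy
    by_cases hj : c ∣ j - b
    · have hy' : y ∈ (ringQuot 𝒜 _ (V.ann_hom hc hx)).gr ((j - b) / c) := by
        have : ((ringQuot 𝒜 _ (V.ann_hom hc hx)).rescale c hc b).gr j =
          (ringQuot 𝒜 _ (V.ann_hom hc hx)).gr ((j - b) / c) := if_pos hj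
        rw [← this]; exact hy
      obtain ⟨r, hr, rfl⟩ := hy'
      have := V.smul_mem _ _ r hr x hx
      rw [Int.mul_ediv_cancel' hj, sub_add_cancel] at this
      exact this
    · have hy' : y ∈ (⊥ : Submodule K (R ⧸ P)) := by
        have : ((ringQuot 𝒜 _ (V.ann_hom hc hx)).rescale c hc b).gr j = ⊥ := if_neg hj
        rw [this] at hy; exact hy
      exact Set.mem_of_eq_of_mem (hz y hy') (zero_mem (V.gr j))
  · intro j y hy
    exact ⟨y, hy, rfl⟩

end GM

end

section
set_option linter.style.haveILetI false
set_option linter.unusedSectionVars false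

theorem fp_exp_sub_one (z : ℂ) : ‖Complex.exp z - 1‖ ≤ ‖z‖ * Real.exp ‖z‖ := by
  have := Complex.norm_exp_sub_sum_le_norm_mul_exp z 1
  simpa using this

namespace GM
variable {K R : Type} [Field K] [CommRing R] [Algebra K R] {𝒜 : ℤ → Submodule K R} [GradedAlgebra 𝒜]
  {c : ℤ} {I : Ideal R} {p : ℕ}

theorem ann_ringQuot (P : Ideal R) (hP : P.IsHomogeneous 𝒜) :
    Module.annihilator R (ringQuot 𝒜 P hP).V = P := Ideal.annihilator_quotient

theorem ann_rescale (V : GM K R 𝒜 1) (hc : c ≠ 0) (b : ℤ) :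
    Module.annihilator R (V.rescale c hc b).V = Module.annihilator R V.V := rfl

theorem HH_subsingleton (V : GM K R 𝒜 c) (h : Subsingleton V.V) (n : ℕ) (w : ℂ) :
    V.HH I p n w = 0 := by
  have : ∀ j, V.h I p n j = 0 := fun j => by
    have : Subsingleton (V.V ⧸ fpQ I p n V.V) := (Submodule.mkQ_surjective _).subsingleton
    exact Module.finrank_zero_of_subsingleton
  simp [HH, this]

theorem dim_lt {P P' : Ideal R} (hP : P.IsPrime) (hle : P ≤ P') (hne : P ≠ P') {d : ℕ}
    (hd : ringKrullDim (R ⧸ P) ≤ d) : ringKrullDim (R ⧸ P') + 1 ≤ d := by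
  obtain ⟨r, hr, hr'⟩ := SetLike.exists_of_lt (lt_of_le_of_ne hle hne)
  refine le_trans ?_ hd
  refine ringKrullDim_succ_le_of_surjective (Ideal.Quotient.factor hle)
    (Ideal.Quotient.factor_surjective hle) (r := Ideal.Quotient.mk P r) ?_ ?_
  · apply mem_nonZeroDivisors_of_ne_zero
    rwa [Ne, Ideal.Quotient.eq_zero_iff_mem]
  · rw [Ideal.Quotient.factor_mk, Ideal.Quotient.eq_zero_iff_mem]; exact hr

theorem domain_lemma (hc : c ≠ 0) (H : FPH K p 𝒜 I) [ExpChar R p] [ExpChar K p] [PerfectRing K p]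
    [IsNoetherianRing R]
    {P : Ideal R} (hP : P.IsPrime) (hPh : P.IsHomogeneous 𝒜) {d : ℕ}
    (hd : ringKrullDim (R ⧸ P) ≤ d) (Y : ℝ) (hY : 0 ≤ Y) (V : GM K R 𝒜 c) :
    P ≤ Module.annihilator R V.V → ∃ (ρ : ℕ) (B : ℝ), 0 ≤ B ∧ ∀ n w, ‖w‖ ≤ Y / (p : ℝ) ^ n →
      ‖V.HH I p n w - ρ * (ringQuot 𝒜 P hPh).HH I p n (c * w)‖ ≤ B * fpE p d n := by
  refine devissage hc (fun V => P ≤ Module.annihilator R V.V → ∃ (ρ : ℕ) (B : ℝ), 0 ≤ B ∧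
    ∀ n w, ‖w‖ ≤ Y / (p : ℝ) ^ n →
      ‖V.HH I p n w - ρ * (ringQuot 𝒜 P hPh).HH I p n (c * w)‖ ≤ B * fpE p d n) ?_ ?_ V
  · intro V hV _
    refine ⟨0, 0, le_rfl, fun n w _ => ?_⟩
    rw [V.HH_subsingleton hV]; simp
  · intro V x b hx hprime ih hPV
    have hVd : V.DimLE d := (ringKrullDim_le_of_surjective _
      (Ideal.Quotient.factor_surjective hPV)).trans hd
    obtain ⟨ρ, B, hB, hρ⟩ := ih (hPV.trans
      ((Submodule.mkQ (Submodule.span R {x})).annihilator_le_of_surjective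
        (Submodule.mkQ_surjective _)))
    obtain ⟨B1, hB1, h1⟩ := V.cyc hc H hVd Y hx
    have hle : P ≤ V.annx x := fun r hr => by
      rw [mem_annx]
      exact Module.mem_annihilator.1 (hPV hr) x
    by_cases hPP : P = V.annx x
    · obtain ⟨B2, hB2, h2⟩ := (ringQuot 𝒜 P hPh).HH_big H (d := d)
        (by unfold DimLE; rw [ann_ringQuot]; exact hd) (|(c : ℝ)| * Y)
      have hresc : ∀ n w, ((ringQuot 𝒜 _ (V.ann_hom hc hx)).rescale c hc b).HH I p n w =
          Complex.exp (-Complex.I * w * b) * (ringQuot 𝒜 P hPh).HH I p n (c * w) := by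
        intro n w
        rw [HH_rescale]
        subst hPP
        rfl
      let Z := Y * |(b : ℝ)|
      have hZ : 0 ≤ Z := by positivity
      refine ⟨ρ + 1, B + B1 + Z * Real.exp Z * B2, by positivity, fun n w hw => ?_⟩
      have e1 := h1 n w hw
      have e2 := hρ n w hw
      have hp1 : (1 : ℝ) ≤ (p : ℝ) ^ n := one_le_pow₀ (by exact_mod_cast H.prime.one_le)
      have hp0 : (0 : ℝ) < (p : ℝ) ^ n := by linarith
      have e3 := h2 n (c * w) (by
        rw [norm_mul, Complex.norm_intCast, mul_div_assoc]
        exact mul_le_mul_of_nonneg_left hw (abs_nonneg _))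
      rw [hresc] at e1
      set A := (ringQuot 𝒜 P hPh).HH I p n (c * w)
      have hz : ‖-Complex.I * w * b‖ ≤ Z / (p : ℝ) ^ n := by
        rw [norm_mul, norm_mul, norm_neg, Complex.norm_I, one_mul, Complex.norm_intCast]
        calc _ ≤ (Y / (p : ℝ) ^ n) * |(b : ℝ)| := mul_le_mul_of_nonneg_right hw (abs_nonneg _)
          _ = _ := by simp only [Z]; ring
      have e4 : ‖Complex.exp (-Complex.I * w * b) - 1‖ ≤ Z / (p : ℝ) ^ n * Real.exp Z := by
        refine (fp_exp_sub_one _).trans ?_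
        refine mul_le_mul hz (Real.exp_le_exp.2 (hz.trans (div_le_self hZ hp1)))
          (Real.exp_pos _).le (by positivity)
      have e5 : ‖(Complex.exp (-Complex.I * w * b) - 1) * A‖ ≤ Z * Real.exp Z * B2 * fpE p d n := by
        rw [norm_mul]
        refine (mul_le_mul e4 e3 (norm_nonneg _) (by positivity)).trans (le_of_eq ?_)
        unfold fpE
        field_simp
      have e : V.HH I p n w - ((ρ + 1 : ℕ) : ℂ) * A =
          (V.HH I p n w - Complex.exp (-Complex.I * w * b) * A -
            (V.quot _ (V.hom_span hx)).HH I p n w) +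
          ((V.quot _ (V.hom_span hx)).HH I p n w - ρ * A) +
          (Complex.exp (-Complex.I * w * b) - 1) * A := by push_cast; ring
      rw [e]
      refine (norm_add₃_le).trans ?_
      linarith
    · obtain ⟨B2, hB2, h2⟩ := ((ringQuot 𝒜 _ (V.ann_hom hc hx)).rescale c hc b).HH_small H (d := d)
        (by rw [ann_rescale, ann_ringQuot]; exact dim_lt hP hle hPP hd) Y
      refine ⟨ρ, B + B1 + B2, by positivity, fun n w hw => ?_⟩
      have e1 := h1 n w hw
      have e2 := hρ n w hw
      have e3 := h2 n w hw
      set A := (ringQuot 𝒜 P hPh).HH I p n (c * w)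
      set A' := ((ringQuot 𝒜 _ (V.ann_hom hc hx)).rescale c hc b).HH I p n w
      have e : V.HH I p n w - (ρ : ℂ) * A =
          (V.HH I p n w - A' - (V.quot _ (V.hom_span hx)).HH I p n w) +
          ((V.quot _ (V.hom_span hx)).HH I p n w - ρ * A) + A' := by ring
      rw [e]
      refine (norm_add₃_le).trans ?_
      linarith

end GM

end

section
set_option linter.style.haveILetI false
set_option linter.unusedSectionVars false

theorem fp_seq (u : ℕ → ℂ) (σ C D q : ℝ) (hσ : 0 ≤ σ) (hC : 0 ≤ C) (hq0 : 0 ≤ q) (hq1 : q < 1)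
    (hD : ∀ n, ‖u n‖ ≤ D) (h : ∀ n, ‖u (n + 1) - σ * u n‖ ≤ C * q ^ n) :
    ∃ L, Tendsto u atTop (nhds L) := by
  have hsum : Summable (fun n => C * q ^ n) := (summable_geometric_of_lt_one hq0 hq1).mul_left C
  let E := ∑' n, C * q ^ n
  have hE : ∀ N, ∑ n ∈ Finset.range N, C * q ^ n ≤ E := fun N =>
    hsum.sum_le_tsum _ (fun i _ => by positivity)
  have hn : ∀ n, ‖(σ : ℂ) * u n‖ = σ * ‖u n‖ := fun n => by
    rw [norm_mul, Complex.norm_real, Real.norm_of_nonneg hσ]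
  have fin : ∀ c : ℝ, (∀ N, ∑ n ∈ Finset.range N, ‖u n‖ ≤ c) → ∃ L, Tendsto u atTop (nhds L) := by
    intro c hc
    exact ⟨0, tendsto_zero_iff_norm_tendsto_zero.2
      (summable_of_sum_range_le (fun n => norm_nonneg _) hc).tendsto_atTop_zero⟩
  rcases lt_trichotomy σ 1 with h1 | h1 | h1
  · refine fin ((‖u 0‖ + E) / (1 - σ)) fun N => ?_
    rw [le_div_iff₀ (by linarith)]
    have a1 : ∑ n ∈ Finset.range N, ‖u (n + 1)‖ ≤ σ * ∑ n ∈ Finset.range N, ‖u n‖ + E := by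
      rw [Finset.mul_sum]
      refine le_trans ?_ (add_le_add_right (hE N) _)
      rw [← Finset.sum_add_distrib]
      refine Finset.sum_le_sum fun n _ => ?_
      have := norm_add_le (u (n + 1) - σ * u n) (σ * u n)
      rw [sub_add_cancel, hn] at this
      linarith [h n]
    have a2 := Finset.sum_range_succ (fun n => ‖u n‖) N
    rw [Finset.sum_range_succ'] at a2
    have := norm_nonneg (u N)
    linarith
  · subst h1
    refine cauchySeq_tendsto_of_complete (cauchySeq_of_le_geometric q C hq1 fun n => ?_)
    rw [dist_comm, dist_eq_norm]
    simpa using h n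
  · refine fin ((D + E) / (σ - 1)) fun N => ?_
    rw [le_div_iff₀ (by linarith)]
    have a1 : σ * ∑ n ∈ Finset.range N, ‖u n‖ ≤ ∑ n ∈ Finset.range N, ‖u (n + 1)‖ + E := by
      rw [Finset.mul_sum]
      refine le_trans ?_ (add_le_add_right (hE N) _)
      rw [← Finset.sum_add_distrib]
      refine Finset.sum_le_sum fun n _ => ?_
      have := norm_sub_le (u (n + 1)) (u (n + 1) - σ * u n)
      rw [sub_sub_cancel, hn] at this
      linarith [h n]
    have a2 := Finset.sum_range_succ (fun n => ‖u n‖) N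
    rw [Finset.sum_range_succ'] at a2
    have := norm_nonneg (u 0)
    linarith [hD N]

namespace GM
variable {K R : Type} [Field K] [CommRing R] [Algebra K R] {𝒜 : ℤ → Submodule K R} [GradedAlgebra 𝒜]
  {c : ℤ} {I : Ideal R} {p : ℕ}

/-- the normalized sum -/
def FF (V : GM K R 𝒜 c) (I : Ideal R) (p d n : ℕ) (y : ℂ) : ℂ :=
  (1 / (p : ℂ) ^ n) ^ d * V.HH I p n (y / (p : ℂ) ^ n)

theorem norm_arg (_hp : p.Prime) (y : ℂ) (n : ℕ) : ‖y / (p : ℂ) ^ n‖ ≤ ‖y‖ / (p : ℝ) ^ n := by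
  rw [norm_div, norm_pow, Complex.norm_natCast]

theorem norm_pre (p d n : ℕ) : ‖(1 / (p : ℂ) ^ n) ^ d‖ = (1 / (p : ℝ) ^ n) ^ d := by
  rw [norm_pow, norm_div, norm_pow, Complex.norm_natCast, norm_one]

theorem pre_fpE (hp : p.Prime) (d n : ℕ) : (1 / (p : ℝ) ^ n) ^ d * fpE p d n = (1 / p : ℝ) ^ n := by
  have : (0 : ℝ) < p := by exact_mod_cast hp.pos
  unfold fpE
  rw [div_pow, one_pow, div_pow, one_pow]
  field_simp

theorem HH_frb (V : GM K R 𝒜 1) (p e : ℕ) [ExpChar K p] [ExpChar R p] [PerfectRing K p]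
    [Algebra.FiniteType K R] (n : ℕ) (w : ℂ) :
    (V.frb p e).HH I p n w = V.HH I p (n + e) w := by
  unfold HH
  congr 1
  ext j
  have : (V.frb p e).h I p n j = V.h I p (n + e) j := Frb.quotPieceDim p e n I V.gr j
  rw [this]

theorem conv_prime (H : FPH K p 𝒜 I) [ExpChar R p] [ExpChar K p] [PerfectRing K p]
    [Algebra.FiniteType K R] [IsNoetherianRing R]
    {P : Ideal R} (hP : P.IsPrime) (hPh : P.IsHomogeneous 𝒜) {d : ℕ}
    (hd : ringKrullDim (R ⧸ P) ≤ d) (y : ℂ) :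
    ∃ L, Tendsto (fun n => (ringQuot 𝒜 P hPh).FF I p d n y) atTop (nhds L) := by
  have hp0 : (0 : ℝ) < p := by exact_mod_cast H.prime.pos
  have hp1 : (1 : ℝ) < p := by exact_mod_cast H.prime.one_lt
  have hpC : (p : ℂ) ≠ 0 := by exact_mod_cast H.prime.ne_zero
  set W := ringQuot 𝒜 P hPh with hW
  have hc : ((p : ℤ) ^ 1) ≠ 0 := by simpa using H.prime.ne_zero
  obtain ⟨ρ, B, hB, hρ⟩ := domain_lemma hc H hP hPh hd ‖y‖ (norm_nonneg _) (W.frb p 1)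
    (le_trans (le_of_eq (ann_ringQuot P hPh).symm) (Frb.ann_le p 1))
  obtain ⟨D, hD, hbig⟩ := W.HH_big H (d := d) (by unfold DimLE; rw [hW, ann_ringQuot]; exact hd) ‖y‖
  refine fp_seq _ (ρ / (p : ℝ) ^ d) B D (1 / p) (by positivity) hB (by positivity)
    ((div_lt_one hp0).2 hp1) ?_ ?_
  · intro n
    unfold FF
    rw [norm_mul, norm_pre]
    calc _ ≤ (1 / (p : ℝ) ^ n) ^ d * (D * ((p : ℝ) ^ n) ^ d) :=
          mul_le_mul_of_nonneg_left (hbig n _ (norm_arg H.prime y n)) (by positivity)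
      _ = D := by rw [div_pow, one_pow]; field_simp
  · intro n
    have h1 := hρ n (y / (p : ℂ) ^ (n + 1)) (by
      refine (norm_arg H.prime y (n + 1)).trans ?_
      exact div_le_div_of_nonneg_left (norm_nonneg _) (by positivity)
        (pow_le_pow_right₀ hp1.le (Nat.le_succ n)))
    have e1 : (((p : ℤ) ^ 1 : ℤ) : ℂ) * (y / (p : ℂ) ^ (n + 1)) = y / (p : ℂ) ^ n := by
      push_cast; field_simp; ring
    rw [HH_frb, e1] at h1
    have e2 : W.FF I p d (n + 1) y - ((ρ / (p : ℝ) ^ d : ℝ) : ℂ) * W.FF I p d n y =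
        (1 / (p : ℂ) ^ (n + 1)) ^ d * (W.HH I p (n + 1) (y / (p : ℂ) ^ (n + 1)) -
          ρ * W.HH I p n (y / (p : ℂ) ^ n)) := by
      unfold FF
      push_cast
      rw [pow_succ, div_pow, div_pow, one_pow, mul_pow]
      field_simp
    rw [e2, norm_mul, norm_pre]
    calc _ ≤ (1 / (p : ℝ) ^ (n + 1)) ^ d * (B * fpE p d n) :=
          mul_le_mul_of_nonneg_left h1 (by positivity)
      _ ≤ (1 / (p : ℝ) ^ n) ^ d * (B * fpE p d n) := by
          refine mul_le_mul_of_nonneg_right ?_ (mul_nonneg hB (fpE_pos H.prime _ _).le)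
          refine pow_le_pow_left₀ (by positivity) ?_ d
          exact div_le_div_of_nonneg_left zero_le_one (by positivity)
            (pow_le_pow_right₀ hp1.le (Nat.le_succ n))
      _ = B * (1 / p : ℝ) ^ n := by rw [← pre_fpE H.prime d n]; ring

theorem err_tendsto (hp : p.Prime) (d : ℕ) (y : ℂ) (T : ℕ → ℂ → ℂ) (B : ℝ)
    (h : ∀ n w, ‖w‖ ≤ ‖y‖ / (p : ℝ) ^ n → ‖T n w‖ ≤ B * fpE p d n) :
    Tendsto (fun n => (1 / (p : ℂ) ^ n) ^ d * T n (y / (p : ℂ) ^ n)) atTop (nhds 0) := by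
  have hp0 : (0 : ℝ) < p := by exact_mod_cast hp.pos
  have hp1 : (1 : ℝ) < p := by exact_mod_cast hp.one_lt
  have hlim : Tendsto (fun n : ℕ => B * (1 / p : ℝ) ^ n) atTop (nhds 0) := by
    have := (tendsto_pow_atTop_nhds_zero_of_lt_one (by positivity : (0 : ℝ) ≤ 1 / p)
      ((div_lt_one hp0).2 hp1)).const_mul B
    simpa using this
  refine squeeze_zero_norm (fun n => ?_) hlim
  rw [norm_mul, norm_pre, ← pre_fpE hp d n]
  calc _ ≤ (1 / (p : ℝ) ^ n) ^ d * (B * fpE p d n) :=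
        mul_le_mul_of_nonneg_left (h n _ (norm_arg hp y n)) (by positivity)
    _ = _ := by ring

theorem conv (H : FPH K p 𝒜 I) [ExpChar R p] [ExpChar K p] [PerfectRing K p]
    [Algebra.FiniteType K R] [IsNoetherianRing R] {d : ℕ} (y : ℂ) (V : GM K R 𝒜 1) :
    V.DimLE d → ∃ L, Tendsto (fun n => V.FF I p d n y) atTop (nhds L) := by
  refine devissage one_ne_zero
    (fun V => V.DimLE d → ∃ L, Tendsto (fun n => V.FF I p d n y) atTop (nhds L)) ?_ ?_ V
  · intro V hV _
    refine ⟨0, ?_⟩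
    simp only [FF, V.HH_subsingleton hV, mul_zero]
    exact tendsto_const_nhds
  · intro V x b hx hprime ih hVd
    have hle : Module.annihilator R V.V ≤ V.annx x := fun r hr => by
      rw [mem_annx]
      exact Module.mem_annihilator.1 hr x
    obtain ⟨L1, hL1⟩ := ih ((ringKrullDim_le_of_surjective _
      (Ideal.Quotient.factor_surjective ((Submodule.mkQ (Submodule.span R {x})).annihilator_le_of_surjective
        (Submodule.mkQ_surjective _)))).trans hVd)
    obtain ⟨L2, hL2⟩ := conv_prime H hprime (V.ann_hom one_ne_zero hx) ((ringKrullDim_le_of_surjective _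
      (Ideal.Quotient.factor_surjective hle)).trans hVd) y
    obtain ⟨B, hB, h1⟩ := V.cyc one_ne_zero H hVd ‖y‖ hx
    have h2 := err_tendsto H.prime d y _ B h1
    have hexp : Tendsto (fun n : ℕ => Complex.exp (-Complex.I * (y / (p : ℂ) ^ n) * b))
        atTop (nhds 1) := by
      have hz : Tendsto (fun n : ℕ => y / (p : ℂ) ^ n) atTop (nhds 0) := by
        have hq : ‖(1 / p : ℂ)‖ < 1 := by
          rw [norm_div, norm_one, Complex.norm_natCast]
          have hp1 : (1 : ℝ) < p := by exact_mod_cast H.prime.one_lt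
          exact (div_lt_one (by linarith)).2 hp1
        have := (tendsto_pow_atTop_nhds_zero_of_norm_lt_one hq).const_mul y
        rw [mul_zero] at this
        refine this.congr fun n => ?_
        rw [div_pow, one_pow]; ring
      have h3 : Tendsto (fun n : ℕ => -Complex.I * (y / (p : ℂ) ^ n) * b) atTop (nhds 0) := by
        have := (hz.const_mul (-Complex.I)).mul_const (b : ℂ)
        simpa using this
      have := (Complex.continuous_exp.tendsto 0).comp h3
      rw [Complex.exp_zero] at this
      exact this
    refine ⟨0 + 1 * L2 + L1, ((h2.add (hexp.mul hL2)).add hL1).congr fun n => ?_⟩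
    rw [HH_rescale]
    unfold FF
    push_cast
    rw [one_mul]
    ring

theorem main (V' V V'' : GM K R 𝒜 1) (H : FPH K p 𝒜 I) [ExpChar R p] [ExpChar K p] [PerfectRing K p]
    [Algebra.FiniteType K R] [IsNoetherianRing R]
    {d : ℕ} (hd : V.DimLE d) (f : V'.V →ₗ[R] V.V) (g : V.V →ₗ[R] V''.V)
    (hf : Function.Injective f) (hg : Function.Surjective g)
    (hfg : LinearMap.range f = LinearMap.ker g)
    (hfdeg : ∀ j, ∀ x ∈ V'.gr j, f x ∈ V.gr j) (hgdeg : ∀ j, ∀ x ∈ V.gr j, g x ∈ V''.gr j)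
    (y : ℂ) : ∃ L' L L'' : ℂ,
      Tendsto (fun n => V'.FF I p d n y) atTop (nhds L') ∧
      Tendsto (fun n => V.FF I p d n y) atTop (nhds L) ∧
      Tendsto (fun n => V''.FF I p d n y) atTop (nhds L'') ∧ L = L' + L'' := by
  have hd' : V'.DimLE d := (ringKrullDim_le_of_surjective _
    (Ideal.Quotient.factor_surjective (f.annihilator_le_of_injective hf))).trans hd
  have hd'' : V''.DimLE d := (ringKrullDim_le_of_surjective _
    (Ideal.Quotient.factor_surjective (g.annihilator_le_of_surjective hg))).trans hd
  obtain ⟨L', h'⟩ := V'.conv H y hd'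
  obtain ⟨L, h⟩ := V.conv H y hd
  obtain ⟨L'', h''⟩ := V''.conv H y hd''
  obtain ⟨B, hB, h1⟩ := ses V' V V'' H hd f g hf hg hfg hfdeg hgdeg ‖y‖
  have h2 := err_tendsto H.prime d y _ B h1
  have h3 : Tendsto (fun n => V.FF I p d n y - V'.FF I p d n y - V''.FF I p d n y) atTop
      (nhds 0) := h2.congr fun n => by unfold FF; ring
  have := tendsto_nhds_unique h3 ((h.sub h').sub h'')
  exact ⟨L', L, L'', h', h, h'', by linear_combination -this⟩

theorem FF_eq (V : GM K R 𝒜 c) (d n : ℕ) (y : ℂ) : V.FF I p d n y = FnGen K V.gr I p d n y := by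
  unfold FF HH FnGen
  congr 2
  ext j
  have : -Complex.I * (y / (p : ℂ) ^ n) * j = -Complex.I * y * (j : ℂ) / (p : ℂ) ^ n := by ring
  rw [this]
  rfl

end GM

end

section
set_option linter.style.haveILetI false
set_option linter.unusedSectionVars false

section
variable {k R : Type} [Field k] [CommRing R] [Algebra k R] {𝒜 : ℤ → Submodule k R} [GradedAlgebra 𝒜]
  {I : Ideal R} {p : ℕ}

theorem fp_hom_span (hI : Ideal.IsHomogeneous 𝒜 I) :
    ∃ S : Set R, I = Ideal.span S ∧ ∀ a ∈ S, ∃ j, a ∈ 𝒜 j := by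
  classical
  refine ⟨{a | a ∈ I ∧ ∃ j, a ∈ 𝒜 j}, le_antisymm ?_ ?_, fun a ha => ha.2⟩
  · intro a ha
    rw [← DirectSum.sum_support_decompose 𝒜 a]
    exact sum_mem fun i _ => Ideal.subset_span ⟨hI i ha, i, SetLike.coe_mem _⟩
  · rw [Ideal.span_le]; exact fun a ha => ha.1

theorem fp_nilp (h𝒜neg : ∀ t : ℤ, t < 0 → 𝒜 t = ⊥) (hI : Ideal.IsHomogeneous 𝒜 I)
    (hIfl : IsFiniteLength R (R ⧸ I)) {x : R} {w : ℤ} (hw : 0 < w) (hx : x ∈ 𝒜 w) :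
    ∃ n : ℕ, x ^ n ∈ I := by
  have hneg0 : ∀ t : ℤ, t < 0 → ∀ x ∈ 𝒜 t, x = 0 := fun t ht x hx => by
    rw [h𝒜neg t ht] at hx; exact (Submodule.mem_bot k).1 hx
  have : IsArtinian R (R ⧸ I) := ((isFiniteLength_iff_isNoetherian_isArtinian).1 hIfl).2
  obtain ⟨n, y, hy⟩ := IsArtinian.exists_pow_succ_smul_dvd x (1 : R ⧸ I)
  obtain ⟨y, rfl⟩ := Ideal.Quotient.mk_surjective y
  refine ⟨n, ?_⟩
  have h1 : x ^ (n + 1) * y - x ^ n ∈ I := by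
    rw [← Ideal.Quotient.eq]
    have e : (1 : R ⧸ I) = Ideal.Quotient.mk I 1 := rfl
    rw [e] at hy
    have : Ideal.Quotient.mk I (x ^ (n + 1) * y) = Ideal.Quotient.mk I (x ^ n * 1) := hy
    rwa [mul_one] at this
  have hn : x ^ n ∈ 𝒜 (n • w) := SetLike.pow_mem_graded n hx
  have hn1 : x ^ (n + 1) ∈ 𝒜 ((n + 1) • w) := SetLike.pow_mem_graded (n + 1) hx
  have h2 := hI (n • w) h1
  have h3 : n • w = (n + 1) • w + (-w) := by rw [succ_nsmul]; abel
  have h4 : ((DirectSum.decompose 𝒜 (x ^ (n + 1) * y)) (n • w) : R) = 0 := by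
    rw [h3, DirectSum.coe_decompose_mul_add_of_left_mem 𝒜 hn1]
    have h5 := hneg0 (-w) (by omega) _ (SetLike.coe_mem (DirectSum.decompose 𝒜 y (-w)))
    rw [h5, mul_zero]
  rw [DirectSum.decompose_sub, DirectSum.sub_apply, AddSubgroupClass.coe_sub, h4,
    DirectSum.decompose_of_mem_same 𝒜 hn, zero_sub, neg_mem_iff] at h2
  exact h2

theorem fp_FPH [Algebra.FiniteType k R] (hp : p.Prime) [CharP R p]
    (h𝒜neg : ∀ t : ℤ, t < 0 → 𝒜 t = ⊥)
    (h𝒜zero : ∀ x ∈ 𝒜 0, ∃ c : k, algebraMap k R c = x)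
    (hI : Ideal.IsHomogeneous 𝒜 I) (hIfl : IsFiniteLength R (R ⧸ I)) : FPH k p 𝒜 I := by
  have hneg0 : ∀ t : ℤ, t < 0 → ∀ x ∈ 𝒜 t, x = 0 := fun t ht x hx => by
    rw [h𝒜neg t ht] at hx; exact (Submodule.mem_bot k).1 hx
  classical
  have : Nontrivial R := CharP.nontrivial_of_char_ne_one (v := p) hp.ne_one
  refine ⟨hp, inferInstance, ((algebraMap k R).charP_iff (algebraMap k R).injective p).2 inferInstance,
    fp_hom_span hI, ?_⟩
  obtain ⟨T, hT⟩ := (Algebra.FiniteType.out : (⊤ : Subalgebra k R).FG)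
  let U : Finset R := T.biUnion fun a => (((DirectSum.decompose 𝒜 a).support).erase 0).image
    fun i => (DirectSum.decompose 𝒜 a i : R)
  have hU : ∀ u ∈ U, ∃ i : ℤ, 0 < i ∧ u ∈ 𝒜 i := by
    intro u hu
    simp only [U, Finset.mem_biUnion, Finset.mem_image, Finset.mem_erase, DFinsupp.mem_support_iff] at hu
    obtain ⟨a, _, i, ⟨hi0, hi⟩, rfl⟩ := hu
    refine ⟨i, ?_, SetLike.coe_mem _⟩
    rcases lt_trichotomy i 0 with h | h | h
    · exfalso
      apply hi
      have h5 := hneg0 i h _ (SetLike.coe_mem (DirectSum.decompose 𝒜 a i))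
      exact Subtype.ext h5
    · exact absurd h hi0
    · exact h
  have hadj : Algebra.adjoin k (U : Set R) = ⊤ := by
    rw [eq_top_iff, ← hT, Algebra.adjoin_le_iff]
    intro a ha
    rw [← DirectSum.sum_support_decompose 𝒜 a]
    refine sum_mem fun i hi => ?_
    by_cases h0 : i = 0
    · subst h0
      obtain ⟨c, hc⟩ := h𝒜zero _ (SetLike.coe_mem (DirectSum.decompose 𝒜 a 0))
      rw [← hc]
      exact Subalgebra.algebraMap_mem _ _
    · apply Algebra.subset_adjoin
      simp only [U, Finset.coe_biUnion, Set.mem_iUnion]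
      exact ⟨a, ha, by
        simp only [Finset.coe_image]
        exact ⟨i, Finset.mem_coe.2 (Finset.mem_erase.2 ⟨h0, hi⟩), rfl⟩⟩
  choose! w hw0 hw using hU
  have hnil : ∀ u ∈ U, ∃ n : ℕ, u ^ n ∈ I := fun u hu => fp_nilp h𝒜neg hI hIfl (hw0 u hu) (hw u hu)
  choose! m hm using hnil
  let e := U.equivFin
  refine ⟨U.card, fun i => (e.symm i : R), fun i => w (e.symm i), U.sup m + 1, by omega, ?_, ?_, ?_⟩
  · have : Set.range (fun i => (e.symm i : R)) = (U : Set R) := by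
      ext u
      constructor
      · rintro ⟨i, rfl⟩; exact (e.symm i).2
      · intro hu; exact ⟨e ⟨u, hu⟩, by simp⟩
    rw [this, hadj]
  · intro i; exact hw _ (e.symm i).2
  · intro i
    exact I.mem_of_dvd (pow_dvd_pow _ ((Finset.le_sup (f := m) (e.symm i).2).trans (Nat.le_succ _)))
      (hm _ (e.symm i).2)

end

end

section
set_option linter.style.haveILetI false
set_option linter.unusedSectionVars false

open TensorProduct

/-- base change of a module -/
def BC (k K M : Type) [Field k] [Field K] [Algebra k K] [AddCommGroup M] [Module k M] : Type :=
  K ⊗[k] M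

namespace BC
variable {k K R M : Type} [Field k] [Field K] [Algebra k K] [CommRing R] [Algebra k R]
  [AddCommGroup M] [Module R M] [Module k M] [IsScalarTower k R M]

instance : AddCommGroup (BC k K M) := inferInstanceAs (AddCommGroup (K ⊗[k] M))
instance : Module K (BC k K M) := inferInstanceAs (Module K (K ⊗[k] M))

variable (k K R M) in
/-- the action map -/
def act : K ⊗[k] R →ₐ[K] Module.End K (K ⊗[k] M) :=
  Algebra.TensorProduct.lift (Algebra.ofId K (Module.End K (K ⊗[k] M)))
    ((Module.End.baseChangeHom k K M).comp (Algebra.lsmul k k M : R →ₐ[k] Module.End k M))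
    (fun a _ => by rw [Algebra.ofId_apply]; exact Algebra.commutes a _)

instance : Module (K ⊗[k] R) (BC k K M) :=
  Module.compHom (K ⊗[k] M) (act k K R M).toRingHom

/-- pure tensors -/
def tm (a : K) (m : M) : BC k K M := a ⊗ₜ[k] m

theorem smul_def (r : K ⊗[k] R) (x : BC k K M) : r • x = act k K R M r x := rfl

theorem tmul_smul (a b : K) (r : R) (m : M) :
    (a ⊗ₜ[k] r : K ⊗[k] R) • (tm b m : BC k K M) = tm (a * b) (r • m) := by
  have h : act k K R M (a ⊗ₜ[k] r) = (Algebra.ofId K (Module.End K (K ⊗[k] M)) a) *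
      ((Module.End.baseChangeHom k K M).comp (Algebra.lsmul k k M : R →ₐ[k] Module.End k M) r) :=
    Algebra.TensorProduct.lift_tmul _ _ _ _ _
  rw [smul_def, h]
  rfl

instance : IsScalarTower K (K ⊗[k] R) (BC k K M) where
  smul_assoc a r x := by
    rw [smul_def, smul_def, map_smul]; rfl

theorem ind {P : BC k K M → Prop} (x : BC k K M) (h0 : P 0) (ht : ∀ a m, P (tm a m))
    (ha : ∀ x y, P x → P y → P (x + y)) : P x :=
  TensorProduct.induction_on x h0 ht ha

theorem smul_tm (a b : K) (m : M) : a • (tm b m : BC k K M) = tm (a * b) m := rfl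

theorem tm_add (a : K) (m m' : M) : (tm a (m + m') : BC k K M) = tm a m + tm a m' :=
  TensorProduct.tmul_add a m m'

theorem tm_zero (a : K) : (tm a 0 : BC k K M) = 0 := TensorProduct.tmul_zero _ a

theorem tm_one_smul (r : R) (m : M) :
    (tm 1 (r • m) : BC k K M) = (1 ⊗ₜ[k] r : K ⊗[k] R) • tm 1 m := by
  rw [tmul_smul, one_mul]

instance [Module.Finite R M] : Module.Finite (K ⊗[k] R) (BC k K M) := by
  obtain ⟨S, hS⟩ := (Module.Finite.fg_top : (⊤ : Submodule R M).FG)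
  classical
  refine ⟨⟨S.image (fun m => tm 1 m), ?_⟩⟩
  rw [eq_top_iff]
  intro x _
  refine ind x (zero_mem _) ?_ (fun x y hx hy => add_mem (hx) (hy))
  intro a m
  have h1 : (tm 1 m : BC k K M) ∈ Submodule.span (K ⊗[k] R)
      ((S.image (fun m => tm 1 m) : Finset (BC k K M)) : Set (BC k K M)) := by
    have hm : m ∈ Submodule.span R (S : Set M) := hS ▸ trivial
    induction hm using Submodule.span_induction with
    | mem m hm => exact Submodule.subset_span (Finset.mem_coe.2 (Finset.mem_image_of_mem _ hm))
    | zero => rw [tm_zero]; exact zero_mem _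
    | add x y _ _ hx hy => rw [tm_add]; exact add_mem hx hy
    | smul r x _ hx => rw [tm_one_smul]; exact Submodule.smul_mem _ _ hx
  have h2 := Submodule.smul_mem _ (a ⊗ₜ[k] (1 : R) : K ⊗[k] R) h1
  rwa [tmul_smul, mul_one, one_smul] at h2

/-- base changed pieces -/
def pc (K : Type) [Field K] [Algebra k K] (N : Submodule k M) : Submodule K (BC k K M) :=
  N.baseChange K

theorem tm_mem (a : K) {N : Submodule k M} {m : M} (hm : m ∈ N) : tm a m ∈ pc K N :=
  Submodule.tmul_mem_baseChange_of_mem a hm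

theorem pc_le {N : Submodule k M} {Q : Submodule K (BC k K M)} (h : ∀ m ∈ N, tm 1 m ∈ Q) :
    pc K N ≤ Q := by
  have : pc K N = Submodule.span K (((N.map (TensorProduct.mk k K M 1)) : Set (K ⊗[k] M))) :=
    Submodule.baseChange_eq_span K N
  rw [this]
  refine Submodule.span_le.2 ?_
  rintro _ ⟨m, hm, rfl⟩
  exact h m hm

/-- base change of linear maps -/
def mapK {M' : Type} [AddCommGroup M'] [Module k M'] (f : M →ₗ[k] M') : BC k K M →ₗ[K] BC k K M' :=
  f.baseChange K

theorem mapK_tm {M' : Type} [AddCommGroup M'] [Module k M'] (f : M →ₗ[k] M') (a : K) (m : M) :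
    mapK f (tm a m : BC k K M) = tm a (f m) := LinearMap.baseChange_tmul f a m

/-- the grading -/
def gr {ℳ : ℤ → Submodule k M} (G : Gr ℳ) : Gr (fun j => pc K (ℳ j)) where
  proj := fun j => mapK (G.proj j)
  mem := fun j x => by
    refine ind (P := fun x => mapK (G.proj j) x ∈ pc K (ℳ j)) x ?_ ?_ ?_
    · rw [map_zero]; exact zero_mem _
    · intro a m; rw [mapK_tm]; exact tm_mem a (G.mem j m)
    · intro x y hx hy; rw [map_add]; exact add_mem hx hy
  same := fun j x hx => by
    have : pc K (ℳ j) ≤ LinearMap.eqLocus (mapK (G.proj j)) LinearMap.id := pc_le fun m hm => by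
      change mapK (G.proj j) (tm 1 m) = tm 1 m
      rw [mapK_tm, G.same j m hm]
    exact this hx
  ne := fun i j x hij hx => by
    have : pc K (ℳ i) ≤ LinearMap.ker (mapK (G.proj j)) := pc_le fun m hm => by
      rw [LinearMap.mem_ker, mapK_tm, G.ne i j m hij hm, tm_zero]
    exact this hx
  fin := fun x => by
    classical
    have key : ∃ s : Finset ℤ, ∀ t, s ⊆ t → ∑ j ∈ t, mapK (G.proj j) x = x := by
      refine ind (P := fun x => ∃ s : Finset ℤ, ∀ t, s ⊆ t → ∑ j ∈ t, mapK (G.proj j) x = x)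
        x ⟨∅, fun t _ => by simp⟩ ?_ ?_
      · intro a m
        obtain ⟨s, hs⟩ := G.fin m
        refine ⟨s, fun t hst => ?_⟩
        have hz : ∀ j, j ∉ s → G.proj j m = 0 := fun j hj => by
          have h1 := congrArg (G.proj j) hs
          rw [map_sum, Finset.sum_eq_zero] at h1
          · exact h1.symm
          · intro i hi
            exact G.ne i j _ (fun h => hj (h ▸ hi)) (G.mem i m)
        simp only [mapK_tm]
        have h2 : ∑ j ∈ t, (tm a (G.proj j m) : BC k K M) = tm a (∑ j ∈ t, G.proj j m) :=
          (TensorProduct.tmul_sum a t _).symm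
        rw [h2, ← Finset.sum_subset hst (fun j _ hj => hz j hj), hs]
      · rintro x y ⟨s, hs⟩ ⟨s', hs'⟩
        refine ⟨s ∪ s', fun t ht => ?_⟩
        simp only [map_add, Finset.sum_add_distrib]
        rw [hs t (Finset.union_subset_left ht), hs' t (Finset.union_subset_right ht)]
    obtain ⟨s, hs⟩ := key
    exact ⟨s, hs s subset_rfl⟩

theorem smul_pc {A : Submodule k R} {N N' : Submodule k M} (h : ∀ r ∈ A, ∀ x ∈ N, r • x ∈ N')
    {r : K ⊗[k] R} (hr : r ∈ A.baseChange K) {x : BC k K M} (hx : x ∈ pc K N) :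
    r • x ∈ pc K N' := by
  rw [Submodule.baseChange_eq_span] at hr
  induction hr using Submodule.span_induction with
  | zero => rw [zero_smul]; exact zero_mem _
  | add r s _ _ hr hs => rw [add_smul]; exact add_mem hr hs
  | smul a r _ hr => rw [smul_assoc]; exact Submodule.smul_mem _ _ hr
  | mem r hr =>
    obtain ⟨r, hr, rfl⟩ := hr
    have : pc K N ≤ (pc K N').comap (act k K R M (1 ⊗ₜ[k] r)) := pc_le fun m hm => by
      change (1 ⊗ₜ[k] r : K ⊗[k] R) • (tm 1 m : BC k K M) ∈ pc K N'
      rw [tmul_smul, one_mul]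
      exact tm_mem _ (h r hr m hm)
    exact this hx

/-- the graded module -/
def gm (K : Type) [Field K] [Algebra k K] [Module.Finite R M] (𝒜 : ℤ → Submodule k R)
    (ℳ : ℤ → Submodule k M) [DirectSum.Decomposition ℳ]
    (hℳ : ∀ (a b : ℤ), ∀ r ∈ 𝒜 a, ∀ x ∈ ℳ b, r • x ∈ ℳ (a + b)) :
    GM K (K ⊗[k] R) (fun i => (𝒜 i).baseChange K) 1 where
  V := BC k K M
  gr := fun j => pc K (ℳ j)
  G := gr (Gr.ofDecomposition ℳ)
  smul_mem := fun a b r hr x hx => by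
    rw [one_mul]
    exact smul_pc (hℳ a b) hr hx

end BC

end

section
set_option linter.style.haveILetI false
set_option linter.unusedSectionVars false

open TensorProduct

theorem fp_finrank_map {K X Y Z : Type} [Field K] [AddCommGroup X] [Module K X] [AddCommGroup Y]
    [Module K Y] [AddCommGroup Z] [Module K Z] (α : X →ₗ[K] Y) (β : X →ₗ[K] Z)
    (h : LinearMap.ker α = LinearMap.ker β) (U : Submodule K X) :
    Module.finrank K (U.map α) = Module.finrank K (U.map β) := by
  have e1 : U.map α = LinearMap.range (α ∘ₗ U.subtype) := by
    rw [LinearMap.range_comp, Submodule.range_subtype]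
  have e2 : U.map β = LinearMap.range (β ∘ₗ U.subtype) := by
    rw [LinearMap.range_comp, Submodule.range_subtype]
  have e3 : LinearMap.ker (α ∘ₗ U.subtype) = LinearMap.ker (β ∘ₗ U.subtype) := by
    rw [LinearMap.ker_comp, LinearMap.ker_comp, h]
  rw [e1, e2, ← (LinearMap.quotKerEquivRange (α ∘ₗ U.subtype)).finrank_eq,
    ← (LinearMap.quotKerEquivRange (β ∘ₗ U.subtype)).finrank_eq, e3]

namespace BC
variable {k K R M : Type} [Field k] [Field K] [Algebra k K] [CommRing R] [Algebra k R]
  [AddCommGroup M] [Module R M] [Module k M] [IsScalarTower k R M]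

variable (k K R) in
/-- the inclusion -/
def inR : R →+* K ⊗[k] R := (Algebra.TensorProduct.includeRight : R →ₐ[k] K ⊗[k] R).toRingHom

theorem inR_apply (r : R) : inR k K R r = 1 ⊗ₜ[k] r := rfl

theorem inR_smul (r : R) (a : K) (m : M) : inR k K R r • (tm a m : BC k K M) = tm a (r • m) := by
  rw [inR_apply, tmul_smul, one_mul]

theorem inR_injective : Function.Injective (inR k K R) :=
  Algebra.TensorProduct.includeRight_injective (algebraMap k K).injective

theorem finrank_pc (U : Submodule k M) : Module.finrank K (pc K U) = Module.finrank k U := by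
  rw [← Module.finrank_baseChange (R := K) (S := k) (M' := U)]
  have hinj : Function.Injective (U.subtype.baseChange K) :=
    Module.Flat.lTensor_preserves_injective_linearMap (M := K) U.subtype U.injective_subtype
  exact (LinearEquiv.ofInjective _ hinj).finrank_eq.symm

theorem ker_mapK {M' : Type} [AddCommGroup M'] [Module k M'] (f : M →ₗ[k] M')
    (hf : Function.Surjective f) : LinearMap.ker (mapK f : BC k K M →ₗ[K] BC k K M') =
      pc K (LinearMap.ker f) := by
  have h := lTensor_exact K (f := (LinearMap.ker f).subtype) (g := f)
    (LinearMap.exact_subtype_ker_map f) hf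
  ext x
  exact h x

theorem map_pc {M' : Type} [AddCommGroup M'] [Module k M'] (f : M →ₗ[k] M') (U : Submodule k M) :
    (pc K U).map (mapK f : BC k K M →ₗ[K] BC k K M') = pc K (U.map f) := by
  apply le_antisymm
  · rw [Submodule.map_le_iff_le_comap]
    refine pc_le fun m hm => ?_
    rw [Submodule.mem_comap, mapK_tm]
    exact tm_mem _ ⟨m, hm, rfl⟩
  · refine pc_le ?_
    rintro _ ⟨m, hm, rfl⟩
    exact ⟨tm 1 m, tm_mem _ hm, mapK_tm _ _ _⟩

theorem fpQ_eq (I : Ideal R) (p n : ℕ) [ExpChar (K ⊗[k] R) p] :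
    (fpQ (I.map (inR k K R)) p n (BC k K M)).restrictScalars K =
      pc K ((fpQ I p n M).restrictScalars k) := by
  apply le_antisymm
  · intro x hx
    have hb : bracketPow (I.map (inR k K R)) (p ^ n) ≤
        Ideal.span ((inR k K R) '' (bracketPow I (p ^ n))) := by
      unfold bracketPow
      rw [Ideal.span_le]
      rintro _ ⟨a, ha, rfl⟩
      have : I.map (inR k K R) ≤ (Ideal.span ((inR k K R) '' (bracketPow I (p ^ n)))).comap
          (iterateFrobenius (K ⊗[k] R) p n) := by
        rw [Ideal.map_le_iff_le_comap]
        intro s hs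
        refine Ideal.subset_span ⟨s ^ p ^ n, Ideal.subset_span ⟨s, hs, rfl⟩, ?_⟩
        rw [map_pow]; rfl
      exact this ha
    have hx' : x ∈ fpQ (I.map (inR k K R)) p n (BC k K M) := hx
    refine Submodule.smul_induction_on (p := fun x => x ∈ pc K ((fpQ I p n M).restrictScalars k))
      hx' ?_ (fun x y hx hy => add_mem hx hy)
    intro r hr v _
    have hr' := hb hr
    clear hr hx hx'
    induction hr' using Submodule.span_induction generalizing v with
    | zero => rw [zero_smul]; exact zero_mem _
    | add r s _ _ hr hs => rw [add_smul]; exact add_mem (hr v trivial) (hs v trivial)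
    | smul a r _ hr =>
      rw [smul_eq_mul, mul_comm, mul_smul]
      exact hr _ trivial
    | mem r hr =>
      obtain ⟨s, hs, rfl⟩ := hr
      refine ind (P := fun v => inR k K R s • v ∈ pc K ((fpQ I p n M).restrictScalars k)) v ?_ ?_ ?_
      · rw [smul_zero]; exact zero_mem _
      · intro a m
        rw [inR_smul]
        exact tm_mem a (Submodule.smul_mem_smul hs trivial : s • m ∈ fpQ I p n M)
      · intro x y hx hy
        rw [smul_add]; exact add_mem hx hy
  · refine pc_le ?_
    intro m hm
    have hm' : m ∈ fpQ I p n M := hm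
    have hb : bracketPow I (p ^ n) ≤ (bracketPow (I.map (inR k K R)) (p ^ n)).comap (inR k K R) := by
      unfold bracketPow
      rw [Ideal.span_le]
      rintro _ ⟨a, ha, rfl⟩
      exact Ideal.subset_span ⟨_, Ideal.mem_map_of_mem _ ha, (map_pow _ _ _).symm⟩
    refine Submodule.smul_induction_on
      (p := fun m => (tm 1 m : BC k K M) ∈ fpQ (I.map (inR k K R)) p n (BC k K M)) hm' ?_ ?_
    · intro r hr m _
      rw [tm_one_smul]
      exact Submodule.smul_mem_smul (hb hr) trivial
    · intro x y hx hy
      rw [tm_add]; exact add_mem hx hy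

theorem quotPieceDim_eq (ℳ : ℤ → Submodule k M) (I : Ideal R) (p n : ℕ) [ExpChar (K ⊗[k] R) p]
    (j : ℤ) : quotPieceDim K (R := K ⊗[k] R) (fun j => pc K (ℳ j))
      (fpQ (I.map (inR k K R)) p n (BC k K M)) j = quotPieceDim k ℳ (fpQ I p n M) j := by
  unfold quotPieceDim
  rw [fp_finrank_map _ (mapK ((fpQ I p n M).mkQ.restrictScalars k)), map_pc, finrank_pc]
  have hs : Function.Surjective ((fpQ I p n M).mkQ.restrictScalars k) :=
    fun x => (fpQ I p n M).mkQ_surjective x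
  rw [ker_mapK _ hs]
  · have e : LinearMap.ker ((fpQ I p n M).mkQ.restrictScalars k) =
        (fpQ I p n M).restrictScalars k := by
      ext x; simp
    have e' : ∀ Q : Submodule (K ⊗[k] R) (BC k K M),
        LinearMap.ker (Q.mkQ.restrictScalars K) = Q.restrictScalars K := by
      intro Q
      ext x; simp
    rw [e, ← fpQ_eq, e']

theorem FnGen_eq (ℳ : ℤ → Submodule k M) (I : Ideal R) (p d n : ℕ) [ExpChar (K ⊗[k] R) p] (y : ℂ) :
    FnGen K (R := K ⊗[k] R) (fun j => pc K (ℳ j)) (I.map (inR k K R)) p d n y =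
      FnGen k ℳ I p d n y := by
  unfold FnGen
  simp only [quotPieceDim_eq]

theorem dim_le [Algebra.IsIntegral k K] :
    ringKrullDim ((K ⊗[k] R) ⧸ Module.annihilator (K ⊗[k] R) (BC k K M)) ≤
      ringKrullDim (R ⧸ Module.annihilator R M) := by
  have hle : Module.annihilator R M ≤
      (Module.annihilator (K ⊗[k] R) (BC k K M)).comap (inR k K R) := by
    intro r hr
    rw [Ideal.mem_comap, Module.mem_annihilator]
    intro x
    refine ind (P := fun x => inR k K R r • x = 0) x (smul_zero _) ?_ ?_
    · intro a m
      rw [inR_smul, Module.mem_annihilator.1 hr m, tm_zero]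
    · intro x y hx hy
      rw [smul_add, hx, hy, add_zero]
  let A := R ⧸ Module.annihilator R M
  let J := Module.annihilator (K ⊗[k] R) (BC k K M)
  let B := (K ⊗[k] R) ⧸ J
  let φ : A →+* B := Ideal.quotientMap J (inR k K R) hle
  letI : Algebra A B := φ.toAlgebra
  have tow : IsScalarTower k A B := IsScalarTower.of_algebraMap_eq fun c => by
    change algebraMap k B c = φ (Ideal.Quotient.mk _ (algebraMap k R c))
    have : φ (Ideal.Quotient.mk _ (algebraMap k R c)) =
      Ideal.Quotient.mk J (inR k K R (algebraMap k R c)) := Ideal.quotientMap_mk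
    rw [this]
    have h2 : inR k K R (algebraMap k R c) = algebraMap k (K ⊗[k] R) c :=
      (Algebra.TensorProduct.includeRight : R →ₐ[k] K ⊗[k] R).commutes c
    rw [h2]; rfl
  have : Algebra.IsIntegral A B := ⟨fun b => by
    obtain ⟨t, rfl⟩ := Ideal.Quotient.mk_surjective b
    induction t using TensorProduct.induction_on with
    | zero => rw [map_zero]; exact isIntegral_zero
    | add x y hx hy => rw [map_add]; exact hx.add hy
    | tmul a r =>
      have e : (a ⊗ₜ[k] r : K ⊗[k] R) = (a ⊗ₜ[k] 1) * inR k K R r := by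
        rw [inR_apply, Algebra.TensorProduct.tmul_mul_tmul, mul_one, one_mul]
      rw [e, map_mul]
      refine IsIntegral.mul ?_ ?_
      · have h1 : IsIntegral k a := Algebra.IsIntegral.isIntegral a
        have h2 := h1.map ((Ideal.Quotient.mkₐ k J).comp
          (Algebra.TensorProduct.includeLeft : K →ₐ[k] K ⊗[k] R))
        exact h2.tower_top
      · have : (Ideal.Quotient.mk J (inR k K R r) : B) = algebraMap A B (Ideal.Quotient.mk _ r) :=
          Ideal.quotientMap_mk.symm
        rw [this]
        exact isIntegral_algebraMap⟩
  exact fp_krull_le_integral A B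

theorem fph {𝒜 : ℤ → Submodule k R} {I : Ideal R} {p : ℕ} (H : FPH k p 𝒜 I) :
    FPH K p (fun i => (𝒜 i).baseChange K) (I.map (inR k K R)) := by
  refine ⟨H.prime, ((inR k K R).charP_iff inR_injective p).1 H.charR,
    ((algebraMap k K).charP_iff (algebraMap k K).injective p).1 H.charK, ?_, ?_⟩
  · obtain ⟨S, hS, hj⟩ := H.hom
    refine ⟨inR k K R '' S, ?_, ?_⟩
    · rw [hS, Ideal.map_span]
    · rintro _ ⟨a, ha, rfl⟩
      obtain ⟨j, hj⟩ := hj a ha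
      exact ⟨j, Submodule.tmul_mem_baseChange_of_mem 1 hj⟩
  · obtain ⟨r, x, w, c, hc, hadj, hx, hI⟩ := H.gen
    refine ⟨r, fun i => inR k K R (x i), w, c, hc, ?_, ?_, ?_⟩
    · rw [eq_top_iff]
      intro t _
      have h1 : ∀ s : R, inR k K R s ∈ Algebra.adjoin K (Set.range fun i => inR k K R (x i)) := by
        intro s
        have hs : s ∈ Algebra.adjoin k (Set.range x) := hadj ▸ trivial
        induction hs using Algebra.adjoin_induction with
        | mem s hs =>
          obtain ⟨i, rfl⟩ := hs
          exact Algebra.subset_adjoin ⟨i, rfl⟩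
        | algebraMap c =>
          have h2 : inR k K R (algebraMap k R c) = algebraMap k (K ⊗[k] R) c :=
            (Algebra.TensorProduct.includeRight : R →ₐ[k] K ⊗[k] R).commutes c
          rw [h2, IsScalarTower.algebraMap_apply k K (K ⊗[k] R)]
          exact Subalgebra.algebraMap_mem _ _
        | add a b _ _ ha hb => rw [map_add]; exact add_mem ha hb
        | mul a b _ _ ha hb => rw [map_mul]; exact mul_mem ha hb
      induction t using TensorProduct.induction_on with
      | zero => exact zero_mem _
      | add a b ha hb => exact add_mem (ha trivial) (hb trivial)
      | tmul a s =>
        have e : (a ⊗ₜ[k] s : K ⊗[k] R) = a • inR k K R s := by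
          rw [inR_apply, TensorProduct.smul_tmul', smul_eq_mul, mul_one]
        rw [e]
        exact Subalgebra.smul_mem _ (h1 s) a
    · intro i
      exact Submodule.tmul_mem_baseChange_of_mem 1 (hx i)
    · intro i
      rw [← map_pow]
      exact Ideal.mem_map_of_mem _ (hI i)

/-- base change of an `R`-linear map -/
def mapR (K : Type) [Field K] [Algebra k K] {M' : Type} [AddCommGroup M'] [Module R M'] [Module k M']
    [IsScalarTower k R M'] (f : M →ₗ[R] M') : BC k K M →ₗ[K ⊗[k] R] BC k K M' where
  toFun := mapK (f.restrictScalars k)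
  map_add' := map_add _
  map_smul' := fun r x => by
    rw [RingHom.id_apply]
    induction r using TensorProduct.induction_on with
    | zero => simp
    | add a b ha hb => simp only [add_smul, map_add, ha, hb]
    | tmul a s =>
      refine ind (P := fun x => mapK (f.restrictScalars k) ((a ⊗ₜ[k] s : K ⊗[k] R) • x) =
        (a ⊗ₜ[k] s : K ⊗[k] R) • mapK (f.restrictScalars k) x) x ?_ ?_ ?_
      · simp
      · intro b m
        rw [tmul_smul, mapK_tm, mapK_tm, tmul_smul, LinearMap.restrictScalars_apply, map_smul,
          LinearMap.restrictScalars_apply]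
      · intro x y hx hy
        simp only [smul_add, map_add, hx, hy]

theorem mapR_apply {M' : Type} [AddCommGroup M'] [Module R M'] [Module k M']
    [IsScalarTower k R M'] (f : M →ₗ[R] M') (x : BC k K M) :
    mapR K f x = mapK (f.restrictScalars k) x := rfl

theorem mapK_mem {M' : Type} [AddCommGroup M'] [Module k M'] (f : M →ₗ[k] M') {U : Submodule k M}
    {U' : Submodule k M'} (h : U.map f ≤ U') (x : BC k K M) (hx : x ∈ pc K U) :
    mapK f x ∈ pc K U' := by
  have : pc K U ≤ (pc K U').comap (mapK f) := pc_le fun m hm => by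
    rw [Submodule.mem_comap, mapK_tm]
    exact tm_mem _ (h ⟨m, hm, rfl⟩)
  exact this hx

end BC

end

section
set_option linter.style.haveILetI false
set_option linter.unusedSectionVars false
open TensorProduct

theorem fp_final
    (k R M' M M'' : Type) [Field k] [CommRing R] [Algebra k R] [Algebra.FiniteType k R]
    (p : ℕ) (hp : p.Prime) [CharP R p]
    (𝒜 : ℤ → Submodule k R) [GradedAlgebra 𝒜]
    (h𝒜neg : ∀ t : ℤ, t < 0 → 𝒜 t = ⊥)
    (h𝒜zero : ∀ x ∈ 𝒜 0, ∃ c : k, algebraMap k R c = x)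
    (I : Ideal R) (hI : Ideal.IsHomogeneous 𝒜 I) (hIfl : IsFiniteLength R (R ⧸ I))
    [AddCommGroup M'] [Module R M'] [Module k M'] [IsScalarTower k R M'] [Module.Finite R M']
    [AddCommGroup M] [Module R M] [Module k M] [IsScalarTower k R M] [Module.Finite R M]
    [AddCommGroup M''] [Module R M''] [Module k M''] [IsScalarTower k R M''] [Module.Finite R M'']
    (ℳ' : ℤ → Submodule k M') [DirectSum.Decomposition ℳ']
    (hℳ' : ∀ (a b : ℤ), ∀ r ∈ 𝒜 a, ∀ x ∈ ℳ' b, r • x ∈ ℳ' (a + b))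
    (ℳ : ℤ → Submodule k M) [DirectSum.Decomposition ℳ]
    (hℳ : ∀ (a b : ℤ), ∀ r ∈ 𝒜 a, ∀ x ∈ ℳ b, r • x ∈ ℳ (a + b))
    (ℳ'' : ℤ → Submodule k M'') [DirectSum.Decomposition ℳ'']
    (hℳ'' : ∀ (a b : ℤ), ∀ r ∈ 𝒜 a, ∀ x ∈ ℳ'' b, r • x ∈ ℳ'' (a + b))
    (f : M' →ₗ[R] M) (g : M →ₗ[R] M'')
    (hf : Function.Injective f) (hg : Function.Surjective g)
    (hfg : LinearMap.range f = LinearMap.ker g)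
    (hfdeg : ∀ j : ℤ, (ℳ' j).map (f.restrictScalars k) ≤ ℳ j)
    (hgdeg : ∀ j : ℤ, (ℳ j).map (g.restrictScalars k) ≤ ℳ'' j)
    (d : ℕ) (hd : ringKrullDim (R ⧸ Module.annihilator R M) = d)
    (y : ℂ) :
    ∃ L' L L'' : ℂ,
      Tendsto (fun n : ℕ => FnGen k ℳ' I p d n y) atTop (nhds L') ∧
      Tendsto (fun n : ℕ => FnGen k ℳ I p d n y) atTop (nhds L) ∧
      Tendsto (fun n : ℕ => FnGen k ℳ'' I p d n y) atTop (nhds L'') ∧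
      L = L' + L'' := by
  have H : FPH k p 𝒜 I := fp_FPH hp h𝒜neg h𝒜zero hI hIfl
  let K := AlgebraicClosure k
  have HK : FPH K p (fun i => (𝒜 i).baseChange K) (I.map (BC.inR k K R)) := BC.fph H
  haveI : CharP (K ⊗[k] R) p := HK.charR
  haveI : CharP K p := HK.charK
  haveI : Fact p.Prime := ⟨hp⟩
  haveI : ExpChar (K ⊗[k] R) p := ExpChar.prime hp
  haveI : ExpChar K p := ExpChar.prime hp
  haveI : PerfectRing K p := PerfectField.toPerfectRing p
  letI : GradedAlgebra (fun i => (𝒜 i).baseChange K) := GradedAlgebra.baseChange 𝒜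
  haveI : IsNoetherianRing (K ⊗[k] R) := HK.noeth
  have hfi : Function.Injective (BC.mapR (k := k) K f) :=
    Module.Flat.lTensor_preserves_injective_linearMap (M := K) (f.restrictScalars k) hf
  have hgs : Function.Surjective (BC.mapR (k := k) K g) :=
    LinearMap.lTensor_surjective K (g := g.restrictScalars k) hg
  have hex : LinearMap.range (BC.mapR (k := k) K f) = LinearMap.ker (BC.mapR (k := k) K g) := by
    have h0 : Function.Exact (f.restrictScalars k) (g.restrictScalars k) := fun x => by
      have h1 := SetLike.ext_iff.1 hfg x
      exact h1.symm
    have h := lTensor_exact K h0 hg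
    ext x
    exact (h x).symm
  obtain ⟨L', L, L'', h', h, h'', e⟩ := GM.main (BC.gm K 𝒜 ℳ' hℳ') (BC.gm K 𝒜 ℳ hℳ)
    (BC.gm K 𝒜 ℳ'' hℳ'') HK (d := d) (BC.dim_le.trans hd.le) (BC.mapR (k := k) K f) (BC.mapR (k := k) K g) hfi hgs hex
    (fun j x hx => BC.mapK_mem _ (hfdeg j) x hx) (fun j x hx => BC.mapK_mem _ (hgdeg j) x hx) y
  refine ⟨L', L, L'', ?_, ?_, ?_, e⟩
  · refine h'.congr fun n => ?_
    exact ((BC.gm K 𝒜 ℳ' hℳ').FF_eq d n y).trans (BC.FnGen_eq ℳ' I p d n y)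
  · refine h.congr fun n => ?_
    exact ((BC.gm K 𝒜 ℳ hℳ).FF_eq d n y).trans (BC.FnGen_eq ℳ I p d n y)
  · refine h''.congr fun n => ?_
    exact ((BC.gm K 𝒜 ℳ'' hℳ'').FF_eq d n y).trans (BC.FnGen_eq ℳ'' I p d n y)

end

/-- **Additivity of Frobenius–Poincaré functions over short exact sequences.**
For a degree-preserving short exact sequence `0 → M' → M → M'' → 0` of finitely generated
`ℤ`-graded `R`-modules, with `d = dim M`, the three Frobenius–Poincaré limits exist and
`F(M,R,I,d) = F(M',R,I,d) + F(M'',R,I,d)`. -/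
theorem frobenius_poincare_additive
    (k R M' M M'' : Type) [Field k] [CommRing R] [Algebra k R] [Algebra.FiniteType k R]
    (p : ℕ) (hp : p.Prime) [CharP R p]
    (𝒜 : ℤ → Submodule k R) [GradedAlgebra 𝒜]
    (h𝒜neg : ∀ t : ℤ, t < 0 → 𝒜 t = ⊥)
    (h𝒜zero : ∀ x ∈ 𝒜 0, ∃ c : k, algebraMap k R c = x)
    (I : Ideal R) (hI : Ideal.IsHomogeneous 𝒜 I) (hIfl : IsFiniteLength R (R ⧸ I))
    [AddCommGroup M'] [Module R M'] [Module k M'] [IsScalarTower k R M'] [Module.Finite R M']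
    [AddCommGroup M] [Module R M] [Module k M] [IsScalarTower k R M] [Module.Finite R M]
    [AddCommGroup M''] [Module R M''] [Module k M''] [IsScalarTower k R M''] [Module.Finite R M'']
    (ℳ' : ℤ → Submodule k M') [DirectSum.Decomposition ℳ']
    (hℳ' : ∀ (a b : ℤ), ∀ r ∈ 𝒜 a, ∀ x ∈ ℳ' b, r • x ∈ ℳ' (a + b))
    (ℳ : ℤ → Submodule k M) [DirectSum.Decomposition ℳ]
    (hℳ : ∀ (a b : ℤ), ∀ r ∈ 𝒜 a, ∀ x ∈ ℳ b, r • x ∈ ℳ (a + b))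
    (ℳ'' : ℤ → Submodule k M'') [DirectSum.Decomposition ℳ'']
    (hℳ'' : ∀ (a b : ℤ), ∀ r ∈ 𝒜 a, ∀ x ∈ ℳ'' b, r • x ∈ ℳ'' (a + b))
    (f : M' →ₗ[R] M) (g : M →ₗ[R] M'')
    (hf : Function.Injective f) (hg : Function.Surjective g)
    (hfg : LinearMap.range f = LinearMap.ker g)
    (hfdeg : ∀ j : ℤ, (ℳ' j).map (f.restrictScalars k) ≤ ℳ j)
    (hgdeg : ∀ j : ℤ, (ℳ j).map (g.restrictScalars k) ≤ ℳ'' j)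
    (d : ℕ) (hd : ringKrullDim (R ⧸ Module.annihilator R M) = d)
    (y : ℂ) :
    ∃ L' L L'' : ℂ,
      Tendsto (fun n : ℕ => FnGen k ℳ' I p d n y) atTop (nhds L') ∧
      Tendsto (fun n : ℕ => FnGen k ℳ I p d n y) atTop (nhds L) ∧
      Tendsto (fun n : ℕ => FnGen k ℳ'' I p d n y) atTop (nhds L'') ∧
      L = L' + L'' := by
  exact fp_final k R M' M M'' p hp 𝒜 h𝒜neg h𝒜zero I hI hIfl ℳ' hℳ' ℳ hℳ ℳ'' hℳ'' f g hf hg hfg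
    hfdeg hgdeg d hd y


end
end

section
/- Let M be a finitely generated ℤ-graded R-module of Krull dimension d. For every nonnegative integer m the limit a_m = ((-i)^m/m!) · lim_{n→∞} p^{-n(d+m)} Σ_{j∈ℤ} j^m λ_k((M/I^{[p^n]}M)_j) exists, and the power series expansion of the Frobenius–Poincaré function around the origin is F(M,R,I)(y) = Σ_{m=0}^{∞} a_m y^m. -/
open Filter Complex

noncomputable section

section analysis

lemma pow_series_limit (c : ℕ → ℕ → ℂ) (G : ℕ → ℂ → ℂ) (F : ℂ → ℂ)
    (hG : ∀ n y, HasSum (fun m => c n m * y ^ m) (G n y))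
    (hb : ∀ r : ℝ, 0 < r → ∃ C : ℝ, ∀ n m, ‖c n m‖ * r ^ m ≤ C)
    (hF : ∀ y, Tendsto (fun n => G n y) atTop (nhds (F y))) :
    ∃ c' : ℕ → ℂ, (∀ m, Tendsto (fun n => c n m) atTop (nhds (c' m))) ∧
      ∀ y, HasSum (fun m => c' m * y ^ m) (F y) := by
  have key : ∀ U : Ultrafilter ℕ, (U : Filter ℕ) ≤ atTop → ∃ c' : ℕ → ℂ,
      (∀ m, Tendsto (fun n => c n m) U (nhds (c' m))) ∧
      ∀ y, HasSum (fun m => c' m * y ^ m) (F y) := by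
    intro U hU
    have h1 : ∀ m, ∃ a : ℂ, Tendsto (fun n => c n m) U (nhds a) := by
      intro m
      obtain ⟨C, hC⟩ := hb 1 one_pos
      have hK : IsCompact (Metric.closedBall (0 : ℂ) C) := isCompact_closedBall 0 C
      obtain ⟨a, -, ha⟩ := hK.ultrafilter_le_nhds' (U.map (fun n => c n m)) (by
        refine Filter.Eventually.of_forall (f := (U : Filter ℕ)) fun n => ?_
        have := hC n m
        simpa using this)
      exact ⟨a, ha⟩
    choose c' hc' using h1
    refine ⟨c', hc', fun y => ?_⟩
    obtain ⟨C, hC⟩ := hb (2 * (‖y‖ + 1)) (by positivity)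
    have bd : ∀ n m, ‖c n m * y ^ m‖ ≤ C * (1 / 2 : ℝ) ^ m := by
      intro n m
      have h := hC n m
      rw [norm_mul, norm_pow]
      have h2 : ‖y‖ ^ m ≤ (‖y‖ + 1) ^ m := by gcongr; linarith
      have h3 : ‖c n m‖ * (‖y‖ + 1) ^ m = (‖c n m‖ * (2 * (‖y‖ + 1)) ^ m) * (1 / 2 : ℝ) ^ m := by
        rw [mul_pow, one_div, inv_pow]
        field_simp
      calc ‖c n m‖ * ‖y‖ ^ m ≤ ‖c n m‖ * (‖y‖ + 1) ^ m := by gcongr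
        _ = _ := h3
        _ ≤ _ := by gcongr
    have hs : Summable (fun m : ℕ => C * (1 / 2 : ℝ) ^ m) :=
      (summable_geometric_of_lt_one (by norm_num) (by norm_num)).mul_left C
    have ht := tendsto_tsum_of_dominated_convergence (𝓕 := (U : Filter ℕ))
      (f := fun n m => c n m * y ^ m) (g := fun m => c' m * y ^ m) hs
      (fun m => (hc' m).mul_const _) (Filter.Eventually.of_forall bd)
    have ht2 : Tendsto (fun n => ∑' m, c n m * y ^ m) U (nhds (F y)) := by
      have := (hF y).mono_left hU
      simpa only [(hG _ y).tsum_eq] using this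
    have he := tendsto_nhds_unique ht ht2
    have hsum : Summable (fun m => c' m * y ^ m) := by
      refine Summable.of_norm_bounded hs fun m => ?_
      exact le_of_tendsto ((hc' m).mul_const (y ^ m)).norm
        (Filter.Eventually.of_forall fun n => bd n m)
    rw [← he]
    exact hsum.hasSum
  have uniq : ∀ a b : ℕ → ℂ, (∀ y, HasSum (fun m => a m * y ^ m) (F y)) →
      (∀ y, HasSum (fun m => b m * y ^ m) (F y)) → a = b := by
    have fps : ∀ a : ℕ → ℂ, (∀ y, HasSum (fun m => a m * y ^ m) (F y)) →
        HasFPowerSeriesAt F (FormalMultilinearSeries.ofScalars ℂ a) 0 := by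
      intro a ha
      rw [hasFPowerSeriesAt_iff]
      refine Filter.Eventually.of_forall fun z => ?_
      simpa [FormalMultilinearSeries.coeff_ofScalars, mul_comm] using ha z
    intro a b ha hb
    have := (fps a ha).eq_formalMultilinearSeries (fps b hb)
    funext m
    have h := congrArg (fun q => q.coeff m) this
    simpa [FormalMultilinearSeries.coeff_ofScalars] using h
  obtain ⟨c', hc', hs'⟩ := key (Ultrafilter.of atTop) (Ultrafilter.of_le _)
  refine ⟨c', fun m => ?_, hs'⟩
  rw [tendsto_iff_ultrafilter]
  intro U hU
  obtain ⟨c'', h1, h2⟩ := key U hU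
  rw [uniq c' c'' hs' h2]
  exact h1 m

lemma analytic_part (p d : ℕ) (hp : p.Prime) (w : ℕ → ℤ → ℕ)
    (hw : ∀ n, (Function.support (w n)).Finite) (F : ℂ → ℂ)
    (hF : ∀ y : ℂ, Tendsto (fun n : ℕ => (1 / (p : ℂ) ^ n) ^ d *
    ∑' j : ℤ, (w n j : ℂ) * Complex.exp (-Complex.I * y * (j : ℂ) / (p : ℂ) ^ n))
      atTop (nhds (F y))) :
    ∃ b : ℕ → ℂ,
      (∀ m : ℕ,
        Tendsto (fun n : ℕ => (1 / (p : ℂ) ^ n) ^ (d + m) *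
            ∑' j : ℤ, (j : ℂ) ^ m * (w n j : ℂ))
          atTop (nhds (b m))) ∧
      (∀ y : ℂ,
        HasSum (fun m : ℕ => (-Complex.I) ^ m / (m.factorial : ℂ) * b m * y ^ m) (F y)) := by
  have hp0 : (0 : ℝ) < p := by exact_mod_cast hp.pos
  have hpc : (p : ℂ) ≠ 0 := by exact_mod_cast hp.ne_zero
  set B : ℕ → ℕ → ℂ := fun n m => (1 / (p : ℂ) ^ n) ^ (d + m) *
            ∑' j : ℤ, (j : ℂ) ^ m * (w n j : ℂ) with hB
  set G : ℕ → ℂ → ℂ := fun n y => (1 / (p : ℂ) ^ n) ^ d *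
    ∑' j : ℤ, (w n j : ℂ) * Complex.exp (-Complex.I * y * (j : ℂ) / (p : ℂ) ^ n) with hGdef
  let S : ℕ → Finset ℤ := fun n => (hw n).toFinset
  have hS : ∀ n j, j ∉ S n → w n j = 0 := by
    intro n j hj
    simpa [S] using hj
  have hBs : ∀ n m, B n m = ∑ j ∈ S n, ((1 / (p : ℂ) ^ n) ^ d * w n j) * (j / (p : ℂ) ^ n) ^ m := by
    intro n m
    simp only [hB]
    rw [tsum_eq_sum (s := S n) (fun j hj => by simp [hS n j hj]), Finset.mul_sum]
    refine Finset.sum_congr rfl fun j _ => ?_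
    rw [pow_add, div_pow, div_pow, div_pow]
    ring
  have hGs : ∀ n y, G n y = ∑ j ∈ S n, ((1 / (p : ℂ) ^ n) ^ d * w n j) *
      Complex.exp (-Complex.I * y * (j / (p : ℂ) ^ n)) := by
    intro n y
    simp only [hGdef]
    rw [tsum_eq_sum (s := S n) (fun j hj => by simp [hS n j hj]), Finset.mul_sum]
    refine Finset.sum_congr rfl fun j _ => ?_
    rw [mul_div_assoc, ← mul_assoc]
  have hsum : ∀ n y, HasSum (fun m => ((-Complex.I) ^ m / (m.factorial : ℂ) * B n m) * y ^ m)
      (G n y) := by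
    intro n y
    have h := hasSum_sum (L := .unconditional ℕ) (s := S n) (f := fun (j : ℤ) (m : ℕ) => ((1 / (p : ℂ) ^ n) ^ d * w n j) *
      ((-Complex.I * y * (j / (p : ℂ) ^ n)) ^ m / (m.factorial : ℂ)))
      (a := fun j => ((1 / (p : ℂ) ^ n) ^ d * w n j) *
      Complex.exp (-Complex.I * y * (j / (p : ℂ) ^ n))) (fun j _ => by
        refine HasSum.mul_left _ ?_
        rw [Complex.exp_eq_exp_ℂ]
        exact NormedSpace.expSeries_div_hasSum_exp _)
    rw [← hGs] at h
    convert h using 2 with m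
    rw [hBs, Finset.mul_sum, Finset.sum_mul]
    refine Finset.sum_congr rfl fun j _ => ?_
    rw [mul_pow, mul_pow]
    ring
  have hreal : ∀ n (r : ℝ), ‖G n (Complex.I * r)‖ = ∑ j ∈ S n, ((1 / (p : ℝ) ^ n) ^ d * w n j) *
      Real.exp (r * (j / (p : ℝ) ^ n)) := by
    intro n r
    have : G n (Complex.I * r) = ((∑ j ∈ S n, ((1 / (p : ℝ) ^ n) ^ d * w n j) *
      Real.exp (r * (j / (p : ℝ) ^ n)) : ℝ) : ℂ) := by
      rw [hGs]
      push_cast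
      refine Finset.sum_congr rfl fun j _ => ?_
      congr 2
      rw [← mul_assoc (-Complex.I), neg_mul, Complex.I_mul_I]
      ring
    rw [this, Complex.norm_real, Real.norm_of_nonneg]
    exact Finset.sum_nonneg fun j _ => by positivity
  have hbound : ∀ r : ℝ, 0 < r → ∃ C : ℝ, ∀ n m,
      ‖(-Complex.I) ^ m / (m.factorial : ℂ) * B n m‖ * r ^ m ≤ C := by
    intro r hr
    obtain ⟨C1, h1⟩ := (hF (Complex.I * r)).norm.bddAbove_range
    obtain ⟨C2, h2⟩ := (hF (Complex.I * (-r : ℝ))).norm.bddAbove_range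
    refine ⟨C1 + C2, fun n m => ?_⟩
    have h1n : ‖G n (Complex.I * r)‖ ≤ C1 := h1 ⟨n, rfl⟩
    have h2n : ‖G n (Complex.I * (-r : ℝ))‖ ≤ C2 := h2 ⟨n, rfl⟩
    refine le_trans ?_ (add_le_add h1n h2n)
    rw [hreal, hreal, ← Finset.sum_add_distrib, norm_mul, norm_div, norm_pow, norm_neg,
      Complex.norm_I, one_pow, Complex.norm_natCast]
    have hBn : ‖B n m‖ ≤ ∑ j ∈ S n, ((1 / (p : ℝ) ^ n) ^ d * w n j) * |j / (p : ℝ) ^ n| ^ m := by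
      rw [hBs]
      refine (norm_sum_le _ _).trans (le_of_eq (Finset.sum_congr rfl fun j _ => ?_))
      simp [abs_div]
    calc 1 / (m.factorial : ℝ) * ‖B n m‖ * r ^ m
        ≤ 1 / (m.factorial : ℝ) * (∑ j ∈ S n, ((1 / (p : ℝ) ^ n) ^ d * w n j) *
          |j / (p : ℝ) ^ n| ^ m) * r ^ m := by gcongr
      _ = ∑ j ∈ S n, ((1 / (p : ℝ) ^ n) ^ d * w n j) *
          ((r * |j / (p : ℝ) ^ n|) ^ m / (m.factorial : ℝ)) := by
        rw [Finset.mul_sum, Finset.sum_mul]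
        refine Finset.sum_congr rfl fun j _ => ?_
        rw [mul_pow]
        ring
      _ ≤ _ := by
        refine Finset.sum_le_sum fun j _ => ?_
        rw [← mul_add]
        refine mul_le_mul_of_nonneg_left ?_ (by positivity)
        refine (Real.pow_div_factorial_le_exp _ (by positivity) m).trans ?_
        rcases abs_cases ((j : ℝ) / (p : ℝ) ^ n) with h | h
        · rw [h.1]
          linarith [Real.exp_pos (-r * (j / (p : ℝ) ^ n))]
        · rw [h.1, mul_neg, ← neg_mul]
          linarith [Real.exp_pos (r * (j / (p : ℝ) ^ n))]
  obtain ⟨c', hc', hs'⟩ := pow_series_limit _ G F hsum hbound hF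
  have hne : ∀ m : ℕ, (-Complex.I) ^ m / (m.factorial : ℂ) ≠ 0 := fun m =>
    div_ne_zero (pow_ne_zero _ (neg_ne_zero.2 Complex.I_ne_zero))
      (by exact_mod_cast m.factorial_ne_zero)
  refine ⟨fun m => ((-Complex.I) ^ m / (m.factorial : ℂ))⁻¹ * c' m, fun m => ?_, fun y => ?_⟩
  · have := (hc' m).const_mul ((-Complex.I) ^ m / (m.factorial : ℂ))⁻¹
    simpa only [inv_mul_cancel_left₀ (hne m)] using this
  · simpa only [mul_inv_cancel_left₀ (hne _)] using hs' y

end analysis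

section alg

variable {k R M : Type} [Field k] [CommRing R] [Algebra k R]
    [AddCommGroup M] [Module R M] [Module k M] [IsScalarTower k R M]

/-- Degree-`j` component. -/
def dcmp (ℳ : ℤ → Submodule k M) [DirectSum.Decomposition ℳ] (j : ℤ) (x : M) : M :=
  (DirectSum.decompose ℳ x j : M)

lemma dcmp_add (ℳ : ℤ → Submodule k M) [DirectSum.Decomposition ℳ] (j : ℤ) (x y : M) :
    dcmp ℳ j (x + y) = dcmp ℳ j x + dcmp ℳ j y := by
  simp [dcmp, DirectSum.decompose_add]

lemma dcmp_zero (ℳ : ℤ → Submodule k M) [DirectSum.Decomposition ℳ] (j : ℤ) :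
    dcmp ℳ j 0 = 0 := by
  simp [dcmp, DirectSum.decompose_zero]

lemma dcmp_smul (𝒜 : ℤ → Submodule k R) (ℳ : ℤ → Submodule k M) [DirectSum.Decomposition ℳ]
    (hℳ : ∀ (a b : ℤ), ∀ r ∈ 𝒜 a, ∀ x ∈ ℳ b, r • x ∈ ℳ (a + b))
    (a j : ℤ) (r : R) (hr : r ∈ 𝒜 a) (x : M) :
    dcmp ℳ j (r • x) = r • dcmp ℳ (j - a) x := by
  induction x using DirectSum.Decomposition.inductionOn ℳ with
  | zero => simp [dcmp_zero]
  | add x y hx hy => rw [smul_add, dcmp_add, hx, hy, dcmp_add, smul_add]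
  | @homogeneous i x =>
    have h1 := hℳ a i r hr x x.2
    by_cases h : a + i = j
    · subst h
      have : a + i - a = i := by ring
      rw [this, dcmp, DirectSum.decompose_of_mem_same ℳ h1, dcmp,
        DirectSum.decompose_of_mem_same ℳ x.2]
    · rw [dcmp, DirectSum.decompose_of_mem_ne ℳ h1 h, dcmp,
        DirectSum.decompose_of_mem_ne ℳ x.2 (by omega), smul_zero]

/-- Elements living in degrees at least `j`. -/
def filt (𝒜 : ℤ → Submodule k R) [GradedAlgebra 𝒜]
    (h𝒜neg : ∀ t : ℤ, t < 0 → 𝒜 t = ⊥) (ℳ : ℤ → Submodule k M) [DirectSum.Decomposition ℳ]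
    (hℳ : ∀ (a b : ℤ), ∀ r ∈ 𝒜 a, ∀ x ∈ ℳ b, r • x ∈ ℳ (a + b)) (j : ℤ) : Submodule R M where
  carrier := {x | ∀ i < j, dcmp ℳ i x = 0}
  zero_mem' := fun i _ => dcmp_zero ℳ i
  add_mem' := fun {x y} hx hy i hi => by rw [dcmp_add, hx i hi, hy i hi, add_zero]
  smul_mem' := fun r x hx => by
    induction r using DirectSum.Decomposition.inductionOn 𝒜 with
    | zero => intro i _; rw [zero_smul, dcmp_zero]
    | add r s hr hs => intro i hi; rw [add_smul, dcmp_add, hr i hi, hs i hi, add_zero]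
    | @homogeneous a r =>
      intro i hi
      rw [dcmp_smul 𝒜 ℳ hℳ a i r r.2]
      by_cases ha : a < 0
      · have h : (r : R) = 0 := (Submodule.mem_bot k).1 ((h𝒜neg a ha).le r.2)
        rw [h, zero_smul]
      · rw [hx (i - a) (by omega), smul_zero]

lemma bracketPow_homog (p : ℕ) (hp : p.Prime) [CharP R p]
    (𝒜 : ℤ → Submodule k R) [GradedAlgebra 𝒜]
    (I : Ideal R) (hI : Ideal.IsHomogeneous 𝒜 I) (n : ℕ) :
    Submodule.span R {z : R | (∃ a, z ∈ 𝒜 a) ∧ z ∈ bracketPow I (p ^ n)}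
      = bracketPow I (p ^ n) := by
  classical
  have := Fact.mk hp
  apply le_antisymm
  · exact Submodule.span_le.2 fun z hz => hz.2
  · refine Submodule.span_le.2 ?_
    rintro _ ⟨x, hx, rfl⟩
    have hx' : x ^ p ^ n = ∑ i ∈ (DirectSum.decompose 𝒜 x).support,
        ((DirectSum.decompose 𝒜 x i : R)) ^ p ^ n := by
      conv_lhs => rw [← DirectSum.sum_support_decompose 𝒜 x]
      exact sum_pow_char_pow p n _ _
    change x ^ p ^ n ∈ _
    rw [hx']
    refine Submodule.sum_mem _ fun i _ => Submodule.subset_span ⟨⟨(p ^ n) • i, ?_⟩, ?_⟩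
    · exact SetLike.pow_mem_graded _ (SetLike.coe_mem _)
    · exact Ideal.subset_span ⟨_, hI i hx, rfl⟩

lemma dcmp_mem_smul_top (p : ℕ) (hp : p.Prime) [CharP R p]
    (𝒜 : ℤ → Submodule k R) [GradedAlgebra 𝒜]
    (I : Ideal R) (hI : Ideal.IsHomogeneous 𝒜 I) (n : ℕ)
    (ℳ : ℤ → Submodule k M) [DirectSum.Decomposition ℳ]
    (hℳ : ∀ (a b : ℤ), ∀ r ∈ 𝒜 a, ∀ x ∈ ℳ b, r • x ∈ ℳ (a + b))
    (x : M) (hx : x ∈ (bracketPow I (p ^ n) • ⊤ : Submodule R M)) (j : ℤ) :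
    dcmp ℳ j x ∈ (bracketPow I (p ^ n) • ⊤ : Submodule R M) := by
  have hr : ∀ r ∈ bracketPow I (p ^ n), ∀ (x : M) (j : ℤ),
      dcmp ℳ j (r • x) ∈ (bracketPow I (p ^ n) • ⊤ : Submodule R M) := by
    intro r hr
    rw [← bracketPow_homog p hp 𝒜 I hI n] at hr
    induction hr using Submodule.span_induction with
    | mem r hr =>
      intro x j
      obtain ⟨⟨a, ha⟩, hr⟩ := hr
      rw [dcmp_smul 𝒜 ℳ hℳ a j r ha]
      exact Submodule.smul_mem_smul hr trivial
    | zero => intro x j; rw [zero_smul, dcmp_zero]; exact Submodule.zero_mem _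
    | add r s _ _ h1 h2 =>
      intro x j
      rw [add_smul, dcmp_add]
      exact Submodule.add_mem _ (h1 x j) (h2 x j)
    | smul a r _ h =>
      intro x j
      have : (a • r) • x = r • (a • x) := by rw [smul_eq_mul, mul_comm, mul_smul]
      rw [this]
      exact h _ j
  induction hx using Submodule.smul_induction_on' with
  | smul r h x _ => exact hr r h x j
  | add x _ y _ h1 h2 => rw [dcmp_add]; exact Submodule.add_mem _ h1 h2

lemma artin [IsNoetherianRing R] (I : Ideal R) (hIfl : IsFiniteLength R (R ⧸ I)) (q : ℕ)  :
    IsArtinianRing (R ⧸ bracketPow I q) := by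
  have hA : IsArtinian R (R ⧸ I) := (isFiniteLength_iff_isNoetherian_isArtinian.1 hIfl).2
  have hA' : IsArtinianRing (R ⧸ I) := isArtinian_of_tower R hA
  rw [isArtinianRing_iff_isNoetherianRing_krullDimLE_zero]
  refine ⟨inferInstance, ?_⟩
  rw [Ring.krullDimLE_zero_iff]
  intro P hP
  have hIP : I ≤ P.comap (Ideal.Quotient.mk (bracketPow I q)) := by
    intro x hx
    have hprime : (P.comap (Ideal.Quotient.mk (bracketPow I q))).IsPrime := inferInstance
    refine hprime.mem_of_pow_mem q ?_
    have : x ^ q ∈ bracketPow I q := Ideal.subset_span ⟨x, hx, rfl⟩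
    rw [Ideal.mem_comap, Ideal.Quotient.eq_zero_iff_mem.2 this]
    exact P.zero_mem
  set P' := P.comap (Ideal.Quotient.mk (bracketPow I q)) with hP'
  have hprime : P'.IsPrime := inferInstance
  have hker : RingHom.ker (Ideal.Quotient.mk I) ≤ P' := by rwa [Ideal.mk_ker]
  have hpm : (P'.map (Ideal.Quotient.mk I)).IsPrime :=
    Ideal.map_isPrime_of_surjective Ideal.Quotient.mk_surjective hker
  have hmm : (P'.map (Ideal.Quotient.mk I)).IsMaximal := IsArtinianRing.isMaximal_of_isPrime _
  have hP'max : P'.IsMaximal := by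
    have h := Ideal.comap_isMaximal_of_surjective (Ideal.Quotient.mk I)
      Ideal.Quotient.mk_surjective (K := P'.map (Ideal.Quotient.mk I))
    rwa [Ideal.comap_map_of_surjective' _ Ideal.Quotient.mk_surjective, sup_eq_left.2 hker] at h
  have h2 : (P'.map (Ideal.Quotient.mk (bracketPow I q))).IsMaximal :=
    Ideal.IsMaximal.map_of_surjective_of_ker_le Ideal.Quotient.mk_surjective
      (by rw [hP']; exact Ideal.ker_le_comap _)
  rwa [hP', Ideal.map_comap_of_surjective _ Ideal.Quotient.mk_surjective] at h2

lemma finite_support [Algebra.FiniteType k R] [Module.Finite R M] (p : ℕ) (hp : p.Prime)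
    [CharP R p]
    (𝒜 : ℤ → Submodule k R) [GradedAlgebra 𝒜] (h𝒜neg : ∀ t : ℤ, t < 0 → 𝒜 t = ⊥)
    (I : Ideal R) (hI : Ideal.IsHomogeneous 𝒜 I) (hIfl : IsFiniteLength R (R ⧸ I))
    (ℳ : ℤ → Submodule k M) [DirectSum.Decomposition ℳ]
    (hℳ : ∀ (a b : ℤ), ∀ r ∈ 𝒜 a, ∀ x ∈ ℳ b, r • x ∈ ℳ (a + b)) (n : ℕ) :
    (Function.support (quotPieceDim k (R := R) ℳ (bracketPow I (p ^ n) • ⊤))).Finite := by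
  have : IsNoetherianRing R := Algebra.FiniteType.isNoetherianRing k R
  have : IsNoetherian R M := inferInstance
  have := artin I hIfl (p ^ n)
  set N : Submodule R M := bracketPow I (p ^ n) • ⊤ with hN
  have hArt : IsArtinian R (M ⧸ N) := by
    have h1 : Module.Finite (R ⧸ bracketPow I (p ^ n))
        (M ⧸ (bracketPow I (p ^ n) • ⊤ : Submodule R M)) :=
      Module.Finite.of_restrictScalars_finite R _ _
    have h2 : IsArtinian (R ⧸ bracketPow I (p ^ n))
        (M ⧸ (bracketPow I (p ^ n) • ⊤ : Submodule R M)) := inferInstance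
    exact isArtinian_of_surjective_algebraMap (R := R ⧸ bracketPow I (p ^ n))
      (Ideal.Quotient.mk_surjective (I := bracketPow I (p ^ n)))
  set f := filt 𝒜 h𝒜neg ℳ hℳ with hf
  have hanti : ∀ i j : ℤ, i ≤ j → f j ≤ f i := fun i j hij x hx l hl => hx l (by omega)
  have hmem : ∀ j, ∀ x ∈ ℳ j, x ∈ f j := fun j x hx l hl =>
    DirectSum.decompose_of_mem_ne ℳ hx (show j ≠ l by omega)
  obtain ⟨a, ha⟩ := monotone_stabilizes_iff_noetherian.2 ‹IsNoetherian R M›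
    ⟨fun t : ℕ => f (-(t : ℤ)), fun s t hst => hanti _ _ (by omega)⟩
  obtain ⟨b, hb⟩ := IsArtinian.monotone_stabilizes (R := R) (M := M ⧸ N)
    ⟨fun t : ℕ => OrderDual.toDual ((f (t : ℤ)).map N.mkQ),
      fun s t hst => Submodule.map_mono (hanti _ _ (by omega))⟩
  refine (Set.finite_Icc (-(a : ℤ)) (b : ℤ)).subset fun j hj => ?_
  by_contra hcon
  apply hj
  have hz : (ℳ j).map (N.mkQ.restrictScalars k) = ⊥ := by
    rw [eq_bot_iff]
    rintro _ ⟨x, hx, rfl⟩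
    have hxx : dcmp ℳ j x = x := DirectSum.decompose_of_mem_same ℳ hx
    suffices hxN : x ∈ N by simpa using hxN
    rw [Set.mem_Icc, not_and_or, not_le, not_le] at hcon
    rcases hcon with h | h
    · have h1 := ha (-j).toNat (by omega)
      have h2 : x ∈ f (-(a : ℤ)) := by
        have h3 : f (-(a : ℤ)) = f (-((-j).toNat : ℤ)) := h1
        rw [h3]
        exact hanti _ j (by omega) (hmem j x hx)
      rw [← hxx, h2 j h]
      exact N.zero_mem
    · have h1 : (f (b : ℤ)).map N.mkQ = (f (j.toNat : ℤ)).map N.mkQ := hb j.toNat (by omega)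
      have h2 : (f (b : ℤ)).map N.mkQ = (f ((j.toNat + 1 : ℕ) : ℤ)).map N.mkQ :=
        hb (j.toNat + 1) (by omega)
      have h3 : N.mkQ x ∈ (f ((j.toNat + 1 : ℕ) : ℤ)).map N.mkQ := by
        rw [← h2]
        exact Submodule.mem_map_of_mem (hanti _ j (by omega) (hmem j x hx))
      obtain ⟨y, hy, hyx⟩ := h3
      have h4 : x - y ∈ N := by
        rw [← Submodule.Quotient.eq]
        exact hyx.symm
      have h5 := dcmp_mem_smul_top p hp 𝒜 I hI n ℳ hℳ _ h4 j
      have h6 : dcmp ℳ j (x - y) + dcmp ℳ j y = dcmp ℳ j x := by rw [← dcmp_add, sub_add_cancel]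
      rw [hy j (by omega), add_zero, hxx] at h6
      rw [← h6]
      exact h5
  simp only [quotPieceDim]
  rw [hz]
  exact finrank_bot k _

end alg

/-- **Power series expansion of the Frobenius–Poincaré function around the origin.**
If `F(M,R,I)` is the (pointwise) limit of the `F_n(M,R,I,dim M)`, then for each `m` the
limit `b_m = lim_n p^{-n(d+m)} Σ_j j^m λ_k((M/I^{[p^n]}M)_j)` exists and
`F(M,R,I)(y) = Σ_m ((-i)^m/m!) b_m y^m` for every `y`. -/
theorem frobenius_poincare_power_series
    (k R M : Type) [Field k] [CommRing R] [Algebra k R] [Algebra.FiniteType k R]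
    (p : ℕ) (hp : p.Prime) [CharP R p]
    (𝒜 : ℤ → Submodule k R) [GradedAlgebra 𝒜]
    (h𝒜neg : ∀ t : ℤ, t < 0 → 𝒜 t = ⊥)
    (h𝒜zero : ∀ x ∈ 𝒜 0, ∃ c : k, algebraMap k R c = x)
    (I : Ideal R) (hI : Ideal.IsHomogeneous 𝒜 I) (hIfl : IsFiniteLength R (R ⧸ I))
    [AddCommGroup M] [Module R M] [Module k M] [IsScalarTower k R M] [Module.Finite R M]
    (ℳ : ℤ → Submodule k M) [DirectSum.Decomposition ℳ]
    (hℳ : ∀ (a b : ℤ), ∀ r ∈ 𝒜 a, ∀ x ∈ ℳ b, r • x ∈ ℳ (a + b))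
    (d : ℕ) (hd : ringKrullDim (R ⧸ Module.annihilator R M) = d)
    (F : ℂ → ℂ)
    (hF : ∀ y : ℂ, Tendsto (fun n : ℕ => FnGen k ℳ I p d n y) atTop (nhds (F y))) :
    ∃ b : ℕ → ℂ,
      (∀ m : ℕ,
        Tendsto (fun n : ℕ => (1 / (p : ℂ) ^ n) ^ (d + m) *
            ∑' j : ℤ, (j : ℂ) ^ m *
              (quotPieceDim k (R := R) ℳ (bracketPow I (p ^ n) • ⊤) j : ℂ))
          atTop (nhds (b m))) ∧
      (∀ y : ℂ,
        HasSum (fun m : ℕ => (-Complex.I) ^ m / (m.factorial : ℂ) * b m * y ^ m) (F y)) := by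
  exact analytic_part p d hp (fun n j => quotPieceDim k (R := R) ℳ (bracketPow I (p ^ n) • ⊤) j)
    (fun n => finite_support p hp 𝒜 h𝒜neg I hI hIfl ℳ hℳ n) F hF

end
end
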